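/- Let $c$ and $\mu$ be fixed real numbers with $1 < c < \frac{17}{16}$ and $0 < \mu < 1$, and set $\delta = \frac{17 - 16c}{32}$ and $\xi = \frac{16c - 5}{32}$. There exist $\varepsilon_0 = \varepsilon_0(c) > 0$ and $X_0 > 0$ such that for every real $X \geq X_0$, with $D = X^{\delta}$ and $\Delta = X^{\xi - c}$, and any two sieve weights $\lambda^-$ and $\lambda^+$ of level $D$ with associated sums $L^-(\alpha)$ and $L^+(\alpha)$, one has $\int_{\Delta \leq |\alpha| \leq \frac{1}{2}} |L^-(\alpha)|\, |L^+(\alpha)|^2 \, d\alpha \leq X^{3 - c - \varepsilon_0}$. -/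

import Mathlib

/-!
Put `ε = (17/16 - c) / 1000`. The integral is at most `sup |L⁻| · ∫ |L⁺|²`. The integers `⌊p ^ c⌋`
are distinct, so Parseval's identity bounds the mean square by `X ^ (1 + 4ε)`, and what has to be
shown is the pointwise bound `|L(α)| ≤ X ^ (2 - c - 14ε)` for `Δ ≤ |α| ≤ 1/2`.

Writing `L(α) = ∑ log p · ρ(p) e(α⌊p ^ c⌋)` with `ρ(n) = ∑_{d ∣ n + 2} λ(d)`, the primes are
replaced by the von Mangoldt function. The integer part is removed by expanding a continuous
modification of `e(-α{t})` in a Fourier series. The modification differs from the original only for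
`{t} > 1 - w`, where `w = X ^ (1 - c - 20ε)`, and few `n` have `{n ^ c}` in that range. There remain
sums with the phase `e(θ n ^ c)`, `θ = α + h`, which are bounded uniformly in `θ`, with a loss
`√(1 + |θ| w)` that the decay of the Fourier coefficients absorbs.

For these sums Vaughan's identity with `U = X ^ (1/8)` gives linear sums, with one variable up to
`X ^ (1/4)`, and bilinear sums, with both variables above `X ^ (1/8)`. For bilinear sums one
variable is split into short blocks of length `Q`, Cauchy's inequality is applied, and the resulting
correlations are sums of `e(κ m ^ c)` over residue classes modulo `lcm d₁ d₂`, with `d₁, d₂` odd and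
at most `D`. All such sums, the linear ones included, are bounded by a discrete second derivative
test derived from the Kusmin–Landau inequality. In the bilinear case the optimal `Q` saves a
sufficient power of `X` exactly because `c < 17/16`.
-/

open MeasureTheory

/-- `e(t) = e^{2πit}`. -/
noncomputable def e (t : ℝ) : ℂ := Complex.exp (2 * Real.pi * Complex.I * t)

/-- A sieve weight of level `D`. -/
def IsSieveWeight (D : ℝ) (lam : ℕ → ℝ) : Prop :=
  (∀ d : ℕ, |lam d| ≤ 1) ∧ ∀ d : ℕ, (D < (d : ℝ) ∨ 2 ∣ d ∨ ¬ Squarefree d) → lam d = 0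

/-- The exponential sum `L(α)` over primes `μX < p ≤ X` with `p + 2 ≡ 0 (mod d)`. -/
noncomputable def L (c μ X D : ℝ) (lam : ℕ → ℝ) (α : ℝ) : ℂ :=
  ∑ d ∈ Finset.range (⌊D⌋₊ + 1), (lam d : ℂ) *
    ∑ p ∈ (Finset.range (⌊X⌋₊ + 1)).filter
        (fun p : ℕ => p.Prime ∧ μ * X < (p : ℝ) ∧ d ∣ (p + 2)),
      (Real.log p : ℂ) * e (α * ⌊(p : ℝ) ^ c⌋)

section

open Finset Filter
open scoped Real

/-! ### The exponential `e` -/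

lemma e_eq_fourierChar (t : ℝ) : e t = Real.fourierChar t := by
  rw [Real.fourierChar_apply, e]
  push_cast
  ring_nf

lemma e_add (s t : ℝ) : e (s + t) = e s * e t := by
  simp only [e_eq_fourierChar, AddChar.map_add_eq_mul, Circle.coe_mul]

lemma e_zero : e 0 = 1 := by simp [e]

lemma e_neg (t : ℝ) : e (-t) = (e t)⁻¹ := by
  simp only [e_eq_fourierChar, AddChar.map_neg_eq_inv, Circle.coe_inv]

lemma e_intCast (k : ℤ) : e k = 1 :=
  Complex.exp_eq_one_iff.2 ⟨k, by push_cast; ring⟩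

lemma norm_e (t : ℝ) : ‖e t‖ = 1 := by
  rw [e_eq_fourierChar, Circle.norm_coe]

lemma conj_e (t : ℝ) : (starRingEnd ℂ) (e t) = e (-t) := by
  rw [e_eq_fourierChar, e_neg, e_eq_fourierChar, ← Circle.coe_inv, Circle.coe_inv_eq_conj]

lemma continuous_e : Continuous e := by
  unfold e; fun_prop

lemma norm_e_sub_one (x : ℝ) : ‖e x - 1‖ = 2 * |Real.sin (π * x)| := by
  have h := Complex.norm_exp_I_mul_ofReal_sub_one (2 * π * x)
  rw [show Complex.I * ((2 * π * x : ℝ) : ℂ) = 2 * π * Complex.I * x by push_cast; ring,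
    show 2 * π * x / 2 = π * x by ring, Real.norm_eq_abs, abs_mul, abs_two] at h
  exact h

lemma norm_sum_e_le_card {ι : Type*} (s : Finset ι) (f : ι → ℝ) : ‖∑ i ∈ s, e (f i)‖ ≤ #s := by
  simpa [norm_e] using norm_sum_le s fun i => e (f i)

lemma norm_sum_e_neg {ι : Type*} (s : Finset ι) (f : ι → ℝ) :
    ‖∑ i ∈ s, e (-f i)‖ = ‖∑ i ∈ s, e (f i)‖ := by
  rw [← RCLike.norm_conj (∑ i ∈ s, e (f i)), map_sum]
  simp only [conj_e]

/-! ### The Kusmin–Landau inequality -/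

lemma two_mul_le_sin_pi_mul {w x : ℝ} (hw : 0 ≤ w) (hx : x ∈ Set.Icc w (1 - w)) :
    2 * w ≤ Real.sin (π * x) := by
  have half : ∀ y : ℝ, w ≤ y → y ≤ 1 / 2 → 2 * w ≤ Real.sin (π * y) := by
    intro y hwy hy
    have jordan := Real.mul_le_sin (x := π * y) (mul_nonneg Real.pi_pos.le (hw.trans hwy))
      (by nlinarith [Real.pi_pos])
    have : 2 / π * (π * y) = 2 * y := by field_simp
    linarith
  rcases le_total x (1 / 2) with h | h
  · exact half x hx.1 h
  · rw [← Real.sin_pi_sub, show π - π * x = π * (1 - x) by ring]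
    exact half (1 - x) (by linarith [hx.2]) (by linarith)

lemma cot_sub_cot {x y : ℝ} (hx : Real.sin x ≠ 0) (hy : Real.sin y ≠ 0) :
    Real.cot x - Real.cot y = Real.sin (y - x) / (Real.sin x * Real.sin y) := by
  rw [Real.cot_eq_cos_div_sin, Real.cot_eq_cos_div_sin, Real.sin_sub]
  field_simp

lemma cot_antitoneOn_Ioo : AntitoneOn Real.cot (Set.Ioo 0 π) := by
  intro x hx y hy hxy
  have hsx := Real.sin_pos_of_mem_Ioo hx
  have hsy := Real.sin_pos_of_mem_Ioo hy
  rw [← sub_nonneg, cot_sub_cot hsx.ne' hsy.ne']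
  have : 0 ≤ Real.sin (y - x) :=
    Real.sin_nonneg_of_nonneg_of_le_pi (by linarith) (by linarith [hx.1, hy.2])
  positivity

lemma abs_cot_le_inv_abs_sin (x : ℝ) : |Real.cot x| ≤ |Real.sin x|⁻¹ := by
  rw [Real.cot_eq_cos_div_sin, abs_div, div_eq_mul_inv]
  exact mul_le_of_le_one_left (by positivity) (Real.abs_cos_le_one x)

lemma inv_e_sub_one_eq_cot {x : ℝ} (hx : e x ≠ 1) :
    (e x - 1)⁻¹ = -1 / 2 - Complex.I / 2 * (Real.cot (π * x) : ℂ) := by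
  have hcot := Complex.cot_pi_eq_exp_ratio x
  rw [show 2 * (π : ℂ) * Complex.I * x = 2 * π * Complex.I * (x : ℝ) from rfl] at hcot
  have he : Complex.exp (2 * π * Complex.I * x) = e x := rfl
  have hsub : e x - 1 ≠ 0 := sub_ne_zero.2 hx
  have hsub' : 1 - e x ≠ 0 := sub_ne_zero.2 hx.symm
  rw [Complex.ofReal_cot]
  push_cast
  rw [hcot, he]
  field_simp
  ring

lemma norm_inv_e_sub_one_sub {x y : ℝ} (hx : e x ≠ 1) (hy : e y ≠ 1) :
    ‖(e x - 1)⁻¹ - (e y - 1)⁻¹‖ = |Real.cot (π * x) - Real.cot (π * y)| / 2 := by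
  rw [inv_e_sub_one_eq_cot hx, inv_e_sub_one_eq_cot hy,
    show ∀ a b : ℂ, -1 / 2 - Complex.I / 2 * a - (-1 / 2 - Complex.I / 2 * b) =
      Complex.I / 2 * (b - a) by intros; ring, ← Complex.ofReal_sub, norm_mul, Complex.norm_real,
    Real.norm_eq_abs, abs_sub_comm, norm_div, Complex.norm_I, Complex.norm_two]
  ring

lemma sum_mul_sub_eq_sum_sub_mul (u y : ℕ → ℂ) (n : ℕ) :
    ∑ j ∈ range (n + 1), u j * (y (j + 1) - y j) =
      u n * y (n + 1) - u 0 * y 0 + ∑ j ∈ range n, (u j - u (j + 1)) * y (j + 1) := by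
  induction n with
  | zero => simp [mul_sub]
  | succ n ih => rw [sum_range_succ, ih, sum_range_succ _ n]; ring

lemma norm_sum_mul_sub_le {u y : ℕ → ℂ} (hy : ∀ j, ‖y j‖ ≤ 1) (n : ℕ) :
    ‖∑ j ∈ range (n + 1), u j * (y (j + 1) - y j)‖ ≤
      ‖u n‖ + ‖u 0‖ + ∑ j ∈ range n, ‖u j - u (j + 1)‖ := by
  have bound (a : ℂ) (j : ℕ) : ‖a * y j‖ ≤ ‖a‖ := by
    rw [norm_mul]
    exact mul_le_of_le_one_right (norm_nonneg _) (hy j)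
  rw [sum_mul_sub_eq_sum_sub_mul]
  calc _ ≤ ‖u n * y (n + 1)‖ + ‖u 0 * y 0‖ + ‖∑ j ∈ range n, (u j - u (j + 1)) * y (j + 1)‖ :=
        (norm_add_le _ _).trans (add_le_add_left (norm_sub_le _ _) _)
    _ ≤ _ := add_le_add (add_le_add (bound _ _) (bound _ _))
        (norm_sum_le_of_le _ fun j _ => bound _ _)

section

variable {w x : ℝ}

lemma four_mul_le_norm_e_sub_one (hw : 0 ≤ w) (hx : x ∈ Set.Icc w (1 - w)) :
    4 * w ≤ ‖e x - 1‖ := by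
  rw [norm_e_sub_one]
  linarith [two_mul_le_sin_pi_mul hw hx, le_abs_self (Real.sin (π * x))]

lemma e_ne_one (hw : 0 < w) (hx : x ∈ Set.Icc w (1 - w)) : e x ≠ 1 :=
  sub_ne_zero.1 (norm_pos_iff.1
    ((by positivity : 0 < 4 * w).trans_le (four_mul_le_norm_e_sub_one hw.le hx)))

lemma norm_inv_e_sub_one_le (hw : 0 < w) (hx : x ∈ Set.Icc w (1 - w)) :
    ‖(e x - 1)⁻¹‖ ≤ 1 / (4 * w) := by
  rw [norm_inv, ← one_div]
  exact one_div_le_one_div_of_le (by positivity) (four_mul_le_norm_e_sub_one hw.le hx)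

lemma abs_cot_pi_mul_le (hw : 0 < w) (hx : x ∈ Set.Icc w (1 - w)) :
    |Real.cot (π * x)| ≤ 1 / (2 * w) := by
  refine (abs_cot_le_inv_abs_sin _).trans ?_
  rw [← one_div]
  exact one_div_le_one_div_of_le (by positivity)
    ((two_mul_le_sin_pi_mul hw.le hx).trans (le_abs_self _))

end

lemma sum_norm_inv_e_sub_one_sub_le {w : ℝ} (hw : 0 < w) {x : ℕ → ℝ} {n : ℕ}
    (hmono : ∀ j < n, x j ≤ x (j + 1)) (hx : ∀ j ≤ n, x j ∈ Set.Icc w (1 - w)) :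
    ∑ j ∈ range n, ‖(e (x j) - 1)⁻¹ - (e (x (j + 1)) - 1)⁻¹‖ ≤ 1 / (2 * w) := by
  have hmem : ∀ j ≤ n, π * x j ∈ Set.Ioo 0 π := fun j hj =>
    ⟨mul_pos Real.pi_pos (hw.trans_le (hx j hj).1),
      mul_lt_of_lt_one_right Real.pi_pos (by linarith [(hx j hj).2])⟩
  have hvar : ∀ j ∈ range n, ‖(e (x j) - 1)⁻¹ - (e (x (j + 1)) - 1)⁻¹‖ =
      Real.cot (π * x j) / 2 - Real.cot (π * x (j + 1)) / 2 := fun j hj => by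
    have hj : j < n := mem_range.1 hj
    rw [norm_inv_e_sub_one_sub (e_ne_one hw (hx j hj.le)) (e_ne_one hw (hx (j + 1) hj)),
      abs_of_nonneg, sub_div]
    exact sub_nonneg.2 (cot_antitoneOn_Ioo (hmem j hj.le) (hmem _ hj)
      (mul_le_mul_of_nonneg_left (hmono j hj) Real.pi_pos.le))
  rw [sum_congr rfl hvar, sum_range_sub']
  linarith [abs_le.1 (abs_cot_pi_mul_le hw (hx 0 n.zero_le)),
    abs_le.1 (abs_cot_pi_mul_le hw (hx n le_rfl))]

/-- Partial summation with the weights `1 / (e(δ) - 1)`, whose total variation is controlled by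
the monotonicity of the cotangent. -/
theorem kusmin_landau {f : ℕ → ℝ} {n : ℕ} {k : ℤ} {w : ℝ} (hw : 0 < w)
    (hmono : ∀ j, j + 1 < n → f (j + 1) - f j ≤ f (j + 2) - f (j + 1))
    (hrange : ∀ j < n, f (j + 1) - f j ∈ Set.Icc (k + w) (k + 1 - w)) :
    ‖∑ j ∈ range n, e (f j)‖ ≤ 1 / w := by
  obtain _ | n := n
  · simpa using hw.le
  set x : ℕ → ℝ := fun j => f (j + 1) - f j - k with hx
  have hxw : ∀ j ≤ n, x j ∈ Set.Icc w (1 - w) := fun j hj =>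
    ⟨by linarith [(hrange j (by omega)).1], by linarith [(hrange j (by omega)).2]⟩
  have hterm : ∀ j ∈ range (n + 1),
      e (f j) = (e (x j) - 1)⁻¹ * (e (f (j + 1)) - e (f j)) := fun j hj => by
    have hstep : e (f (j + 1)) = e (f j) * e (x j) := by
      rw [show f (j + 1) = f j + x j + k by simp only [hx]; ring, e_add, e_intCast, mul_one, e_add]
    have := sub_ne_zero.2 (e_ne_one hw (hxw j (mem_range_succ_iff.1 hj)))
    rw [hstep]
    field_simp
  rw [sum_congr rfl hterm]
  refine (norm_sum_mul_sub_le (fun j => (norm_e _).le) n).trans ?_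
  have hvar := sum_norm_inv_e_sub_one_sub_le hw
    (fun j hj => by linarith [hmono j (by omega)] : ∀ j < n, x j ≤ x (j + 1)) hxw
  have hquarter : 1 / (4 * w) = 1 / w / 4 := by field_simp
  have hhalf : 1 / (2 * w) = 1 / w / 2 := by field_simp
  linarith [norm_inv_e_sub_one_le hw (hxw n le_rfl), norm_inv_e_sub_one_le hw (hxw 0 n.zero_le)]

/-! ### The second derivative test -/

lemma exists_eq_Ico_of_ordConnected {s : Finset ℕ} (hs : (s : Set ℕ).OrdConnected) :
    ∃ a b, s = Ico a b := by
  obtain rfl | hne := s.eq_empty_or_nonempty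
  · exact ⟨0, 0, by simp⟩
  refine ⟨s.min' hne, s.max' hne + 1, ?_⟩
  ext l
  rw [mem_Ico, Nat.lt_succ_iff]
  exact ⟨fun h => ⟨s.min'_le l h, s.le_max' l h⟩,
    fun h => hs.out (s.min'_mem hne) (s.max'_mem hne) h⟩

lemma card_le_of_mul_sub_le {g : ℕ → ℝ} {s : Finset ℕ} {lam w y : ℝ} (hlam : 0 < lam)
    (hw : 0 ≤ w) (hspaced : ∀ i ∈ s, ∀ j ∈ s, i ≤ j → lam * (j - i) ≤ g j - g i)
    (hmaps : ∀ j ∈ s, g j ∈ Set.Icc y (y + w)) :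
    (#s : ℝ) ≤ w / lam + 1 := by
  obtain rfl | hne := s.eq_empty_or_nonempty
  · simp only [card_empty, Nat.cast_zero]; positivity
  have hmin := s.min'_mem hne
  have hmax := s.max'_mem hne
  have hcard : (#s : ℝ) + s.min' hne ≤ s.max' hne + 1 := by
    have hsub : s ⊆ Icc (s.min' hne) (s.max' hne) := fun l hl =>
      mem_Icc.2 ⟨s.min'_le l hl, s.le_max' l hl⟩
    have := card_le_card hsub
    rw [Nat.card_Icc] at this
    exact_mod_cast (by have := s.min'_le _ hmax; omega : #s + s.min' hne ≤ s.max' hne + 1)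
  have hwidth : (s.max' hne - s.min' hne : ℝ) ≤ w / lam := by
    rw [le_div_iff₀ hlam]
    linarith [hspaced _ hmin _ hmax (s.min'_le _ hmax), (hmaps _ hmin).1, (hmaps _ hmax).2]
  linarith

lemma sub_mem_Icc_of_steps {g : ℕ → ℝ} {n : ℕ} {a b : ℝ}
    (hg : ∀ j, j + 1 < n → g (j + 1) - g j ∈ Set.Icc a b) {i j : ℕ} (hij : i ≤ j) (hj : j < n) :
    g j - g i ∈ Set.Icc (a * (j - i)) (b * (j - i)) := by
  induction j, hij using Nat.le_induction with
  | base => simp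
  | succ j _ ih =>
    have hprev := ih (by omega)
    have hstep := hg j hj
    push_cast
    constructor <;> linarith [hprev.1, hprev.2, hstep.1, hstep.2]

section

variable {f : ℕ → ℝ} {n : ℕ} {lam Lam : ℝ}

lemma norm_sum_e_filter_diff_mem_Icc_le {k : ℤ} {w : ℝ} (hw : 0 < w)
    (hmono : MonotoneOn (fun j => f (j + 1) - f j) (Set.Iio n)) :
    ‖∑ j ∈ range n with f (j + 1) - f j ∈ Set.Icc (k + w) (k + 1 - w), e (f j)‖ ≤ 1 / w := by
  set s := {j ∈ range n | f (j + 1) - f j ∈ Set.Icc (k + w) (k + 1 - w)}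
  have hconn : (s : Set ℕ).OrdConnected := ⟨fun i hi j hj l hl => by
    simp only [s, coe_filter, Set.mem_ofPred_eq, mem_range] at hi hj ⊢
    have hln : l < n := hl.2.trans_lt hj.1
    exact ⟨hln, hi.2.1.trans (hmono hi.1 hln hl.1), (hmono hln hj.1 hl.2).trans hj.2.2⟩⟩
  obtain ⟨a, b, hab⟩ := exists_eq_Ico_of_ordConnected hconn
  have hmem : ∀ j < b - a,
      a + j < n ∧ f (a + j + 1) - f (a + j) ∈ Set.Icc (k + w) (k + 1 - w) := fun j hj => by
    have : a + j ∈ s := by rw [hab, mem_Ico]; omega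
    simpa only [s, mem_filter, mem_range] using this
  rw [hab, sum_Ico_eq_sum_range]
  exact kusmin_landau (f := fun j => f (a + j)) hw
    (fun j hj => hmono (hmem j (by omega)).1 (hmem (j + 1) hj).1 (Nat.le_succ _))
    (fun j hj => (hmem j hj).2)

lemma diff_sub_diff_mem_Icc
    (hf : ∀ j, j + 2 ≤ n → f (j + 2) - 2 * f (j + 1) + f j ∈ Set.Icc lam Lam) {i j : ℕ}
    (hij : i ≤ j) (hj : j < n) :
    f (j + 1) - f j - (f (i + 1) - f i) ∈ Set.Icc (lam * (j - i)) (Lam * (j - i)) :=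
  sub_mem_Icc_of_steps (g := fun j => f (j + 1) - f j) (fun l hl => by
    convert hf l (by omega) using 1; ring_nf) hij hj

lemma monotoneOn_diff (hlam : 0 ≤ lam)
    (hf : ∀ j, j + 2 ≤ n → f (j + 2) - 2 * f (j + 1) + f j ∈ Set.Icc lam Lam) :
    MonotoneOn (fun j => f (j + 1) - f j) (Set.Iio n) := fun i _ j hj hij => by
  have hle : (i : ℝ) ≤ j := by exact_mod_cast hij
  exact sub_nonneg.1 <|
    (mul_nonneg hlam (sub_nonneg.2 hle)).trans (diff_sub_diff_mem_Icc hf hij hj).1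

/-- Differences within `√lam` of an integer are estimated trivially, the others by
Kusmin–Landau. -/
lemma norm_sum_e_filter_floor_diff_le (hlam : 0 < lam) (hlam' : √lam ≤ 1 / 2)
    (hf : ∀ j, j + 2 ≤ n → f (j + 2) - 2 * f (j + 1) + f j ∈ Set.Icc lam Lam) (k : ℤ) :
    ‖∑ j ∈ range n with ⌊f (j + 1) - f j⌋ = k, e (f j)‖ ≤ 5 / √lam := by
  set w := √lam
  have hw : 0 < w := Real.sqrt_pos.2 hlam
  set near : ℝ → Finset ℕ := fun y => {j ∈ range n | f (j + 1) - f j ∈ Set.Icc y (y + w)}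
  have hnear : ∀ y, (#(near y) : ℝ) ≤ 1 / w + 1 := fun y => by
    have hspaced : ∀ i ∈ near y, ∀ j ∈ near y, i ≤ j →
        lam * (j - i) ≤ f (j + 1) - f j - (f (i + 1) - f i) := fun i _ j hj hij =>
      (diff_sub_diff_mem_Icc hf hij (mem_range.1 (mem_filter.1 hj).1)).1
    have := card_le_of_mul_sub_le hlam hw.le hspaced fun j hj => (mem_filter.1 hj).2
    rwa [Real.sqrt_div_self'] at this
  set s := {j ∈ range n | ⌊f (j + 1) - f j⌋ = k}
  set mid := {j ∈ range n | f (j + 1) - f j ∈ Set.Icc (k + w) (k + 1 - w)}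
  have hmid : mid ⊆ s := monotone_filter_right _ fun j _ hj =>
    Int.floor_eq_iff.2 ⟨by linarith [hj.1], by linarith [hj.2]⟩
  have hends : s \ mid ⊆ near k ∪ near (k + 1 - w) := fun j hj => by
    simp only [s, mid, near, Finset.mem_sdiff, mem_union, mem_filter, Int.floor_eq_iff, Set.mem_Icc]
      at hj ⊢
    obtain ⟨⟨hjn, hlo, hhi⟩, hout⟩ := hj
    rcases le_total (f (j + 1) - f j) (k + w) with hle | hge
    · exact .inl ⟨hjn, hlo, hle⟩
    · refine .inr ⟨hjn, ?_, by linarith⟩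
      by_contra! hlt
      exact hout ⟨hjn, hge, hlt.le⟩
  have hcard : (#(s \ mid) : ℝ) ≤ #(near k) + #(near (k + 1 - w)) := by
    exact_mod_cast (card_le_card hends).trans (card_union_le _ _)
  have htwo : 2 ≤ 1 / w := by rw [le_div_iff₀ hw]; linarith
  rw [← sum_sdiff hmid]
  calc _ ≤ ‖∑ j ∈ s \ mid, e (f j)‖ + ‖∑ j ∈ mid, e (f j)‖ := norm_add_le _ _
    _ ≤ #(s \ mid) + 1 / w := add_le_add (norm_sum_e_le_card _ _)
        (norm_sum_e_filter_diff_mem_Icc_le hw (monotoneOn_diff hlam.le hf))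
    _ ≤ 5 * (1 / w) := by linarith [hnear k, hnear (k + 1 - w)]
    _ = 5 / w := by ring

lemma card_Icc_floor_le {a b : ℝ} (hab : a ≤ b) : (#(Icc ⌊a⌋ ⌊b⌋) : ℝ) ≤ b - a + 2 := by
  have hle := Int.floor_le_floor hab
  have hcard : (#(Icc ⌊a⌋ ⌊b⌋) : ℝ) = ⌊b⌋ + 1 - ⌊a⌋ := by
    exact_mod_cast Int.card_Icc_of_le _ _ (by omega)
  linarith [Int.floor_le b, Int.lt_floor_add_one a]

theorem norm_sum_e_le_of_second_diff (hlam : 0 < lam) (hLam : lam ≤ Lam)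
    (hf : ∀ j, j + 2 ≤ n → f (j + 2) - 2 * f (j + 1) + f j ∈ Set.Icc lam Lam) :
    ‖∑ j ∈ range n, e (f j)‖ ≤ (Lam * n + 2) * (5 / √lam) := by
  have hw : 0 < √lam := Real.sqrt_pos.2 hlam
  have hLam0 : 0 < Lam := hlam.trans_le hLam
  obtain _ | n := n
  · simp only [range_zero, sum_empty, norm_zero]; positivity
  rcases le_or_gt √lam (1 / 2) with hsmall | hlarge
  · have hmono := monotoneOn_diff hlam.le hf
    have hmaps : ∀ j ∈ range (n + 1), ⌊f (j + 1) - f j⌋ ∈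
        Icc ⌊f (0 + 1) - f 0⌋ ⌊f (n + 1) - f n⌋ := fun j hj => by
      have hj := mem_range.1 hj
      exact mem_Icc.2 ⟨Int.floor_le_floor (hmono n.succ_pos hj j.zero_le),
        Int.floor_le_floor (hmono hj n.lt_succ_self (Nat.lt_succ_iff.1 hj))⟩
    have hcard := card_Icc_floor_le (hmono n.succ_pos n.lt_succ_self n.zero_le)
    have hspread := (diff_sub_diff_mem_Icc hf n.zero_le n.lt_succ_self).2
    rw [← sum_fiberwise_of_maps_to hmaps]
    refine (norm_sum_le_of_le _ fun k _ =>
      norm_sum_e_filter_floor_diff_le hlam hsmall hf k).trans ?_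
    rw [sum_const, nsmul_eq_mul]
    refine mul_le_mul_of_nonneg_right (hcard.trans ?_) (by positivity)
    push_cast at hspread ⊢
    linarith
  · have hone : 1 ≤ Lam * (5 / √lam) := by
      have hsq := Real.mul_self_sqrt hlam.le
      rw [mul_div_assoc', le_div_iff₀ hw]
      nlinarith
    refine (norm_sum_e_le_card _ _).trans ?_
    rw [card_range]
    have : (0 : ℝ) ≤ (n + 1 : ℕ) := Nat.cast_nonneg _
    nlinarith [div_pos (by norm_num : (0 : ℝ) < 5) hw]

end

/-! ### Exponential sums over powers in residue classes -/

lemma exists_second_diff_rpow_eq (c : ℝ) {x h : ℝ} (hx : 0 < x) (hh : 0 < h) :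
    ∃ z ∈ Set.Ioo x (x + 2 * h),
      (x + 2 * h) ^ c - 2 * (x + h) ^ c + x ^ c = c * (c - 1) * h ^ 2 * z ^ (c - 2) := by
  have hpow : ∀ (p : ℝ), ∀ y > 0, HasDerivAt (fun t : ℝ => t ^ p) (p * y ^ (p - 1)) y :=
    fun p y hy => Real.hasDerivAt_rpow_const (.inl hy.ne')
  have hdiff : ∀ y > 0, HasDerivAt (fun t : ℝ => (t + h) ^ c - t ^ c)
      (c * (y + h) ^ (c - 1) - c * y ^ (c - 1)) y := fun y hy =>
    ((hpow c (y + h) (by linarith)).comp_add_const y h).sub (hpow c y hy)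
  obtain ⟨y, hy, hslope⟩ := exists_hasDerivAt_eq_slope _ _ (by linarith : x < x + h)
    (fun y hy => (hdiff y (hx.trans_le hy.1)).continuousAt.continuousWithinAt)
    (fun y hy => hdiff y (hx.trans hy.1))
  have hy0 : 0 < y := hx.trans hy.1
  obtain ⟨z, hz, hslope'⟩ := exists_hasDerivAt_eq_slope _ _ (by linarith : y < y + h)
    (fun z hz => (hpow (c - 1) z (hy0.trans_le hz.1)).continuousAt.continuousWithinAt)
    (fun z hz => hpow (c - 1) z (hy0.trans hz.1))
  refine ⟨z, ⟨hy.1.trans hz.1, by linarith [hz.2, hy.2]⟩, ?_⟩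
  rw [eq_div_iff (by linarith), add_sub_cancel_left] at hslope hslope'
  rw [show c - 1 - 1 = c - 2 by ring] at hslope'
  rw [show x + h + h = x + 2 * h by ring] at hslope
  linear_combination -hslope - c * h * hslope'

lemma second_diff_rpow_mem_Icc {c A M x h : ℝ} (hc₁ : 1 ≤ c) (hc₂ : c ≤ 2) (hM : 0 < M)
    (hh : 0 < h) (hMx : M ≤ x) (hxA : x + 2 * h ≤ A * M) :
    (x + 2 * h) ^ c - 2 * (x + h) ^ c + x ^ c ∈
      Set.Icc (c * (c - 1) * h ^ 2 * (A * M) ^ (c - 2))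
        (A * (c * (c - 1) * h ^ 2 * (A * M) ^ (c - 2))) := by
  have hA : 1 ≤ A := le_of_mul_le_mul_right (by linarith) hM
  have hcoef : 0 ≤ c * (c - 1) * h ^ 2 := by
    have : 0 ≤ c - 1 := by linarith
    positivity
  obtain ⟨z, hz, hz'⟩ := exists_second_diff_rpow_eq c (hM.trans_le hMx) hh
  have hlower : (A * M) ^ (c - 2) ≤ z ^ (c - 2) :=
    Real.rpow_le_rpow_of_nonpos (by linarith [hz.1]) (by linarith [hz.2]) (by linarith)
  have hupper : z ^ (c - 2) ≤ A * (A * M) ^ (c - 2) := calc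
    z ^ (c - 2) ≤ M ^ (c - 2) :=
      Real.rpow_le_rpow_of_nonpos hM (by linarith [hz.1]) (by linarith)
    _ ≤ A ^ (c - 1) * M ^ (c - 2) :=
      le_mul_of_one_le_left (by positivity) (Real.one_le_rpow hA (by linarith))
    _ = A * (A * M) ^ (c - 2) := by
      rw [Real.mul_rpow (by linarith) hM.le, ← mul_assoc, mul_comm A,
        ← Real.rpow_add_one (by linarith)]
      ring_nf
  rw [hz', ← mul_left_comm]
  exact ⟨mul_le_mul_of_nonneg_left hlower hcoef, mul_le_mul_of_nonneg_left hupper hcoef⟩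

lemma sqrt_second_diff_rpow {c A M κ : ℝ} (hA : 0 < A) (hM : 0 < M) (hκ : 0 < κ) (q : ℕ) :
    √(κ * (c * (c - 1) * q ^ 2 * (A * M) ^ (c - 2))) =
      √(c * (c - 1) * A ^ (c - 2)) * √(κ * M ^ c) * q / M := by
  have hpow : M ^ (c - 2) = M ^ c / M ^ 2 := by rw [Real.rpow_sub hM]; norm_cast
  rw [Real.mul_rpow hA.le hM.le, hpow,
    show κ * (c * (c - 1) * q ^ 2 * (A ^ (c - 2) * (M ^ c / M ^ 2))) =
      (κ * M ^ c) * (c * (c - 1) * A ^ (c - 2)) * (q / M) ^ 2 by ring,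
    Real.sqrt_mul' _ (sq_nonneg _), Real.sqrt_sq (by positivity),
    Real.sqrt_mul (by positivity)]
  ring

lemma norm_sum_e_mul_rpow_progression_le {c A M κ m₀ : ℝ} {q n : ℕ} (hc₁ : 1 < c) (hc₂ : c ≤ 2)
    (hκ : 0 < κ) (hM : 0 < M) (hq : 0 < q) (hm₀ : M ≤ m₀) (hmn : m₀ + q * n ≤ A * M) :
    ‖∑ j ∈ range n, e (κ * (m₀ + q * j) ^ c)‖ ≤
      5 * A * (√(κ * (c * (c - 1) * q ^ 2 * (A * M) ^ (c - 2))) * n) +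
        10 / √(κ * (c * (c - 1) * q ^ 2 * (A * M) ^ (c - 2))) := by
  have hq0 : (0 : ℝ) < q := by exact_mod_cast hq
  have hA : 1 ≤ A := le_of_mul_le_mul_right (by nlinarith [n.cast_nonneg (α := ℝ)]) hM
  have : 0 < c - 1 := by linarith
  set lam := κ * (c * (c - 1) * q ^ 2 * (A * M) ^ (c - 2)) with hlam_def
  have hlam : 0 < lam := by positivity
  have hexpand : (A * lam * n + 2) * (5 / √lam) = 5 * A * (√lam * n) + 10 / √lam := by
    linear_combination 5 * A * n * Real.div_sqrt (x := lam)
  rw [← hexpand]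
  refine norm_sum_e_le_of_second_diff hlam (le_mul_of_one_le_left hlam.le hA) fun j hj => ?_
  have hstep : (q : ℝ) * (j + 2) ≤ q * n := by gcongr; exact_mod_cast hj
  have hmem := second_diff_rpow_mem_Icc (x := m₀ + q * j) hc₁.le hc₂ hM hq0
    (by nlinarith [j.cast_nonneg (α := ℝ)]) (by linarith : _ ≤ A * M)
  have hscale : κ * (m₀ + q * (j + 2 : ℕ)) ^ c - 2 * (κ * (m₀ + q * (j + 1 : ℕ)) ^ c) +
      κ * (m₀ + q * j) ^ c =
      κ * ((m₀ + q * j + 2 * q) ^ c - 2 * (m₀ + q * j + q) ^ c + (m₀ + q * j) ^ c) := by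
    push_cast; ring_nf
  rw [hscale, hlam_def, mul_left_comm A κ]
  exact ⟨mul_le_mul_of_nonneg_left hmem.1 hκ.le, mul_le_mul_of_nonneg_left hmem.2 hκ.le⟩

lemma one_le_add_div {s M : ℝ} (hs : 0 < s) (hM : 1 ≤ M) : 1 ≤ s + M / s := by
  rw [show s + M / s = (s ^ 2 + M) / s by field_simp, le_div_iff₀ hs]
  nlinarith [sq_nonneg (s - 1)]

lemma exists_norm_sum_e_mul_rpow_progression_le {c : ℝ} (hc₁ : 1 < c) (hc₂ : c ≤ 2) (A : ℝ) :
    ∃ C ≥ 1, ∀ (κ M m₀ : ℝ) (q n : ℕ), 0 < κ → 1 ≤ M → 0 < q → M ≤ m₀ → m₀ + q * n ≤ A * M →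
      ‖∑ j ∈ range (n + 1), e (κ * (m₀ + q * j) ^ c)‖ ≤
        C * (√(κ * M ^ c) + M / √(κ * M ^ c)) := by
  set b := √(c * (c - 1) * A ^ (c - 2)) with hb_def
  refine ⟨1 + 5 * A ^ 2 * b + 10 / b,
    by rw [ge_iff_le, add_assoc, le_add_iff_nonneg_right]; positivity, ?_⟩
  intro κ M m₀ q n hκ hM hq hm₀ hmn
  have hM0 : 0 < M := by linarith
  have hq1 : (1 : ℝ) ≤ q := by exact_mod_cast hq
  have hA : 1 ≤ A := le_of_mul_le_mul_right (by nlinarith [n.cast_nonneg (α := ℝ)]) hM0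
  have : 0 < c - 1 := by linarith
  have hb : 0 < b := by positivity
  set s := √(κ * M ^ c) with hs_def
  have hs : 0 < s := by positivity
  have htest := norm_sum_e_mul_rpow_progression_le hc₁ hc₂ hκ hM0 hq hm₀ hmn
  rw [sqrt_second_diff_rpow (by linarith) hM0 hκ q, ← hb_def, ← hs_def] at htest
  have hlength : b * s * q / M * n ≤ A * (b * s) := by
    rw [div_mul_eq_mul_div, div_le_iff₀ hM0]
    have : (q : ℝ) * n ≤ A * M := by linarith
    nlinarith [mul_pos hb hs]
  have hinv : 10 / (b * s * q / M) ≤ 10 / b * (M / s) := by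
    rw [show 10 / (b * s * q / M) = 10 / b * (M / s) / q by field_simp]
    exact div_le_self (by positivity) hq1
  rw [sum_range_succ]
  calc _ ≤ 5 * A * (A * (b * s)) + 10 / b * (M / s) + (s + M / s) := by
        refine (norm_add_le _ _).trans (add_le_add (htest.trans ?_) ?_)
        · gcongr
        · exact (norm_e _).le.trans (one_le_add_div hs hM)
    _ ≤ _ := by
        have : 0 ≤ 5 * A ^ 2 * b * (M / s) + 10 / b * s := by positivity
        linear_combination this

lemma exists_filter_modEq_Ioc_eq_image {u v q a : ℕ} (hq : 0 < q)
    (hne : {m ∈ Ioc u v | m ≡ a [MOD q]}.Nonempty) :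
    ∃ m₀ n : ℕ, u < m₀ ∧ m₀ + q * n ≤ v ∧
      {m ∈ Ioc u v | m ≡ a [MOD q]} = (range (n + 1)).image fun j => m₀ + q * j := by
  set s := {m ∈ Ioc u v | m ≡ a [MOD q]}
  have hmem : ∀ m, m ∈ s ↔ (u < m ∧ m ≤ v) ∧ m ≡ a [MOD q] := by simp [s]
  set m₀ := s.min' hne
  obtain ⟨hm₀, hm₀a⟩ := (hmem m₀).1 (s.min'_mem hne)
  have hrange : ∀ j, j ∈ range ((v - m₀) / q + 1) ↔ m₀ + q * j ≤ v := fun j => by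
    rw [mem_range, Nat.lt_succ_iff, Nat.le_div_iff_mul_le hq, mul_comm]
    omega
  refine ⟨m₀, (v - m₀) / q, hm₀.1, (hrange _).1 (self_mem_range_succ _), ?_⟩
  ext m
  rw [mem_image]
  constructor
  · intro hm
    have hle : m₀ ≤ m := s.min'_le m hm
    obtain ⟨hmv, hma⟩ := (hmem m).1 hm
    obtain ⟨j, hj⟩ := (Nat.modEq_iff_dvd' hle).1 (hm₀a.trans hma.symm)
    exact ⟨j, (hrange j).2 (by omega), by omega⟩
  · rintro ⟨j, hj, rfl⟩
    have hmod : m₀ + q * j ≡ m₀ [MOD q] := by simp [Nat.ModEq]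
    exact (hmem _).2 ⟨⟨by omega, (hrange j).1 hj⟩, hmod.trans hm₀a⟩

lemma exists_norm_sum_e_mul_rpow_modEq_le {c : ℝ} (hc₁ : 1 < c) (hc₂ : c ≤ 2) (A : ℝ) :
    ∃ C ≥ 1, ∀ (κ M : ℝ) (q a u v : ℕ), κ ≠ 0 → 1 ≤ M → 0 < q → M ≤ u + 1 → v ≤ A * M →
      ‖∑ m ∈ Ioc u v with m ≡ a [MOD q], e (κ * (m : ℝ) ^ c)‖ ≤
        C * (√(|κ| * M ^ c) + M / √(|κ| * M ^ c)) := by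
  obtain ⟨C, hC, hbound⟩ := exists_norm_sum_e_mul_rpow_progression_le hc₁ hc₂ A
  refine ⟨C, hC, fun κ M q a u v hκ hM hq hu hv => ?_⟩
  have habs : ‖∑ m ∈ Ioc u v with m ≡ a [MOD q], e (κ * (m : ℝ) ^ c)‖ =
      ‖∑ m ∈ Ioc u v with m ≡ a [MOD q], e (|κ| * (m : ℝ) ^ c)‖ := by
    rcases abs_choice κ with h | h <;> rw [h]
    simp only [neg_mul, norm_sum_e_neg]
  rw [habs]
  obtain hempty | hne := {m ∈ Ioc u v | m ≡ a [MOD q]}.eq_empty_or_nonempty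
  · rw [hempty, sum_empty, norm_zero]; positivity
  obtain ⟨m₀, n, hm₀, hn, himage⟩ := exists_filter_modEq_Ioc_eq_image hq hne
  rw [himage, sum_image fun i _ j _ hij =>
    Nat.eq_of_mul_eq_mul_left hq (Nat.add_left_cancel hij)]
  push_cast
  have hm₀' : (u + 1 : ℝ) ≤ m₀ := by exact_mod_cast hm₀
  have hn' : (m₀ + q * n : ℝ) ≤ v := by exact_mod_cast hn
  exact hbound |κ| M m₀ q n (abs_pos.2 hκ) hM hq (hu.trans hm₀') (hn'.trans hv)

/-- A common factor of `k` and `d` would divide `2`, so `k` is invertible modulo the odd `d`. -/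
lemma dvd_mul_add_two_iff_modEq {d k m₀ : ℕ} (hd : Odd d) (hm₀ : d ∣ m₀ * k + 2) (m : ℕ) :
    d ∣ m * k + 2 ↔ m ≡ m₀ [MOD d] := by
  have hcop : d.Coprime k := by
    have hdvd : d.gcd k ∣ 2 := (Nat.dvd_add_right ((d.gcd_dvd_right k).mul_left m₀)).1
      ((d.gcd_dvd_left k).trans hm₀)
    exact Nat.eq_one_of_dvd_coprimes (Nat.coprime_two_right.2 hd) (d.gcd_dvd_left k) hdvd
  rw [← Nat.modEq_zero_iff_dvd] at hm₀ ⊢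
  refine ⟨fun hm => ?_, fun hm => ((hm.mul_right k).add_right 2).trans hm₀⟩
  exact ((hm.trans hm₀.symm).add_right_cancel' 2).cancel_right_of_coprime hcop

lemma modEq_lcm_iff {a b m n : ℕ} : a ≡ b [MOD m.lcm n] ↔ a ≡ b [MOD m] ∧ a ≡ b [MOD n] := by
  simp only [Nat.modEq_iff_dvd, Int.natCast_dvd, Nat.lcm_dvd_iff]

lemma exists_norm_sum_e_mul_rpow_dvd_le {c : ℝ} (hc₁ : 1 < c) (hc₂ : c ≤ 2) (A : ℝ) :
    ∃ C ≥ 1, ∀ (κ M : ℝ) (d₁ d₂ k₁ k₂ u v : ℕ), κ ≠ 0 → 1 ≤ M → Odd d₁ → Odd d₂ →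
      M ≤ u + 1 → v ≤ A * M →
      ‖∑ m ∈ Ioc u v with d₁ ∣ m * k₁ + 2 ∧ d₂ ∣ m * k₂ + 2, e (κ * (m : ℝ) ^ c)‖ ≤
        C * (√(|κ| * M ^ c) + M / √(|κ| * M ^ c)) := by
  obtain ⟨C, hC, hbound⟩ := exists_norm_sum_e_mul_rpow_modEq_le hc₁ hc₂ A
  refine ⟨C, hC, fun κ M d₁ d₂ k₁ k₂ u v hκ hM hd₁ hd₂ hu hv => ?_⟩
  obtain hnone | ⟨m₀, hm₁, hm₂⟩ :=
    (em (∃ m₀, d₁ ∣ m₀ * k₁ + 2 ∧ d₂ ∣ m₀ * k₂ + 2)).symm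
  · rw [filter_false_of_mem fun m _ hm => hnone ⟨m, hm⟩, sum_empty, norm_zero]
    positivity
  · simp only [dvd_mul_add_two_iff_modEq hd₁ hm₁, dvd_mul_add_two_iff_modEq hd₂ hm₂,
      ← modEq_lcm_iff]
    exact hbound κ M _ m₀ u v hκ hM (Nat.lcm_pos hd₁.pos hd₂.pos) hu hv

/-! ### The divisor bound -/

lemma natCast_pow_rpow_comm (p k : ℕ) (ε : ℝ) : ((p : ℝ) ^ k) ^ ε = ((p : ℝ) ^ ε) ^ k := by
  rw [← Real.rpow_natCast_mul p.cast_nonneg, mul_comm, Real.rpow_mul_natCast p.cast_nonneg]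

lemma add_one_le_mul_pow_rpow {ε : ℝ} (hε : 0 < ε) {p : ℕ} (hp : 2 ≤ p) (k : ℕ) :
    (k + 1 : ℝ) ≤ (1 / (ε * Real.log 2) + 1) * ((p : ℝ) ^ k) ^ ε := by
  have hp' : (2 : ℝ) ≤ p := by exact_mod_cast hp
  have : 0 < ε * Real.log 2 := mul_pos hε (Real.log_pos (by norm_num))
  have hexp : 1 + k * (ε * Real.log 2) ≤ ((p : ℝ) ^ k) ^ ε := calc
    _ ≤ Real.exp (k * (ε * Real.log 2)) := by
      linarith [Real.add_one_le_exp (k * (ε * Real.log 2))]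
    _ = ((2 : ℝ) ^ k) ^ ε := by
      rw [Real.rpow_def_of_pos (by positivity), Real.log_pow]; ring_nf
    _ ≤ ((p : ℝ) ^ k) ^ ε := by gcongr
  calc (k + 1 : ℝ) ≤ k + 1 + (1 / (ε * Real.log 2) + k * (ε * Real.log 2)) :=
        le_add_of_nonneg_right (by positivity)
    _ = (1 / (ε * Real.log 2) + 1) * (1 + k * (ε * Real.log 2)) := by field_simp; ring
    _ ≤ _ := by gcongr

lemma add_one_le_pow_rpow {ε : ℝ} (hε : 0 < ε) {p : ℕ} (hp : (2 : ℝ) ^ (1 / ε) ≤ p) (k : ℕ) :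
    (k + 1 : ℝ) ≤ ((p : ℝ) ^ k) ^ ε := by
  have htwo : (2 : ℝ) ≤ (p : ℝ) ^ ε := calc
    (2 : ℝ) = ((2 : ℝ) ^ (1 / ε)) ^ ε := by
      rw [← Real.rpow_mul (by norm_num), one_div_mul_cancel hε.ne', Real.rpow_one]
    _ ≤ _ := by gcongr
  rw [natCast_pow_rpow_comm]
  calc (k + 1 : ℝ) ≤ (2 : ℝ) ^ k := by exact_mod_cast Nat.lt_two_pow_self
    _ ≤ _ := by gcongr

lemma natCast_rpow_eq_prod_primeFactors {n : ℕ} (hn : n ≠ 0) (ε : ℝ) :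
    (n : ℝ) ^ ε = ∏ p ∈ n.primeFactors, ((p : ℝ) ^ n.factorization p) ^ ε := by
  rw [Real.finsetProd_rpow _ _ fun i _ => by positivity]
  congr 1
  exact_mod_cast (Nat.prod_factorization_pow_eq_self hn).symm

/-- Only primes below `2 ^ (1 / ε)` contribute more than `1` to `τ(n) / n ^ ε`, each a bounded
factor. -/
theorem exists_card_divisors_le_mul_rpow {ε : ℝ} (hε : 0 < ε) :
    ∃ C ≥ 1, ∀ n : ℕ, n ≠ 0 → (#n.divisors : ℝ) ≤ C * (n : ℝ) ^ ε := by
  set B : ℝ := 1 / (ε * Real.log 2) + 1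
  have hB : 1 ≤ B := le_add_of_nonneg_left (by positivity)
  set y : ℕ := ⌈(2 : ℝ) ^ (1 / ε)⌉₊
  refine ⟨B ^ y, one_le_pow₀ hB, fun n hn => ?_⟩
  have hfactor : ∀ p ∈ n.primeFactors, ((n.factorization p + 1 : ℕ) : ℝ) ≤
      (if p < y then B else 1) * ((p : ℝ) ^ n.factorization p) ^ ε := fun p hp => by
    push_cast
    split_ifs with hpy
    · exact add_one_le_mul_pow_rpow hε (Nat.prime_of_mem_primeFactors hp).two_le _
    · rw [one_mul]
      exact add_one_le_pow_rpow hε ((Nat.le_ceil _).trans (by exact_mod_cast not_lt.1 hpy)) _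
  have hsmall : #{p ∈ n.primeFactors | p < y} ≤ y := by
    refine (card_le_card fun p hp => ?_).trans_eq (card_range y)
    exact mem_range.2 (mem_filter.1 hp).2
  rw [Nat.card_divisors hn, natCast_rpow_eq_prod_primeFactors hn, Nat.cast_prod]
  refine (prod_le_prod (fun _ _ => by positivity) hfactor).trans ?_
  rw [prod_mul_distrib, ← prod_filter, prod_const]
  gcongr

/-! ### Correlations of the sifted phase -/

/-- The sieve convolution `∑_{d ∣ n + 2} λ(d)`, which detects the almost-primality of `n + 2`;
the summation is over `d ≤ D`, the level of `λ`. -/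
noncomputable def sieveConv (D : ℝ) (lam : ℕ → ℝ) (n : ℕ) : ℝ :=
  ∑ d ∈ range (⌊D⌋₊ + 1) with d ∣ n + 2, lam d

/-- The sifted phase: `e(θ n ^ c)` weighted by the sieve convolution and cut off to `A < n ≤ B`,
so that sums over `n` in divisor-closed ranges need no side condition. -/
noncomputable def siftedPhase (c θ D : ℝ) (lam : ℕ → ℝ) (A B n : ℕ) : ℂ :=
  if A < n ∧ n ≤ B then (sieveConv D lam n : ℂ) * e (θ * (n : ℝ) ^ c) else 0

section

variable {c θ D : ℝ} {lam : ℕ → ℝ} {A B : ℕ}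

lemma norm_siftedPhase_le {P : ℝ} (hP : 0 ≤ P)
    (hlam : ∀ n, A < n → n ≤ B → |sieveConv D lam n| ≤ P) (n : ℕ) :
    ‖siftedPhase c θ D lam A B n‖ ≤ P := by
  unfold siftedPhase
  split_ifs with hn
  · rw [norm_mul, norm_e, mul_one, Complex.norm_real, Real.norm_eq_abs]
    exact hlam n hn.1 hn.2
  · rwa [norm_zero]

lemma siftedPhase_eq_sum (n : ℕ) :
    siftedPhase c θ D lam A B n = ∑ d ∈ range (⌊D⌋₊ + 1),
      (lam d : ℂ) * if (A < n ∧ n ≤ B) ∧ d ∣ n + 2 then e (θ * (n : ℝ) ^ c) else 0 := by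
  unfold siftedPhase sieveConv
  split_ifs with hn
  · simp only [hn, and_self, true_and, sum_filter, Complex.ofReal_sum, sum_mul, mul_ite, mul_zero]
    exact sum_congr rfl fun d _ => by split_ifs <;> simp
  · simp only [hn, false_and, if_false, mul_zero, sum_const_zero]

lemma e_mul_rpow_mul_conj (m k₁ k₂ : ℕ) :
    e (θ * ((m * k₁ : ℕ) : ℝ) ^ c) * (starRingEnd ℂ) (e (θ * ((m * k₂ : ℕ) : ℝ) ^ c)) =
      e (θ * ((k₁ : ℝ) ^ c - (k₂ : ℝ) ^ c) * (m : ℝ) ^ c) := by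
  rw [conj_e, ← e_add]
  push_cast
  rw [Real.mul_rpow m.cast_nonneg k₁.cast_nonneg, Real.mul_rpow m.cast_nonneg k₂.cast_nonneg]
  ring_nf

lemma siftedPhase_mul_conj (m k₁ k₂ : ℕ) :
    siftedPhase c θ D lam A B (m * k₁) * (starRingEnd ℂ) (siftedPhase c θ D lam A B (m * k₂)) =
      ∑ d₁ ∈ range (⌊D⌋₊ + 1), ∑ d₂ ∈ range (⌊D⌋₊ + 1), (lam d₁ : ℂ) * lam d₂ *
        if ((A < m * k₁ ∧ m * k₁ ≤ B) ∧ A < m * k₂ ∧ m * k₂ ≤ B) ∧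
          d₁ ∣ m * k₁ + 2 ∧ d₂ ∣ m * k₂ + 2
        then e (θ * ((k₁ : ℝ) ^ c - (k₂ : ℝ) ^ c) * (m : ℝ) ^ c) else 0 := by
  rw [siftedPhase_eq_sum, siftedPhase_eq_sum, map_sum, sum_mul_sum]
  refine sum_congr rfl fun d₁ _ => sum_congr rfl fun d₂ _ => ?_
  rw [map_mul, Complex.conj_ofReal, apply_ite (starRingEnd ℂ), map_zero, mul_mul_mul_comm,
    ite_zero_mul_ite_zero, e_mul_rpow_mul_conj]
  simp only [and_and_and_comm]

/-- Opening both sieve convolutions turns the correlation into sums of `e(κ m ^ c)` over residue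
classes, with `κ = θ (k₁ ^ c - k₂ ^ c)`. -/
lemma exists_sum_siftedPhase_mul_conj_eq {k₁ k₂ M : ℕ} (hk₁ : 0 < k₁) (hk₂ : 0 < k₂)
    (hM : 0 < M) :
    ∃ u v : ℕ, M ≤ u + 1 ∧ v ≤ 2 * M ∧
      (∀ m ∈ Ioc u v, m ∈ Ico M (2 * M) ∧ A < m * k₁ ∧ m * k₁ ≤ B) ∧
      ∑ m ∈ Ico M (2 * M), siftedPhase c θ D lam A B (m * k₁) *
          (starRingEnd ℂ) (siftedPhase c θ D lam A B (m * k₂)) =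
        ∑ d₁ ∈ range (⌊D⌋₊ + 1), ∑ d₂ ∈ range (⌊D⌋₊ + 1), (lam d₁ : ℂ) * lam d₂ *
          ∑ m ∈ Ioc u v with d₁ ∣ m * k₁ + 2 ∧ d₂ ∣ m * k₂ + 2,
            e (θ * ((k₁ : ℝ) ^ c - (k₂ : ℝ) ^ c) * (m : ℝ) ^ c) := by
  set u := max (M - 1) (max (A / k₁) (A / k₂))
  set v := min (2 * M - 1) (min (B / k₁) (B / k₂))
  have hmem : ∀ m, m ∈ Ioc u v ↔
      m ∈ Ico M (2 * M) ∧ (A < m * k₁ ∧ m * k₁ ≤ B) ∧ A < m * k₂ ∧ m * k₂ ≤ B := fun m => by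
    simp only [u, v, mem_Ioc, mem_Ico, max_lt_iff, le_min_iff, Nat.div_lt_iff_lt_mul hk₁,
      Nat.div_lt_iff_lt_mul hk₂, Nat.le_div_iff_mul_le hk₁, Nat.le_div_iff_mul_le hk₂]
    omega
  refine ⟨u, v, by omega, by omega, fun m hm => ⟨((hmem m).1 hm).1, ((hmem m).1 hm).2.1⟩, ?_⟩
  rw [sum_congr rfl fun m _ => siftedPhase_mul_conj m k₁ k₂, sum_comm]
  refine sum_congr rfl fun d₁ _ => ?_
  rw [sum_comm]
  refine sum_congr rfl fun d₂ _ => ?_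
  rw [← mul_sum, ← sum_filter]
  congr 1
  refine sum_congr ?_ fun _ _ => rfl
  ext m
  simp only [mem_filter, hmem, and_assoc]

lemma odd_of_isSieveWeight (hlam : IsSieveWeight D lam) {d : ℕ} (hd : lam d ≠ 0) : Odd d := by
  by_contra hodd
  exact hd (hlam.2 d (.inr (.inl (Nat.not_odd_iff_even.1 hodd).two_dvd)))

lemma norm_sum_sieveWeight_mul_le (hlam : IsSieveWeight D lam) {S : ℕ → ℂ} {R : ℝ}
    (hR : 0 ≤ R) (hS : ∀ d, Odd d → ‖S d‖ ≤ R) :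
    ‖∑ d ∈ range (⌊D⌋₊ + 1), (lam d : ℂ) * S d‖ ≤ (⌊D⌋₊ + 1 : ℝ) * R := by
  have hterm : ∀ d, ‖(lam d : ℂ) * S d‖ ≤ R := fun d => by
    by_cases hd : lam d = 0
    · simpa [hd] using hR
    rw [norm_mul, Complex.norm_real]
    exact (mul_le_of_le_one_left (norm_nonneg _) (hlam.1 d)).trans
      (hS d (odd_of_isSieveWeight hlam hd))
  refine (norm_sum_le_of_le _ fun d _ => hterm d).trans_eq ?_
  rw [sum_const, card_range, nsmul_eq_mul, Nat.cast_add_one]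

lemma norm_sum_sum_sieveWeight_mul_le (hlam : IsSieveWeight D lam) {S : ℕ → ℕ → ℂ} {R : ℝ}
    (hR : 0 ≤ R) (hS : ∀ d₁ d₂, Odd d₁ → Odd d₂ → ‖S d₁ d₂‖ ≤ R) :
    ‖∑ d₁ ∈ range (⌊D⌋₊ + 1), ∑ d₂ ∈ range (⌊D⌋₊ + 1), (lam d₁ : ℂ) * lam d₂ * S d₁ d₂‖ ≤
      (⌊D⌋₊ + 1 : ℝ) ^ 2 * R := by
  simp only [mul_assoc, ← mul_sum, sq]
  exact norm_sum_sieveWeight_mul_le hlam (by positivity) fun d₁ hd₁ =>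
    norm_sum_sieveWeight_mul_le hlam hR fun d₂ hd₂ => hS d₁ d₂ hd₁ hd₂

end

lemma mul_rpow_sub_one {x c : ℝ} (hx : 0 < x) : x * x ^ (c - 1) = x ^ c := by
  rw [mul_comm, ← Real.rpow_add_one hx.ne', sub_add_cancel]

lemma rpow_sub_rpow_mem_Icc {c x y : ℝ} (hc : 1 ≤ c) (hy : 0 < y) (hyx : y ≤ x) :
    x ^ c - y ^ c ∈ Set.Icc ((x - y) * x ^ (c - 1)) (c * (x - y) * x ^ (c - 1)) := by
  have hx : 0 < x := hy.trans_le hyx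
  constructor
  · have hmono : y ^ (c - 1) ≤ x ^ (c - 1) := Real.rpow_le_rpow hy.le hyx (by linarith)
    nlinarith [mul_rpow_sub_one (c := c) hx, mul_rpow_sub_one (c := c) hy]
  · have hbernoulli := one_add_mul_self_le_rpow_one_add (s := y / x - 1)
      (by linarith [div_pos hy hx]) hc
    rw [add_sub_cancel, Real.div_rpow hy.le hx.le, le_div_iff₀ (by positivity)] at hbernoulli
    have hexpand : (1 + c * (y / x - 1)) * x ^ c = x ^ c - c * (x - y) * x ^ (c - 1) := by
      rw [← mul_rpow_sub_one (c := c) hx]; field_simp; ring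
    linarith

lemma abs_mul_rpow_sub_mul_rpow_mem_Icc {c μ X θ M k₁ k₂ : ℝ} (hc₁ : 1 ≤ c) (hc₂ : c ≤ 2)
    (hμ₀ : 0 < μ) (hμ₁ : μ ≤ 1) (hX : 0 < X) (hM : 0 < M) (hk₂ : 0 < k₂) (hk : k₂ ≤ k₁)
    (hlo : μ * X ≤ M * k₁) (hhi : M * k₁ ≤ X) :
    |θ * (k₁ ^ c - k₂ ^ c)| * M ^ c ∈ Set.Icc (μ * (|θ| * X ^ (c - 1) * M * (k₁ - k₂)))
      (c * (|θ| * X ^ (c - 1) * M * (k₁ - k₂))) := by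
  have hk₁ : 0 < k₁ := hk₂.trans_le hk
  have : 0 ≤ k₁ - k₂ := sub_nonneg.2 hk
  obtain ⟨hsub_lo, hsub_hi⟩ := rpow_sub_rpow_mem_Icc hc₁ hk₂ hk
  have hsub : 0 ≤ k₁ ^ c - k₂ ^ c := le_trans (by positivity) hsub_lo
  have hmerge : k₁ ^ (c - 1) * M ^ c = M * (M * k₁) ^ (c - 1) := by
    rw [← mul_rpow_sub_one hM, Real.mul_rpow hM.le hk₁.le]; ring
  rw [abs_mul, abs_of_nonneg hsub]
  constructor
  · have hpow : μ * X ^ (c - 1) ≤ (M * k₁) ^ (c - 1) := calc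
      μ * X ^ (c - 1) ≤ μ ^ (c - 1) * X ^ (c - 1) := by
        gcongr; exact Real.self_le_rpow_of_le_one hμ₀.le hμ₁ (by linarith)
      _ = (μ * X) ^ (c - 1) := (Real.mul_rpow hμ₀.le hX.le).symm
      _ ≤ _ := Real.rpow_le_rpow (by positivity) hlo (by linarith)
    calc _ = |θ| * (μ * X ^ (c - 1)) * M * (k₁ - k₂) := by ring
      _ ≤ |θ| * (M * k₁) ^ (c - 1) * M * (k₁ - k₂) := by gcongr
      _ = |θ| * ((k₁ - k₂) * k₁ ^ (c - 1)) * M ^ c := by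
        linear_combination -|θ| * (k₁ - k₂) * hmerge
      _ ≤ _ := by gcongr
  · have hpow : (M * k₁) ^ (c - 1) ≤ X ^ (c - 1) :=
      Real.rpow_le_rpow (by positivity) hhi (by linarith)
    calc _ ≤ |θ| * (c * (k₁ - k₂) * k₁ ^ (c - 1)) * M ^ c := by gcongr
      _ = c * (|θ| * (M * k₁) ^ (c - 1) * M * (k₁ - k₂)) := by
        linear_combination |θ| * c * (k₁ - k₂) * hmerge
      _ ≤ _ := by gcongr

lemma sqrt_add_div_sqrt_le {F y μ M : ℝ} (hμ : 0 < μ) (hy : 0 < y) (hM : 0 ≤ M)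
    (hF : F ∈ Set.Icc (μ * y) (2 ^ 2 * y)) :
    √F + M / √F ≤ (2 + 1 / √μ) * (√y + M / √y) := by
  have hupper : √F ≤ 2 * √y := by
    rw [← Real.sqrt_sq (zero_le_two (α := ℝ)), ← Real.sqrt_mul (by norm_num)]
    exact Real.sqrt_le_sqrt hF.2
  have hlower : √μ * √y ≤ √F := by
    rw [← Real.sqrt_mul hμ.le]
    exact Real.sqrt_le_sqrt hF.1
  have hinv : M / √F ≤ 1 / √μ * (M / √y) := calc
    M / √F ≤ M / (√μ * √y) := by gcongr
    _ = _ := by field_simp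
  have hcross : 0 ≤ 1 / √μ * √y + 2 * (M / √y) := by positivity
  linear_combination hupper + hinv + hcross

theorem exists_norm_sum_siftedPhase_mul_conj_le {c μ : ℝ} (hc₁ : 1 < c) (hc₂ : c ≤ 2)
    (hμ₀ : 0 < μ) (hμ₁ : μ ≤ 1) :
    ∃ C ≥ 1, ∀ (X θ D : ℝ) (lam : ℕ → ℝ) (M k₁ k₂ : ℕ), IsSieveWeight D lam → 0 < X →
      θ ≠ 0 → 0 < M → 0 < k₂ → k₂ < k₁ →
      ‖∑ m ∈ Ico M (2 * M), siftedPhase c θ D lam ⌊μ * X⌋₊ ⌊X⌋₊ (m * k₁) *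
          (starRingEnd ℂ) (siftedPhase c θ D lam ⌊μ * X⌋₊ ⌊X⌋₊ (m * k₂))‖ ≤
        (⌊D⌋₊ + 1 : ℝ) ^ 2 * (C * (√(|θ| * X ^ (c - 1) * M * (k₁ - k₂)) +
          M / √(|θ| * X ^ (c - 1) * M * (k₁ - k₂)))) := by
  obtain ⟨C, hC, hpower⟩ := exists_norm_sum_e_mul_rpow_dvd_le hc₁ hc₂ 2
  refine ⟨C * (2 + 1 / √(μ / 2)),
    one_le_mul_of_one_le_of_one_le hC (by linarith [show 0 ≤ 1 / √(μ / 2) by positivity]), ?_⟩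
  intro X θ D lam M k₁ k₂ hlam hX hθ hM hk₂ hk
  have hk₂' : (0 : ℝ) < k₂ := by exact_mod_cast hk₂
  have hk' : (k₂ : ℝ) < k₁ := by exact_mod_cast hk
  have hM' : (0 : ℝ) < M := by exact_mod_cast hM
  obtain ⟨u, v, hu, hv, hmem, hsum⟩ :=
    exists_sum_siftedPhase_mul_conj_eq (c := c) (θ := θ) (D := D) (lam := lam)
      (A := ⌊μ * X⌋₊) (B := ⌊X⌋₊) (hk₂.trans hk) hk₂ hM
  have : (0 : ℝ) < k₁ - k₂ := sub_pos.2 hk'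
  set y := |θ| * X ^ (c - 1) * M * (k₁ - k₂)
  have hy : 0 < y := by positivity
  rw [hsum]
  refine norm_sum_sum_sieveWeight_mul_le hlam (by positivity) fun d₁ d₂ hd₁ hd₂ => ?_
  obtain hempty | ⟨m, hm⟩ := (Ioc u v).eq_empty_or_nonempty
  · rw [hempty, filter_empty, sum_empty, norm_zero]; positivity
  obtain ⟨hmM, hAm, hmB⟩ := hmem m hm
  have hmM' : (M : ℝ) ≤ m ∧ (m : ℝ) ≤ 2 * M :=
    ⟨by exact_mod_cast (mem_Ico.1 hmM).1, by exact_mod_cast (mem_Ico.1 hmM).2.le⟩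
  have hAm' : μ * X ≤ m * k₁ := by exact_mod_cast ((Nat.floor_lt (by positivity)).1 hAm).le
  have hmB' : (m * k₁ : ℝ) ≤ X := by exact_mod_cast (Nat.le_floor_iff hX.le).1 hmB
  have hphase := abs_mul_rpow_sub_mul_rpow_mem_Icc (θ := θ) hc₁.le hc₂ (half_pos hμ₀)
    (by linarith) hX hM' hk₂' hk'.le (by nlinarith) (by nlinarith)
  have hκ : θ * ((k₁ : ℝ) ^ c - (k₂ : ℝ) ^ c) ≠ 0 :=
    mul_ne_zero hθ (sub_pos.2 (Real.rpow_lt_rpow hk₂'.le hk' (by linarith))).ne'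
  refine (hpower _ M d₁ d₂ k₁ k₂ u v hκ (by exact_mod_cast hM) hd₁ hd₂ (by exact_mod_cast hu)
    (by exact_mod_cast hv)).trans ?_
  rw [mul_assoc]
  gcongr
  exact sqrt_add_div_sqrt_le (half_pos hμ₀) hy hM'.le
    ⟨hphase.1, hphase.2.trans (by gcongr; linarith)⟩

/-! ### Bilinear forms -/

lemma sum_sqrt_Ico_le (Q : ℕ) : ∑ r ∈ Ico 1 Q, √(r : ℝ) ≤ Q * √(Q : ℝ) := by
  refine (sum_le_card_nsmul _ _ √(Q : ℝ) fun r hr =>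
    Real.sqrt_le_sqrt (by exact_mod_cast (mem_Ico.1 hr).2.le)).trans ?_
  rw [Nat.card_Ico, nsmul_eq_mul]
  gcongr
  exact Q.sub_le 1

lemma one_div_sqrt_add_one_le (n : ℕ) :
    1 / √((n + 1 : ℕ) : ℝ) ≤ 2 * √((n + 1 : ℕ) : ℝ) - 2 * √(n : ℝ) := by
  have hsucc : √((n + 1 : ℕ) : ℝ) ^ 2 = n + 1 := by
    rw [Real.sq_sqrt (by positivity), Nat.cast_succ]
  have hn : √(n : ℝ) ^ 2 = n := Real.sq_sqrt n.cast_nonneg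
  rw [div_le_iff₀ (by positivity)]
  nlinarith [sq_nonneg (√((n + 1 : ℕ) : ℝ) - √(n : ℝ))]

lemma sum_one_div_sqrt_Ico_le (Q : ℕ) : ∑ r ∈ Ico 1 Q, 1 / √(r : ℝ) ≤ 2 * √(Q : ℝ) := by
  rw [sum_Ico_eq_sum_range]
  calc ∑ r ∈ range (Q - 1), 1 / √((1 + r : ℕ) : ℝ)
      ≤ ∑ r ∈ range (Q - 1), (2 * √((r + 1 : ℕ) : ℝ) - 2 * √(r : ℝ)) :=
        sum_le_sum fun r _ => by rw [add_comm 1 r]; exact one_div_sqrt_add_one_le r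
    _ = 2 * √((Q - 1 : ℕ) : ℝ) := by
        rw [sum_range_sub (fun r : ℕ => 2 * √(r : ℝ))]; simp
    _ ≤ _ := by gcongr; exact Q.sub_le 1

section

variable {ι : Type*} {I : Finset ι} {a : ι → ℂ} {b : ℕ → ℂ} {F : ι → ℕ → ℂ} {P : ℝ}

lemma sum_fiberwise_div {α : Type*} [AddCommMonoid α] (K Q : ℕ) (f : ℕ → α) :
    ∑ j ∈ range (K / Q + 1), ∑ k ∈ Icc 1 K with k / Q = j, f k = ∑ k ∈ Icc 1 K, f k :=
  sum_fiberwise_of_maps_to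
    (fun _ hk => mem_range_succ_iff.2 (Nat.div_le_div_right (mem_Icc.1 hk).2)) f

lemma norm_sq_sum_sum_le_sum_blocks (ha : ∀ m ∈ I, ‖a m‖ ≤ P) (K Q : ℕ) :
    ‖∑ m ∈ I, ∑ k ∈ Icc 1 K, a m * b k * F m k‖ ^ 2 ≤
      P ^ 2 * #I * (K / Q + 1 : ℕ) * ∑ j ∈ range (K / Q + 1), ∑ m ∈ I,
        ‖∑ k ∈ Icc 1 K with k / Q = j, b k * F m k‖ ^ 2 := by
  set V : ι → ℕ → ℂ := fun m j => ∑ k ∈ Icc 1 K with k / Q = j, b k * F m k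
  have hsplit : ∀ m, ∑ k ∈ Icc 1 K, a m * b k * F m k =
      ∑ j ∈ range (K / Q + 1), a m * V m j := fun m => by
    simp only [mul_assoc, ← mul_sum, V, sum_fiberwise_div]
  have hnorm : ‖∑ m ∈ I, ∑ k ∈ Icc 1 K, a m * b k * F m k‖ ≤
      ∑ x ∈ I ×ˢ range (K / Q + 1), P * ‖V x.1 x.2‖ := by
    simp only [hsplit]
    rw [← sum_product' (f := fun m j => a m * V m j)]
    refine norm_sum_le_of_le _ fun x hx => ?_
    rw [norm_mul]
    exact mul_le_mul_of_nonneg_right (ha _ (mem_product.1 hx).1) (norm_nonneg _)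
  calc _ ≤ (∑ x ∈ I ×ˢ range (K / Q + 1), P * ‖V x.1 x.2‖) ^ 2 := by gcongr
    _ ≤ _ := sq_sum_le_card_mul_sum_sq
    _ = _ := by
      rw [card_product, card_range, sum_product_right]
      simp only [mul_pow, ← mul_sum]
      push_cast
      ring

lemma sum_norm_sq_sum_mul_eq (S : Finset ℕ) :
    ((∑ m ∈ I, ‖∑ k ∈ S, b k * F m k‖ ^ 2 : ℝ) : ℂ) =
      ∑ k₁ ∈ S, ∑ k₂ ∈ S, b k₁ * (starRingEnd ℂ) (b k₂) *
        ∑ m ∈ I, F m k₁ * (starRingEnd ℂ) (F m k₂) := by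
  have hexpand : ∀ m, (‖∑ k ∈ S, b k * F m k‖ : ℂ) ^ 2 = ∑ k₁ ∈ S, ∑ k₂ ∈ S,
      b k₁ * (starRingEnd ℂ) (b k₂) * (F m k₁ * (starRingEnd ℂ) (F m k₂)) := fun m => by
    rw [← Complex.mul_conj', map_sum, sum_mul_sum]
    refine sum_congr rfl fun k₁ _ => sum_congr rfl fun k₂ _ => ?_
    rw [map_mul]
    ring
  push_cast
  simp only [hexpand, mul_sum]
  rw [sum_comm]
  exact sum_congr rfl fun k₁ _ => sum_comm

lemma sum_norm_sq_sum_mul_le {S : Finset ℕ} (hb : ∀ k ∈ S, ‖b k‖ ≤ P) {Z : ℝ}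
    (hZ : ∀ k₁ ∈ S, ∑ k₂ ∈ S, ‖∑ m ∈ I, F m k₁ * (starRingEnd ℂ) (F m k₂)‖ ≤ Z) :
    ∑ m ∈ I, ‖∑ k ∈ S, b k * F m k‖ ^ 2 ≤ #S * (P ^ 2 * Z) := by
  rw [← Real.norm_of_nonneg (sum_nonneg fun m _ => sq_nonneg ‖∑ k ∈ S, b k * F m k‖),
    ← Complex.norm_real, sum_norm_sq_sum_mul_eq, ← nsmul_eq_mul, ← sum_const]
  refine norm_sum_le_of_le _ fun k₁ hk₁ => ?_
  refine (norm_sum_le_of_le (f := fun k₂ => b k₁ * (starRingEnd ℂ) (b k₂) * _) _ fun k₂ hk₂ =>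
    ?_).trans ((mul_sum S _ (P ^ 2)).symm.trans_le (mul_le_mul_of_nonneg_left (hZ k₁ hk₁)
      (sq_nonneg P)))
  have hP : 0 ≤ P := (norm_nonneg _).trans (hb k₁ hk₁)
  rw [norm_mul, norm_mul, RCLike.norm_conj, sq]
  gcongr
  exacts [hb k₁ hk₁, hb k₂ hk₂]

lemma card_filter_dist_eq_le_two (S : Finset ℕ) (k r : ℕ) : #{l ∈ S | k.dist l = r} ≤ 2 := by
  refine (card_le_card fun l hl => ?_).trans (card_le_two (a := k - r) (b := k + r))
  have hdist := (mem_filter.1 hl).2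
  rw [mem_insert, mem_singleton]
  unfold Nat.dist at hdist
  omega

lemma sum_le_add_two_mul_sum_dist {S : Finset ℕ} {f φ : ℕ → ℝ} {A : ℝ} {k Q : ℕ} (hk : k ∈ S)
    (hS : ∀ l ∈ S, k.dist l < Q) (hφ : ∀ r, 0 ≤ φ r) (hA : f k ≤ A)
    (hf : ∀ l ∈ S, l ≠ k → f l ≤ φ (k.dist l)) :
    ∑ l ∈ S, f l ≤ A + 2 * ∑ r ∈ Ico 1 Q, φ r := by
  have hmaps : ∀ l ∈ S.erase k, k.dist l ∈ Ico 1 Q := fun l hl =>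
    mem_Ico.2 ⟨Nat.dist_pos_of_ne (ne_of_mem_erase hl).symm, hS l (mem_of_mem_erase hl)⟩
  rw [← add_sum_erase S f hk, mul_sum]
  refine add_le_add hA ?_
  calc ∑ l ∈ S.erase k, f l ≤ ∑ l ∈ S.erase k, φ (k.dist l) :=
        sum_le_sum fun l hl => hf l (mem_of_mem_erase hl) (ne_of_mem_erase hl)
    _ = ∑ r ∈ Ico 1 Q, #{l ∈ S.erase k | k.dist l = r} • φ r :=
        (sum_fiberwise_of_maps_to' hmaps φ).symm.trans (sum_congr rfl fun r _ => sum_const _)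
    _ ≤ ∑ r ∈ Ico 1 Q, 2 * φ r := sum_le_sum fun r _ => by
        rw [nsmul_eq_mul]
        exact mul_le_mul_of_nonneg_right
          (by exact_mod_cast card_filter_dist_eq_le_two (S.erase k) k r) (hφ r)

lemma dist_lt_of_div_eq {k l Q : ℕ} (hQ : 0 < Q) (h : k / Q = l / Q) : k.dist l < Q := by
  have hk := Nat.div_add_mod k Q
  have hl := Nat.div_add_mod l Q
  have := Nat.mod_lt k hQ
  have := Nat.mod_lt l hQ
  rw [h] at hk
  unfold Nat.dist
  omega

lemma norm_sum_mul_conj_le_dist {φ : ℕ → ℝ}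
    (hφ : ∀ k₁ k₂ : ℕ, 0 < k₂ → k₂ < k₁ →
      ‖∑ m ∈ I, F m k₁ * (starRingEnd ℂ) (F m k₂)‖ ≤ φ (k₁ - k₂))
    {k₁ k₂ : ℕ} (hk₁ : 0 < k₁) (hk₂ : 0 < k₂) (hne : k₂ ≠ k₁) :
    ‖∑ m ∈ I, F m k₁ * (starRingEnd ℂ) (F m k₂)‖ ≤ φ (k₁.dist k₂) := by
  obtain h | h := hne.lt_or_gt
  · rw [Nat.dist_eq_sub_of_le_right h.le]
    exact hφ k₁ k₂ hk₂ h
  · rw [Nat.dist_eq_sub_of_le h.le, ← RCLike.norm_conj, map_sum]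
    simpa only [map_mul, Complex.conj_conj, mul_comm] using hφ k₂ k₁ hk₁ h

/-- Cauchy's inequality over blocks of `Q` consecutive `k`, followed by expanding the square: only
correlations at distance less than `Q` enter. -/
theorem norm_sq_sum_sum_mul_le {K Q : ℕ} {φ : ℕ → ℝ} (ha : ∀ m ∈ I, ‖a m‖ ≤ P)
    (hb : ∀ k, ‖b k‖ ≤ P) (hF : ∀ m k, ‖F m k‖ ≤ P) (hQ : 0 < Q) (hφ₀ : ∀ r, 0 ≤ φ r)
    (hφ : ∀ k₁ ∈ Icc 1 K, ∀ k₂ ∈ Icc 1 K, k₂ ≠ k₁ →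
      ‖∑ m ∈ I, F m k₁ * (starRingEnd ℂ) (F m k₂)‖ ≤ φ (k₁.dist k₂)) :
    ‖∑ m ∈ I, ∑ k ∈ Icc 1 K, a m * b k * F m k‖ ^ 2 ≤
      P ^ 2 * #I * (K / Q + 1 : ℕ) *
        (K * (P ^ 2 * (#I * P ^ 2 + 2 * ∑ r ∈ Ico 1 Q, φ r))) := by
  refine (norm_sq_sum_sum_le_sum_blocks ha K Q).trans
    (mul_le_mul_of_nonneg_left ?_ (by positivity))
  have hdiag : ∀ k, ‖∑ m ∈ I, F m k * (starRingEnd ℂ) (F m k)‖ ≤ #I * P ^ 2 := fun k => by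
    refine (norm_sum_le_of_le I fun m _ => ?_).trans_eq (by rw [sum_const, nsmul_eq_mul])
    rw [norm_mul, RCLike.norm_conj, ← sq]
    exact pow_le_pow_left₀ (norm_nonneg _) (hF m k) 2
  have hblock : ∀ j, ∑ m ∈ I, ‖∑ k ∈ Icc 1 K with k / Q = j, b k * F m k‖ ^ 2 ≤
      ∑ k ∈ Icc 1 K with k / Q = j, P ^ 2 * (#I * P ^ 2 + 2 * ∑ r ∈ Ico 1 Q, φ r) := fun j => by
    rw [sum_const, nsmul_eq_mul]
    refine sum_norm_sq_sum_mul_le (fun k _ => hb k) fun k₁ hk₁ =>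
      sum_le_add_two_mul_sum_dist hk₁ (fun k₂ hk₂ => ?_) hφ₀ (hdiag k₁) fun k₂ hk₂ hne => ?_
    · exact dist_lt_of_div_eq hQ ((mem_filter.1 hk₁).2.trans (mem_filter.1 hk₂).2.symm)
    · exact hφ k₁ (mem_filter.1 hk₁).1 k₂ (mem_filter.1 hk₂).1 hne
  refine (sum_le_sum fun j _ => hblock j).trans_eq ?_
  rw [sum_fiberwise_div, sum_const, Nat.card_Icc, nsmul_eq_mul, add_tsub_cancel_right]

end

lemma sum_sqrt_mul_add_div_sqrt_mul_le {y M : ℝ} (hy : 0 ≤ y) (hM : 0 ≤ M) (Q : ℕ) :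
    ∑ r ∈ Ico 1 Q, (√(y * r) + M / √(y * r)) ≤
      √y * (Q * √(Q : ℝ)) + M / √y * (2 * √(Q : ℝ)) := by
  have hsplit : ∀ r : ℕ, √(y * r) + M / √(y * r) = √y * √(r : ℝ) + M / √y * (1 / √(r : ℝ)) :=
    fun r => by rw [Real.sqrt_mul hy, div_mul_div_comm, mul_one]
  rw [sum_congr rfl fun r _ => hsplit r, sum_add_distrib, ← mul_sum, ← mul_sum]
  gcongr
  exacts [sum_sqrt_Ico_le Q, sum_one_div_sqrt_Ico_le Q]

lemma natCast_floor_div_le {X : ℝ} (hX : 0 ≤ X) (M : ℕ) : ((⌊X⌋₊ / M : ℕ) : ℝ) ≤ X / M :=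
  Nat.cast_div_le.trans (by gcongr; exact Nat.floor_le hX)

lemma natCast_floor_div_div_add_one_le {X : ℝ} {M Q : ℕ} (hX : 0 ≤ X) (hQ : 0 < Q)
    (hQX : (Q : ℝ) ≤ X / M) : ((⌊X⌋₊ / M / Q + 1 : ℕ) : ℝ) ≤ 2 * (X / M / Q) := by
  have hfloor : ((⌊X⌋₊ / M / Q : ℕ) : ℝ) ≤ X / M / Q :=
    Nat.cast_div_le.trans (by gcongr; exact natCast_floor_div_le hX M)
  have hone : 1 ≤ X / M / Q := by rwa [one_le_div₀ (by exact_mod_cast hQ)]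
  push_cast
  linarith

lemma sq_bilinear_bound_le {M n q t P D C : ℝ} (hM : 0 < M) (hn : 0 < n) (hq : 0 < q)
    (ht : 0 < t) (hP : 1 ≤ P) (hC : 1 ≤ C) :
    P ^ 2 * M * (2 * (n ^ 2 / q ^ 2)) * (n ^ 2 * (P ^ 2 * (M * P ^ 2 +
        2 * ((2 * D) ^ 2 * (C * (t / n * (q ^ 2 * q) + M / (t / n) * (2 * q))))))) ≤
      32 * C * P ^ 6 * (M * n ^ 2) *
        (M * n ^ 2 / q ^ 2 + D ^ 2 * (n * t * q) + D ^ 2 * (M * n ^ 2) * (n / (t * q))) := by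
  have hP2 : 1 ≤ P ^ 2 := one_le_pow₀ hP
  have hCP : C ≤ C * P ^ 2 := le_mul_of_one_le_right (by linarith) hP2
  calc _ = 2 * P ^ 4 * (M * n ^ 2) * (P ^ 2 * (M * n ^ 2 / q ^ 2) +
          8 * C * (D ^ 2 * (n * t * q)) + 16 * C * (D ^ 2 * (M * n ^ 2) * (n / (t * q)))) := by
        field_simp
        ring
    _ ≤ 2 * P ^ 4 * (M * n ^ 2) * (16 * C * P ^ 2 * (M * n ^ 2 / q ^ 2) +
          16 * C * P ^ 2 * (D ^ 2 * (n * t * q)) +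
          16 * C * P ^ 2 * (D ^ 2 * (M * n ^ 2) * (n / (t * q)))) := by
        gcongr ?_ * (?_ * _ + ?_ * _ + ?_ * _) <;> nlinarith
    _ = _ := by ring

lemma bilinear_bound_le {M N Q T P D C : ℝ} (hM : 0 < M) (hN : 0 < N) (hQ : 0 < Q)
    (hT : 0 < T) (hP : 1 ≤ P) (hC : 1 ≤ C) :
    P ^ 2 * M * (2 * (N / Q)) * (N * (P ^ 2 * (M * P ^ 2 +
        2 * ((2 * D) ^ 2 * (C * (√(T / N) * (Q * √Q) + M / √(T / N) * (2 * √Q))))))) ≤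
      32 * C * P ^ 6 * (M * N) *
        (M * N / Q + D ^ 2 * √(N * T * Q) + D ^ 2 * (M * N) * √(N / (T * Q))) := by
  rw [Real.sqrt_div hT.le, Real.sqrt_div hN.le, Real.sqrt_mul hT.le,
    Real.sqrt_mul (mul_pos hN hT).le, Real.sqrt_mul hN.le]
  simpa only [Real.sq_sqrt hN.le, Real.sq_sqrt hQ.le] using sq_bilinear_bound_le (D := D) hM
    (Real.sqrt_pos.2 hN) (Real.sqrt_pos.2 hQ) (Real.sqrt_pos.2 hT) hP hC

lemma exists_norm_sum_siftedPhase_mul_conj_le_dist {c μ : ℝ} (hc₁ : 1 < c) (hc₂ : c ≤ 2)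
    (hμ₀ : 0 < μ) (hμ₁ : μ ≤ 1) :
    ∃ C ≥ 1, ∀ (X θ D : ℝ) (lam : ℕ → ℝ) (M k₁ k₂ : ℕ), IsSieveWeight D lam → 0 < X →
      θ ≠ 0 → 1 ≤ D → 0 < M → 0 < k₁ → 0 < k₂ → k₂ ≠ k₁ →
      ‖∑ m ∈ Ico M (2 * M), siftedPhase c θ D lam ⌊μ * X⌋₊ ⌊X⌋₊ (m * k₁) *
          (starRingEnd ℂ) (siftedPhase c θ D lam ⌊μ * X⌋₊ ⌊X⌋₊ (m * k₂))‖ ≤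
        (2 * D) ^ 2 * (C * (√(|θ| * X ^ c / (X / M) * k₁.dist k₂) +
          M / √(|θ| * X ^ c / (X / M) * k₁.dist k₂))) := by
  obtain ⟨C, hC, hcorr⟩ := exists_norm_sum_siftedPhase_mul_conj_le hc₁ hc₂ hμ₀ hμ₁
  refine ⟨C, hC, fun X θ D lam M k₁ k₂ hlam hX hθ hD hM hk₁ hk₂ hne => ?_⟩
  refine norm_sum_mul_conj_le_dist (I := Ico M (2 * M))
    (F := fun m k => siftedPhase c θ D lam ⌊μ * X⌋₊ ⌊X⌋₊ (m * k))
    (φ := fun r => (2 * D) ^ 2 * (C * (√(|θ| * X ^ c / (X / M) * r) +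
      M / √(|θ| * X ^ c / (X / M) * r)))) (fun k₁ k₂ hk₂ hk => ?_) hk₁ hk₂ hne
  have : (0 : ℝ) < M := by exact_mod_cast hM
  have hfreq : |θ| * X ^ (c - 1) * M = |θ| * X ^ c / (X / M) := by
    rw [Real.rpow_sub_one hX.ne']; field_simp
  have hD' : (⌊D⌋₊ + 1 : ℝ) ≤ 2 * D := by linarith [Nat.floor_le (zero_le_one.trans hD)]
  refine (hcorr X θ D lam M k₁ k₂ hlam hX hθ hM hk₂ hk).trans ?_
  rw [hfreq, Nat.cast_sub hk.le]
  gcongr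

theorem exists_norm_sq_bilinear_siftedPhase_le {c μ : ℝ} (hc₁ : 1 < c) (hc₂ : c ≤ 2)
    (hμ₀ : 0 < μ) (hμ₁ : μ ≤ 1) :
    ∃ C ≥ 1, ∀ (X θ D P : ℝ) (lam : ℕ → ℝ) (a b : ℕ → ℂ) (M Q : ℕ), IsSieveWeight D lam →
      0 < X → θ ≠ 0 → 1 ≤ D → 1 ≤ P → 0 < M → 0 < Q → (Q : ℝ) ≤ X / M → (∀ m, ‖a m‖ ≤ P) →
      (∀ k, ‖b k‖ ≤ P) → (∀ n, ⌊μ * X⌋₊ < n → n ≤ ⌊X⌋₊ → |sieveConv D lam n| ≤ P) →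
      ‖∑ m ∈ Ico M (2 * M), ∑ k ∈ Icc 1 (⌊X⌋₊ / M),
          a m * b k * siftedPhase c θ D lam ⌊μ * X⌋₊ ⌊X⌋₊ (m * k)‖ ^ 2 ≤
        C * P ^ 6 * X * (X / Q + D ^ 2 * √(X / M * (|θ| * X ^ c) * Q) +
          D ^ 2 * X * √(X / M / (|θ| * X ^ c * Q))) := by
  obtain ⟨C, hC, hcorr⟩ := exists_norm_sum_siftedPhase_mul_conj_le_dist hc₁ hc₂ hμ₀ hμ₁
  refine ⟨32 * C, by linarith, ?_⟩
  intro X θ D P lam a b M Q hlam hX hθ hD hP hM hQ hQX ha hb hsieve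
  have hM' : (0 : ℝ) < M := by exact_mod_cast hM
  have hQ' : (0 : ℝ) < Q := by exact_mod_cast hQ
  set T := |θ| * X ^ c
  have hT : 0 < T := by positivity
  refine (norm_sq_sum_sum_mul_le (F := fun m k => siftedPhase c θ D lam ⌊μ * X⌋₊ ⌊X⌋₊ (m * k))
    (φ := fun r => (2 * D) ^ 2 * (C * (√(T / (X / M) * r) + M / √(T / (X / M) * r))))
    (fun m _ => ha m) hb (fun m k => norm_siftedPhase_le (by linarith) hsieve (m * k)) hQ
    (fun r => by positivity) fun k₁ hk₁ k₂ hk₂ hne => hcorr X θ D lam M k₁ k₂ hlam hX hθ hD hM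
      (mem_Icc.1 hk₁).1 (mem_Icc.1 hk₂).1 hne).trans ?_
  have hfinal := bilinear_bound_le (D := D) hM' (div_pos hX hM') hQ' hT hP hC
  rw [mul_div_cancel₀ _ hM'.ne'] at hfinal
  refine le_trans ?_ hfinal
  rw [← mul_sum, ← mul_sum, Nat.card_Ico, two_mul M, add_tsub_cancel_right]
  gcongr
  · exact natCast_floor_div_div_add_one_le hX.le hQ hQX
  · exact natCast_floor_div_le hX.le M
  · exact sum_sqrt_mul_add_div_sqrt_mul_le (by positivity) hM'.le Q

/-! ### Bilinear sums at the scale of the theorem -/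

/-- The small exponent `ε` that is saved at each stage. The sieve level `X ^ ((17 - 16 c) / 32)` is
`X ^ (500 ε)`. -/
noncomputable def savingExp (c : ℝ) : ℝ := (17 / 16 - c) / 1000

lemma savingExp_pos {c : ℝ} (hc : c < 17 / 16) : 0 < savingExp c :=
  div_pos (sub_pos.2 hc) (by norm_num)

lemma eq_sub_mul_savingExp (c : ℝ) : c = 17 / 16 - 1000 * savingExp c := by
  unfold savingExp; ring

/-- The width of the windows of fractional parts on which `e(-α {t})` is smoothed. It is also the
reciprocal of the frequency beyond which exponential sums are allowed to lose. -/
noncomputable def fractWindow (c X : ℝ) : ℝ := X ^ (1 - c - 20 * savingExp c)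

lemma fractWindow_pos {X : ℝ} (hX : 0 < X) (c : ℝ) : 0 < fractWindow c X :=
  Real.rpow_pos_of_pos hX _

/-- The sifted phase with the level and the range of the theorem. -/
noncomputable def scaledPhase (c μ θ : ℝ) (lam : ℕ → ℝ) (X : ℝ) (n : ℕ) : ℂ :=
  siftedPhase c θ (X ^ ((17 - 16 * c) / 32)) lam ⌊μ * X⌋₊ ⌊X⌋₊ n

lemma scaledPhase_eq_zero {c μ θ X : ℝ} {lam : ℕ → ℝ} {n : ℕ}
    (hn : ¬(⌊μ * X⌋₊ < n ∧ n ≤ ⌊X⌋₊)) : scaledPhase c μ θ lam X n = 0 := by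
  rw [scaledPhase, siftedPhase, if_neg hn]

lemma eventually_le_rpow (C : ℝ) {ε : ℝ} (hε : 0 < ε) : ∀ᶠ X : ℝ in atTop, C ≤ X ^ ε :=
  (tendsto_rpow_atTop hε).eventually_ge_atTop C

lemma sqrt_rpow {X : ℝ} (hX : 0 ≤ X) (u : ℝ) : √(X ^ u) = X ^ (u / 2) := by
  rw [Real.sqrt_eq_rpow, ← Real.rpow_mul hX, mul_one_div]

lemma abs_sieveConv_le_card_divisors {D : ℝ} {lam : ℕ → ℝ} (hlam : IsSieveWeight D lam) (n : ℕ) :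
    |sieveConv D lam n| ≤ #(n + 2).divisors := by
  refine (abs_sum_le_sum_abs _ _).trans ((sum_le_card_nsmul _ _ 1 fun d _ => hlam.1 d).trans ?_)
  rw [nsmul_one]
  exact_mod_cast card_le_card fun d hd => Nat.mem_divisors.2 ⟨(mem_filter.1 hd).2, by omega⟩

lemma eventually_abs_sieveConv_le {ε : ℝ} (hε : 0 < ε) :
    ∀ᶠ X : ℝ in atTop, ∀ (D : ℝ) (lam : ℕ → ℝ), IsSieveWeight D lam →
      ∀ n ≤ ⌊X⌋₊, |sieveConv D lam n| ≤ X ^ ε := by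
  obtain ⟨C, hC, hdiv⟩ := exists_card_divisors_le_mul_rpow (half_pos hε)
  filter_upwards [eventually_le_rpow (C * 3 ^ (ε / 2)) (half_pos hε), eventually_ge_atTop 1]
    with X hCX hX₁ D lam hlam n hn
  have hX : 0 < X := zero_lt_one.trans_le hX₁
  have hnX : ((n + 2 : ℕ) : ℝ) ≤ 3 * X := by
    push_cast
    linarith [(Nat.le_floor_iff hX.le).1 hn]
  calc |sieveConv D lam n| ≤ C * ((n + 2 : ℕ) : ℝ) ^ (ε / 2) :=
        (abs_sieveConv_le_card_divisors hlam n).trans (hdiv _ (by omega))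
    _ ≤ C * (3 * X) ^ (ε / 2) := by gcongr
    _ = C * 3 ^ (ε / 2) * X ^ (ε / 2) := by rw [Real.mul_rpow (by norm_num) hX.le, mul_assoc]
    _ ≤ X ^ (ε / 2) * X ^ (ε / 2) := by gcongr
    _ = X ^ ε := by rw [← Real.rpow_add hX, add_halves]

lemma exists_nat_blockLength {A₁ A₂ N T : ℝ} (hA₁ : 1 ≤ A₁) (hA₂ : 0 ≤ A₂) (hN : 4 * A₁ ≤ N)
    (hT₀ : 0 < T) (hT : 4 * A₂ ≤ T) :
    ∃ Q : ℕ, A₁ ≤ Q ∧ A₂ * (N / T) ≤ Q ∧ (Q : ℝ) ≤ 2 * (A₁ + A₂ * (N / T)) ∧ (Q : ℝ) ≤ N := by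
  have hA₂N : 0 ≤ A₂ * (N / T) := mul_nonneg hA₂ (div_nonneg (by linarith) hT₀.le)
  have hA₂N' : A₂ * (N / T) ≤ N / 4 := by
    rw [mul_div_assoc', div_le_iff₀ hT₀]
    nlinarith
  have hle := Nat.le_ceil (A₁ + A₂ * (N / T))
  have hlt := Nat.ceil_lt_add_one (show 0 ≤ A₁ + A₂ * (N / T) by linarith)
  exact ⟨⌈A₁ + A₂ * (N / T)⌉₊, by linarith, by linarith, by linarith, by linarith⟩

lemma sqrt_div_mul_le {A N T Q : ℝ} (hA : 0 < A) (hT : 0 < T) (hQ : 0 < Q)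
    (hAQ : A * (N / T) ≤ Q) : √(N / (T * Q)) ≤ √A⁻¹ := by
  refine Real.sqrt_le_sqrt ?_
  rw [div_le_iff₀ (mul_pos hT hQ)]
  calc N = A⁻¹ * (T * (A * (N / T))) := by field_simp
    _ ≤ A⁻¹ * (T * Q) := by gcongr

lemma mul_mul_blockLength_le {A₁ A₂ C N N₀ T T₀ R Q : ℝ} (hA₁ : 0 ≤ A₁) (hA₂ : 0 ≤ A₂)
    (hC : 0 ≤ C) (hN : 0 ≤ N) (hN₀ : 0 ≤ N₀) (hT : 0 < T) (hT₀ : 0 ≤ T₀) (hR : 1 ≤ R)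
    (hNC : N ≤ C * N₀) (hTR : T ≤ R * T₀) (hA : A₂ * N₀ ≤ A₁ * T₀)
    (hQ : Q ≤ 2 * (A₁ + A₂ * (N / T))) :
    N * T * Q ≤ (2 * C + 2 * C ^ 2) * (R ^ 2 * (N₀ * T₀ * A₁)) := by
  have hR2 : R ≤ R ^ 2 := le_self_pow₀ hR two_ne_zero
  have hfirst : N * T * A₁ ≤ C * (R ^ 2 * (N₀ * T₀ * A₁)) := calc
    N * T * A₁ ≤ C * N₀ * (R ^ 2 * T₀) * A₁ := by
      gcongr
      exact hTR.trans (by gcongr)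
    _ = _ := by ring
  have hsecond : A₂ * N ^ 2 ≤ C ^ 2 * (R ^ 2 * (N₀ * T₀ * A₁)) := calc
    A₂ * N ^ 2 ≤ A₂ * (C * N₀) ^ 2 := by gcongr
    _ = C ^ 2 * (1 * (N₀ * (A₂ * N₀))) := by ring
    _ ≤ C ^ 2 * (R ^ 2 * (N₀ * (A₁ * T₀))) := by
      gcongr
      linarith
    _ = _ := by ring
  calc N * T * Q ≤ N * T * (2 * (A₁ + A₂ * (N / T))) := by gcongr
    _ = 2 * (N * T * A₁) + 2 * (A₂ * N ^ 2) := by field_simp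
    _ ≤ _ := by linarith

lemma abs_mul_rpow_le_one_add_mul {X : ℝ} (hX : 0 < X) (c θ : ℝ) :
    |θ| * X ^ c ≤ (1 + |θ| * fractWindow c X) * X ^ (2 * c - 1 + 20 * savingExp c) := by
  have hsplit : X ^ c = fractWindow c X * X ^ (2 * c - 1 + 20 * savingExp c) := by
    rw [fractWindow, ← Real.rpow_add hX]
    ring_nf
  rw [hsplit, ← mul_assoc]
  gcongr
  linarith

lemma mul_rpow_le_rpow {C X ε u v : ℝ} (hX : 1 ≤ X) (hC : C ≤ X ^ ε) (huv : ε + u ≤ v) :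
    C * X ^ u ≤ X ^ v := by
  have hX₀ : 0 < X := zero_lt_one.trans_le hX
  calc C * X ^ u ≤ X ^ ε * X ^ u := by gcongr
    _ = X ^ (ε + u) := (Real.rpow_add hX₀ _ _).symm
    _ ≤ X ^ v := Real.rpow_le_rpow_of_exponent_le hX huv

lemma sieveLevel_sq {X : ℝ} (hX : 0 ≤ X) (c : ℝ) :
    (X ^ ((17 - 16 * c) / 32)) ^ 2 = X ^ (1000 * savingExp c) := by
  rw [← Real.rpow_mul_natCast hX, savingExp]
  ring_nf

/-- Take `Q` of size `X ^ (2c - 2 + 100 ε) + X ^ (4c - 4 + 2100 ε) N / T`: the first summand makes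
the first bound hold, the second one the third bound. -/
lemma exists_blockLength_bounds {c C X N T R : ℝ} (hc₁ : 1 < c) (hc₂ : c < 17 / 16) (hC : 0 ≤ C)
    (hX : 1 ≤ X) (hX₄ : 4 ≤ X ^ savingExp c) (hXC : 2 * C + 2 * C ^ 2 ≤ X ^ savingExp c)
    (hN : X ^ (1 / 8 : ℝ) ≤ N) (hNC : N ≤ C * X ^ (1 / 2 : ℝ)) (hT : X ^ ((16 * c - 5) / 32) ≤ T)
    (hR : 1 ≤ R) (hTR : T ≤ R * X ^ (2 * c - 1 + 20 * savingExp c)) :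
    ∃ Q : ℕ, 0 < Q ∧ (Q : ℝ) ≤ N ∧ X / Q ≤ X ^ (3 - 2 * c - 50 * savingExp c) ∧
      (X ^ ((17 - 16 * c) / 32)) ^ 2 * √(N * T * Q) ≤ R * X ^ (3 - 2 * c - 50 * savingExp c) ∧
      (X ^ ((17 - 16 * c) / 32)) ^ 2 * X * √(N / (T * Q)) ≤
        X ^ (3 - 2 * c - 50 * savingExp c) := by
  have hε := savingExp_pos hc₂
  have hcε := eq_sub_mul_savingExp c
  have hX₀ : 0 < X := zero_lt_one.trans_le hX
  have hT₀ : 0 < T := (Real.rpow_pos_of_pos hX₀ _).trans_le hT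
  have hN₀ : 0 < N := (Real.rpow_pos_of_pos hX₀ _).trans_le hN
  rw [sieveLevel_sq hX₀.le]
  set ε := savingExp c
  obtain ⟨Q, hQ₁, hQ₂, hQ_le, hQN⟩ := exists_nat_blockLength
    (A₁ := X ^ (2 * c - 2 + 100 * ε)) (A₂ := X ^ (4 * c - 4 + 2100 * ε))
    (Real.one_le_rpow hX (by linarith)) (by positivity)
    ((mul_rpow_le_rpow hX hX₄ (by linarith)).trans hN) hT₀
    ((mul_rpow_le_rpow hX hX₄ (by linarith)).trans hT)
  have hQ : (0 : ℝ) < Q := (Real.rpow_pos_of_pos hX₀ _).trans_le hQ₁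
  refine ⟨Q, by exact_mod_cast hQ, hQN, ?_, ?_, ?_⟩
  · calc X / Q ≤ X / X ^ (2 * c - 2 + 100 * ε) := by gcongr
      _ = X ^ (1 - (2 * c - 2 + 100 * ε)) := by rw [Real.rpow_sub hX₀, Real.rpow_one]
      _ ≤ _ := Real.rpow_le_rpow_of_exponent_le hX (by linarith)
  · have hNTQ := mul_mul_blockLength_le (by positivity) (by positivity) hC hN₀.le (by positivity)
      hT₀ (by positivity) hR hNC hTR (by
        rw [← Real.rpow_add hX₀, ← Real.rpow_add hX₀]
        exact Real.rpow_le_rpow_of_exponent_le hX (by linarith)) hQ_le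
    rw [← Real.rpow_add hX₀, ← Real.rpow_add hX₀] at hNTQ
    calc _ ≤ X ^ (1000 * ε) * √(R ^ 2 * X ^ (4 * c - 5 / 2 + 121 * ε)) := by
          refine mul_le_mul_of_nonneg_left (Real.sqrt_le_sqrt (hNTQ.trans ?_)) (by positivity)
          rw [mul_left_comm]
          gcongr
          exact mul_rpow_le_rpow hX hXC (by linarith)
      _ = R * X ^ (1000 * ε + (4 * c - 5 / 2 + 121 * ε) / 2) := by
          rw [Real.sqrt_mul (sq_nonneg R), Real.sqrt_sq (by linarith), sqrt_rpow hX₀.le,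
            mul_left_comm, Real.rpow_add hX₀]
      _ ≤ _ := by
          gcongr
          linarith
  · calc _ ≤ X ^ (1000 * ε) * X * √(X ^ (4 * c - 4 + 2100 * ε))⁻¹ :=
          mul_le_mul_of_nonneg_left (sqrt_div_mul_le (by positivity) hT₀ hQ hQ₂) (by positivity)
      _ = X ^ (1000 * ε + 1 + -(4 * c - 4 + 2100 * ε) / 2) := by
          rw [← Real.rpow_neg hX₀.le, sqrt_rpow hX₀.le, Real.rpow_add hX₀, Real.rpow_add hX₀,
            Real.rpow_one]
      _ ≤ _ := Real.rpow_le_rpow_of_exponent_le hX (by linarith)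

lemma eventually_norm_sq_bilinear_scaledPhase_le {c μ : ℝ} (hc₁ : 1 < c) (hc₂ : c < 17 / 16)
    (hμ₀ : 0 < μ) (hμ₁ : μ ≤ 1) {K : ℝ} (hK : 0 ≤ K) :
    ∀ᶠ X : ℝ in atTop, ∀ (θ : ℝ) (lam : ℕ → ℝ) (a b : ℕ → ℂ) (M : ℕ),
      IsSieveWeight (X ^ ((17 - 16 * c) / 32)) lam → X ^ ((16 * c - 5) / 32) ≤ |θ| * X ^ c →
      0 < M → X ^ (1 / 8 : ℝ) ≤ X / M → X / M ≤ K * X ^ (1 / 2 : ℝ) →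
      (∀ m, ‖a m‖ ≤ X ^ savingExp c) → (∀ k, ‖b k‖ ≤ X ^ savingExp c) →
      ‖∑ m ∈ Ico M (2 * M), ∑ k ∈ Icc 1 (⌊X⌋₊ / M), a m * b k * scaledPhase c μ θ lam X (m * k)‖ ^ 2
        ≤ X ^ (4 - 2 * c - 40 * savingExp c) * (1 + |θ| * fractWindow c X) := by
  have hε := savingExp_pos hc₂
  obtain ⟨C, hC, hbilinear⟩ :=
    exists_norm_sq_bilinear_siftedPhase_le hc₁ (by linarith : c ≤ 2) hμ₀ hμ₁
  filter_upwards [eventually_le_rpow 4 hε, eventually_le_rpow (2 * K + 2 * K ^ 2) hε,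
    eventually_le_rpow (3 * C) hε, eventually_abs_sieveConv_le hε, eventually_ge_atTop 1]
    with X hX₄ hXK hXC hsieve hX θ lam a b M hlam hT hM hN hNK ha hb
  have hX₀ : 0 < X := zero_lt_one.trans_le hX
  have hθ : θ ≠ 0 := by
    rintro rfl
    rw [abs_zero, zero_mul] at hT
    exact (Real.rpow_pos_of_pos hX₀ _).not_ge hT
  set R := 1 + |θ| * fractWindow c X
  have hR : 1 ≤ R :=
    le_add_of_nonneg_right (mul_nonneg (abs_nonneg θ) (fractWindow_pos hX₀ c).le)
  obtain ⟨Q, hQ, hQN, hdiag, hrising, hfalling⟩ := exists_blockLength_bounds hc₁ hc₂ hK hX hX₄ hXK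
    hN hNK hT hR (abs_mul_rpow_le_one_add_mul hX₀ c θ)
  refine (hbilinear X θ _ (X ^ savingExp c) lam a b M Q hlam hX₀ hθ
    (Real.one_le_rpow hX (by linarith)) (Real.one_le_rpow hX hε.le) hM hQ hQN ha hb
    fun n _ hn => hsieve _ lam hlam n hn).trans ?_
  set ε := savingExp c
  set E := X ^ (3 - 2 * c - 50 * ε)
  have hE : E ≤ R * E := le_mul_of_one_le_left (by positivity) hR
  calc _ ≤ C * (X ^ ε) ^ 6 * X * (R * E + R * E + R * E) := by
        gcongr ?_ * (?_ + ?_ + ?_)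
        exacts [hdiag.trans hE, hfalling.trans hE]
    _ = 3 * C * X ^ (6 * ε + 1 + (3 - 2 * c - 50 * ε)) * R := by
        rw [← Real.rpow_mul_natCast hX₀.le, Real.rpow_add hX₀, Real.rpow_add hX₀, Real.rpow_one]
        push_cast
        rw [mul_comm (6 : ℝ)]
        ring
    _ ≤ _ := by
        gcongr
        exact mul_rpow_le_rpow hX hXC (by linarith)

lemma eventually_mul_one_add_log_le_rpow (C : ℝ) {ε : ℝ} (hε : 0 < ε) :
    ∀ᶠ X : ℝ in atTop, C * (1 + Real.log X) ≤ X ^ ε := by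
  have hlittleO : (fun X : ℝ => C * (1 + Real.log X)) =o[atTop] fun X => X ^ ε := by
    refine Asymptotics.IsLittleO.const_mul_left (.add ?_ (isLittleO_log_rpow_atTop hε)) C
    exact Asymptotics.isLittleO_const_left.2
      (.inr (tendsto_norm_atTop_atTop.comp (tendsto_rpow_atTop hε)))
  filter_upwards [hlittleO.bound one_pos, eventually_ge_atTop 0] with X hX hX₀
  rw [one_mul, Real.norm_of_nonneg (Real.rpow_nonneg hX₀ ε)] at hX
  exact (Real.le_norm_self _).trans hX

lemma eventually_natLog_add_one_le_rpow {ε : ℝ} (hε : 0 < ε) :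
    ∀ᶠ X : ℝ in atTop, ((Nat.log 2 ⌊X⌋₊ + 1 : ℕ) : ℝ) ≤ X ^ ε := by
  filter_upwards [eventually_mul_one_add_log_le_rpow 2 hε, eventually_ge_atTop 1] with X hlog hX
  have hfloor : (1 : ℝ) ≤ ⌊X⌋₊ := by exact_mod_cast Nat.one_le_floor_iff _ |>.2 hX
  have hlogb : Real.logb 2 ⌊X⌋₊ ≤ 2 * Real.log X := by
    rw [Real.logb, div_le_iff₀ (Real.log_pos one_lt_two)]
    have hmono := Real.log_le_log (by linarith) (Nat.floor_le (show 0 ≤ X by linarith))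
    nlinarith [Real.log_two_gt_d9, Real.log_nonneg hX]
  have hnatLog : (Nat.log 2 ⌊X⌋₊ : ℝ) ≤ Real.logb 2 ⌊X⌋₊ := Real.natLog_le_logb _ _
  push_cast
  linarith

lemma sum_range_sum_Ico_two_pow {α : Type*} [AddCommMonoid α] (f : ℕ → α) (n : ℕ) :
    ∑ i ∈ range n, ∑ m ∈ Ico (2 ^ i) (2 * 2 ^ i), f m = ∑ m ∈ Ico 1 (2 ^ n), f m := by
  induction n with
  | zero => simp
  | succ n ih =>
    rw [sum_range_succ, ih, ← pow_succ',
      sum_Ico_consecutive f Nat.one_le_two_pow (Nat.pow_le_pow_right two_pos n.le_succ)]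

lemma sum_sum_eq_sum_dyadic {α : Type*} [AddCommMonoid α] {f : ℕ → ℕ → α} {B : ℕ}
    (hf : ∀ m k, B < m * k → f m k = 0) :
    ∑ m ∈ Icc 1 B, ∑ k ∈ Icc 1 B, f m k =
      ∑ i ∈ range (Nat.log 2 B + 1), ∑ m ∈ Ico (2 ^ i) (2 * 2 ^ i),
        ∑ k ∈ Icc 1 (B / 2 ^ i), f m k := by
  have htruncate (i m : ℕ) (hm : m ∈ Ico (2 ^ i) (2 * 2 ^ i)) :
      ∑ k ∈ Icc 1 (B / 2 ^ i), f m k = ∑ k ∈ Icc 1 B, f m k := by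
    refine sum_subset (Icc_subset_Icc_right (Nat.div_le_self _ _)) fun k hk hk' => hf m k ?_
    rw [mem_Icc, not_and, not_le, Nat.div_lt_iff_lt_mul (by positivity)] at hk'
    calc B < k * 2 ^ i := hk' (mem_Icc.1 hk).1
      _ ≤ m * k := by rw [mul_comm]; exact Nat.mul_le_mul_right k (mem_Ico.1 hm).1
  rw [sum_congr rfl fun i _ => sum_congr rfl (htruncate i),
    sum_range_sum_Ico_two_pow fun m => ∑ k ∈ Icc 1 B, f m k]
  refine sum_subset (fun m hm => ?_) fun m hm hm' => sum_eq_zero fun k hk => hf m k ?_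
  · rw [mem_Icc] at hm
    exact mem_Ico.2 ⟨hm.1, hm.2.trans_lt (Nat.lt_pow_succ_log_self one_lt_two B)⟩
  · rw [mem_Icc, not_and, not_le] at hm'
    exact (hm' (mem_Ico.1 hm).1).trans_le (Nat.le_mul_of_pos_right m (mem_Icc.1 hk).1)

lemma norm_sum_sum_scaledPhase_le_of_dyadic {c μ θ X S : ℝ} {lam : ℕ → ℝ} {a b : ℕ → ℂ}
    (hS : 0 ≤ S)
    (hdyadic : ∀ m k i : ℕ, a m ≠ 0 → b k ≠ 0 → ⌊μ * X⌋₊ < m * k → m * k ≤ ⌊X⌋₊ → 2 ^ i ≤ m →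
      m < 2 * 2 ^ i → ‖∑ m ∈ Ico (2 ^ i) (2 * 2 ^ i), ∑ k ∈ Icc 1 (⌊X⌋₊ / 2 ^ i),
        a m * b k * scaledPhase c μ θ lam X (m * k)‖ ≤ S) :
    ‖∑ m ∈ Icc 1 ⌊X⌋₊, ∑ k ∈ Icc 1 ⌊X⌋₊, a m * b k * scaledPhase c μ θ lam X (m * k)‖ ≤
      (Nat.log 2 ⌊X⌋₊ + 1 : ℕ) * S := by
  rw [sum_sum_eq_sum_dyadic fun m k hmk => by
    rw [scaledPhase_eq_zero fun h => h.2.not_gt hmk, mul_zero]]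
  refine (norm_sum_le_of_le (n := fun _ => S) _ fun i _ => ?_).trans_eq (by simp)
  by_cases hzero : ∀ m ∈ Ico (2 ^ i) (2 * 2 ^ i), ∀ k ∈ Icc 1 (⌊X⌋₊ / 2 ^ i),
      a m * b k * scaledPhase c μ θ lam X (m * k) = 0
  · rwa [sum_eq_zero fun m hm => sum_eq_zero (hzero m hm), norm_zero]
  · push Not at hzero
    obtain ⟨m, hm, k, -, hne⟩ := hzero
    have hmk : ⌊μ * X⌋₊ < m * k ∧ m * k ≤ ⌊X⌋₊ := by
      by_contra hmk
      exact right_ne_zero_of_mul hne (scaledPhase_eq_zero hmk)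
    have hab := left_ne_zero_of_mul hne
    exact hdyadic m k i (left_ne_zero_of_mul hab) (right_ne_zero_of_mul hab) hmk.1 hmk.2
      (mem_Ico.1 hm).1 (mem_Ico.1 hm).2

lemma rpow_half_mul_self {X : ℝ} (hX : 0 ≤ X) : X ^ (1 / 2 : ℝ) * X ^ (1 / 2 : ℝ) = X := by
  rw [← Real.sqrt_eq_rpow, Real.mul_self_sqrt hX]

lemma eventually_norm_bilinear_scaledPhase_le_of_sqrt_le {c μ : ℝ} (hc₁ : 1 < c)
    (hc₂ : c < 17 / 16) (hμ₀ : 0 < μ) (hμ₁ : μ ≤ 1) :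
    ∀ᶠ X : ℝ in atTop, ∀ (θ : ℝ) (lam : ℕ → ℝ) (a b : ℕ → ℂ),
      IsSieveWeight (X ^ ((17 - 16 * c) / 32)) lam → X ^ ((16 * c - 5) / 32) ≤ |θ| * X ^ c →
      (∀ m, ‖a m‖ ≤ X ^ savingExp c) → (∀ k, ‖b k‖ ≤ X ^ savingExp c) →
      (∀ m k : ℕ, a m ≠ 0 → b k ≠ 0 → ⌊μ * X⌋₊ < m * k →
        μ / 2 * X ^ (1 / 2 : ℝ) ≤ m ∧ X ^ (1 / 8 : ℝ) ≤ k) →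
      ‖∑ m ∈ Icc 1 ⌊X⌋₊, ∑ k ∈ Icc 1 ⌊X⌋₊, a m * b k * scaledPhase c μ θ lam X (m * k)‖ ≤
        X ^ (2 - c - 19 * savingExp c) * √(1 + |θ| * fractWindow c X) := by
  have hε := savingExp_pos hc₂
  filter_upwards [eventually_norm_sq_bilinear_scaledPhase_le hc₁ hc₂ hμ₀ hμ₁
    (show 0 ≤ 4 / μ by positivity), eventually_natLog_add_one_le_rpow hε, eventually_ge_atTop 1]
    with X hblock hlog hX θ lam a b hlam hT ha hb hsupp
  have hX₀ : 0 < X := zero_lt_one.trans_le hX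
  have hdyadic := norm_sum_sum_scaledPhase_le_of_dyadic (a := a) (b := b)
    (Real.sqrt_nonneg (X ^ (4 - 2 * c - 40 * savingExp c) * (1 + |θ| * fractWindow c X)))
    fun m k i ham hbk hμX hmX hm₁ hm₂ => by
      obtain ⟨hm, hk⟩ := hsupp m k ham hbk hμX
      have hmX' : (m : ℝ) * k ≤ X := by exact_mod_cast (Nat.le_floor_iff hX₀.le).1 hmX
      have hm₁' : ((2 ^ i : ℕ) : ℝ) ≤ m := by exact_mod_cast hm₁
      have hm₂' : (m : ℝ) ≤ 2 * (2 ^ i : ℕ) := by exact_mod_cast hm₂.le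
      refine Real.le_sqrt_of_sq_le
        (hblock θ lam a b (2 ^ i) hlam hT (by positivity) ?_ ?_ ha hb)
      · rw [le_div_iff₀ (by positivity), mul_comm]
        exact (mul_le_mul hm₁' hk (by positivity) (by positivity)).trans hmX'
      · rw [div_le_iff₀ (by positivity)]
        calc X = 4 / μ * X ^ (1 / 2 : ℝ) * (μ / 4 * X ^ (1 / 2 : ℝ)) := by
              rw [mul_mul_mul_comm, rpow_half_mul_self hX₀.le]
              field_simp
          _ ≤ 4 / μ * X ^ (1 / 2 : ℝ) * (2 ^ i : ℕ) := by
              gcongr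
              linarith
  refine hdyadic.trans ?_
  rw [Real.sqrt_mul (by positivity), sqrt_rpow hX₀.le, ← mul_assoc]
  gcongr
  exact mul_rpow_le_rpow hX hlog (by linarith)

lemma half_mul_sqrt_le_of_floor_le_mul_self {X μ : ℝ} {m : ℕ} (hX : 2 ≤ X) (hμ : μ ≤ 1)
    (hm : ⌊X⌋₊ ≤ m * m) : μ / 2 * X ^ (1 / 2 : ℝ) ≤ m := by
  have hX₀ : 0 ≤ X := by linarith
  have hm' : (⌊X⌋₊ : ℝ) ≤ (m : ℝ) * m := by exact_mod_cast hm
  have hfloor := Nat.lt_floor_add_one X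
  calc μ / 2 * X ^ (1 / 2 : ℝ) ≤ 1 / 2 * √X := by
        rw [Real.sqrt_eq_rpow]
        gcongr
    _ ≤ m := by
        by_contra! hlt
        nlinarith [Real.sq_sqrt hX₀]

lemma half_mul_sqrt_le_of_mul_self_lt_floor {X μ : ℝ} {m k : ℕ} (hX : 0 ≤ X) (hμ : 0 ≤ μ)
    (hm : m * m < ⌊X⌋₊) (hmk : ⌊μ * X⌋₊ < k * m) : μ / 2 * X ^ (1 / 2 : ℝ) ≤ k := by
  have hm' : (m : ℝ) * m ≤ X := by exact_mod_cast (Nat.le_floor_iff hX).1 hm.le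
  have hmk' : μ * X < k * m := by exact_mod_cast (Nat.floor_lt (mul_nonneg hμ hX)).1 hmk
  have hm_sqrt : (m : ℝ) ≤ √X := Real.le_sqrt_of_sq_le (by rwa [sq])
  rw [← Real.sqrt_eq_rpow]
  by_contra! hlt
  have := mul_le_mul hlt.le hm_sqrt m.cast_nonneg (by positivity)
  nlinarith [Real.mul_self_sqrt hX, mul_nonneg hμ hX]

/-- One of the two variables of a product of size `X` is at least of size `√X`; its role is that of
the first variable in the previous estimate. -/
theorem eventually_norm_bilinear_scaledPhase_le {c μ : ℝ} (hc₁ : 1 < c) (hc₂ : c < 17 / 16)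
    (hμ₀ : 0 < μ) (hμ₁ : μ ≤ 1) :
    ∀ᶠ X : ℝ in atTop, ∀ (θ : ℝ) (lam : ℕ → ℝ) (a b : ℕ → ℂ),
      IsSieveWeight (X ^ ((17 - 16 * c) / 32)) lam → X ^ ((16 * c - 5) / 32) ≤ |θ| * X ^ c →
      (∀ m, ‖a m‖ ≤ X ^ savingExp c) → (∀ k, ‖b k‖ ≤ X ^ savingExp c) →
      (∀ m : ℕ, a m ≠ 0 → X ^ (1 / 8 : ℝ) ≤ m) → (∀ k : ℕ, b k ≠ 0 → X ^ (1 / 8 : ℝ) ≤ k) →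
      ‖∑ m ∈ Icc 1 ⌊X⌋₊, ∑ k ∈ Icc 1 ⌊X⌋₊, a m * b k * scaledPhase c μ θ lam X (m * k)‖ ≤
        2 * (X ^ (2 - c - 19 * savingExp c) * √(1 + |θ| * fractWindow c X)) := by
  filter_upwards [eventually_norm_bilinear_scaledPhase_le_of_sqrt_le hc₁ hc₂ hμ₀ hμ₁,
    eventually_ge_atTop 2] with X hlong hX θ lam a b hlam hT ha hb ha_supp hb_supp
  have hX₀ : 0 ≤ X := by linarith
  have hindicator (s : Set ℕ) (m : ℕ) : ‖s.indicator a m‖ ≤ X ^ savingExp c :=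
    (norm_indicator_le_norm_self a m).trans (ha m)
  set s : Set ℕ := {m | ⌊X⌋₊ ≤ m * m}
  have hlarge := hlong θ lam (s.indicator a) b hlam hT (hindicator s) hb fun m k hm hk _ =>
    have hms : m ∈ s := Set.mem_of_indicator_ne_zero hm
    ⟨half_mul_sqrt_le_of_floor_le_mul_self hX hμ₁ hms, hb_supp k hk⟩
  have hsmall := hlong θ lam b (sᶜ.indicator a) hlam hT hb (hindicator sᶜ)
    fun k m _ hm hmk => by
      have hms : m ∈ sᶜ := Set.mem_of_indicator_ne_zero hm
      rw [Set.indicator_of_mem hms] at hm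
      exact ⟨half_mul_sqrt_le_of_mul_self_lt_floor hX₀ hμ₀.le (not_le.1 hms) hmk, ha_supp m hm⟩
  rw [sum_comm] at hsmall
  refine le_trans (le_of_eq_of_le ?_ (norm_add_le _ _)) ((add_le_add hlarge hsmall).trans_eq
    (two_mul _).symm)
  simp only [← sum_add_distrib]
  refine congrArg _ (sum_congr rfl fun m _ => sum_congr rfl fun k _ => ?_)
  rw [mul_comm k m, mul_comm (b k), ← add_mul, ← add_mul, Set.indicator_self_add_compl_apply]

/-! ### Linear sums -/

lemma sum_Ioc_mul_eq_sum_Ico_sub_mul {R : Type*} [CommRing R] (w z : ℕ → R) (u v : ℕ) :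
    ∑ k ∈ Ioc u v, w k * z k =
      w u * ∑ k ∈ Ioc u v, z k + ∑ j ∈ Ico u v, (w (j + 1) - w j) * ∑ k ∈ Ioc j v, z k := by
  have hswap : ∑ j ∈ Ico u v, ∑ k ∈ Ioc j v, (w (j + 1) - w j) * z k =
      ∑ k ∈ Ioc u v, ∑ j ∈ Ico u k, (w (j + 1) - w j) * z k :=
    sum_comm' fun j k => by simp only [mem_Ico, mem_Ioc]; omega
  simp only [mul_sum]
  rw [hswap, ← sum_add_distrib]
  refine sum_congr rfl fun k hk => ?_
  rw [← sum_mul, sum_Ico_sub w (mem_Ioc.1 hk).1.le]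
  ring

lemma norm_sum_monotone_mul_le {w : ℕ → ℝ} (hw : Monotone w) {z : ℕ → ℂ} {u v : ℕ}
    (huv : u ≤ v) (hwu : 0 ≤ w u) {S : ℝ} (hS : ∀ j, u ≤ j → ‖∑ k ∈ Ioc j v, z k‖ ≤ S) :
    ‖∑ k ∈ Ioc u v, (w k : ℂ) * z k‖ ≤ w v * S := by
  rw [sum_Ioc_mul_eq_sum_Ico_sub_mul (fun k => (w k : ℂ)) z u v]
  have hstep (j : ℕ) (hj : j ∈ Ico u v) :
      ‖((w (j + 1) : ℂ) - w j) * ∑ k ∈ Ioc j v, z k‖ ≤ (w (j + 1) - w j) * S := by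
    rw [← Complex.ofReal_sub, norm_mul, Complex.norm_real,
      Real.norm_of_nonneg (sub_nonneg.2 (hw j.le_succ))]
    exact mul_le_mul_of_nonneg_left (hS j (mem_Ico.1 hj).1) (sub_nonneg.2 (hw j.le_succ))
  calc _ ≤ w u * S + ∑ j ∈ Ico u v, (w (j + 1) - w j) * S := by
        refine norm_add_le_of_le ?_ (norm_sum_le_of_le _ hstep)
        rw [norm_mul, Complex.norm_real, Real.norm_of_nonneg hwu]
        exact mul_le_mul_of_nonneg_left (hS u le_rfl) hwu
    _ = w v * S := by rw [← sum_mul, sum_Ico_sub w huv]; ring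

lemma sum_mul_siftedPhase_eq {c θ D : ℝ} {lam : ℕ → ℝ} {A B m : ℕ} (hm : 0 < m) (w : ℕ → ℂ) :
    ∑ k ∈ Icc 1 B, w k * siftedPhase c θ D lam A B (m * k) =
      ∑ d ∈ range (⌊D⌋₊ + 1), (lam d : ℂ) * ∑ k ∈ Ioc (A / m) (B / m), w k *
        if d ∣ k * m + 2 then e (θ * (m : ℝ) ^ c * (k : ℝ) ^ c) else 0 := by
  have hmem (k : ℕ) : k ∈ Ioc (A / m) (B / m) ↔ A < m * k ∧ m * k ≤ B := by
    rw [mem_Ioc, Nat.div_lt_iff_lt_mul hm, Nat.le_div_iff_mul_le hm, mul_comm k]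
  have hsub : Ioc (A / m) (B / m) ⊆ Icc 1 B := fun k hk => by
    rw [mem_Ioc] at hk
    exact mem_Icc.2 ⟨Nat.one_le_of_lt hk.1, hk.2.trans (Nat.div_le_self _ _)⟩
  simp only [mul_sum]
  rw [sum_comm, ← sum_subset hsub fun k _ hk => by
    rw [siftedPhase, if_neg (mt (hmem k).2 hk), mul_zero]]
  refine sum_congr rfl fun k hk => ?_
  rw [siftedPhase_eq_sum, mul_sum]
  refine sum_congr rfl fun d _ => ?_
  simp only [(hmem k).1 hk, and_self, true_and]
  rw [mul_left_comm, mul_comm m k, Nat.cast_mul, Real.mul_rpow k.cast_nonneg m.cast_nonneg,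
    mul_comm ((k : ℝ) ^ c), mul_assoc θ]

lemma exists_norm_sum_Ioc_e_mul_rpow_dvd_le {c μ : ℝ} (hc₁ : 1 < c) (hc₂ : c ≤ 2) (hμ₀ : 0 < μ)
    (hμ₁ : μ ≤ 1) :
    ∃ C ≥ 1, ∀ (X θ : ℝ) (d m j : ℕ), 0 < X → θ ≠ 0 → Odd d → 0 < m → (m : ℝ) ≤ μ * X →
      ⌊μ * X⌋₊ / m ≤ j →
      ‖∑ k ∈ Ioc j (⌊X⌋₊ / m),
        if d ∣ k * m + 2 then e (θ * (m : ℝ) ^ c * (k : ℝ) ^ c) else 0‖ ≤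
        C * (√(|θ| * X ^ c) + X / m / √(|θ| * X ^ c)) := by
  obtain ⟨C, hC, hpower⟩ := exists_norm_sum_e_mul_rpow_dvd_le hc₁ hc₂ (1 / μ)
  refine ⟨C * (2 + 1 / √(μ ^ c)),
    one_le_mul_of_one_le_of_one_le hC (by linarith [show 0 ≤ 1 / √(μ ^ c) by positivity]), ?_⟩
  intro X θ d m j hX hθ hd hm hmX hj
  have hm' : (0 : ℝ) < m := by exact_mod_cast hm
  have hsize : |θ * (m : ℝ) ^ c| * (μ * X / m) ^ c = μ ^ c * (|θ| * X ^ c) := by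
    rw [abs_mul, abs_of_pos (Real.rpow_pos_of_pos hm' c), mul_assoc,
      ← Real.mul_rpow hm'.le (by positivity), mul_div_cancel₀ _ hm'.ne',
      Real.mul_rpow hμ₀.le hX.le, mul_left_comm]
  have hlower : μ * X / m ≤ j + 1 := by
    have hfloor := (Nat.floor_lt (by positivity)).1
      ((Nat.div_lt_iff_lt_mul hm).1 (Nat.lt_succ_of_le hj))
    rw [div_le_iff₀ hm']
    exact_mod_cast hfloor.le
  have hupper : ((⌊X⌋₊ / m : ℕ) : ℝ) ≤ 1 / μ * (μ * X / m) := calc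
    ((⌊X⌋₊ / m : ℕ) : ℝ) ≤ X / m := natCast_floor_div_le hX.le m
    _ = 1 / μ * (μ * X / m) := by field_simp
  have hsum := hpower (θ * (m : ℝ) ^ c) (μ * X / m) d d m m j (⌊X⌋₊ / m) (by positivity)
    ((one_le_div hm').2 hmX) hd hd hlower hupper
  simp only [and_self] at hsum
  rw [← sum_filter]
  refine hsum.trans ?_
  rw [hsize, mul_assoc]
  gcongr
  refine (sqrt_add_div_sqrt_le (by positivity) (by positivity) (by positivity)
    ⟨le_rfl, ?_⟩).trans ?_
  · gcongr
    linarith [Real.rpow_le_one hμ₀.le hμ₁ (show 0 ≤ c by linarith)]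
  · gcongr
    exact mul_le_of_le_one_left hX.le hμ₁

/-- The monotone weight is removed by partial summation, after which the second derivative test
applies to each divisor of the sieve. -/
theorem exists_norm_sum_monotone_mul_siftedPhase_le {c μ : ℝ} (hc₁ : 1 < c) (hc₂ : c ≤ 2)
    (hμ₀ : 0 < μ) (hμ₁ : μ ≤ 1) :
    ∃ C ≥ 1, ∀ (X θ D : ℝ) (lam w : ℕ → ℝ) (m : ℕ), IsSieveWeight D lam → 0 < X → θ ≠ 0 →
      0 < m → (m : ℝ) ≤ μ * X → Monotone w → 0 ≤ w 0 →
      ‖∑ k ∈ Icc 1 ⌊X⌋₊, (w k : ℂ) * siftedPhase c θ D lam ⌊μ * X⌋₊ ⌊X⌋₊ (m * k)‖ ≤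
        (⌊D⌋₊ + 1 : ℝ) * (w ⌊X⌋₊ * (C * (√(|θ| * X ^ c) + X / m / √(|θ| * X ^ c)))) := by
  obtain ⟨C, hC, htail⟩ := exists_norm_sum_Ioc_e_mul_rpow_dvd_le hc₁ hc₂ hμ₀ hμ₁
  refine ⟨C, hC, fun X θ D lam w m hlam hX hθ hm hmX hw hw₀ => ?_⟩
  have hw_nonneg (k : ℕ) : 0 ≤ w k := hw₀.trans (hw k.zero_le)
  have hle : ⌊μ * X⌋₊ / m ≤ ⌊X⌋₊ / m :=
    Nat.div_le_div_right (Nat.floor_le_floor (mul_le_of_le_one_left hX.le hμ₁))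
  rw [sum_mul_siftedPhase_eq hm]
  refine norm_sum_sieveWeight_mul_le hlam (mul_nonneg (hw_nonneg _) (by positivity)) fun d hd =>
    (norm_sum_monotone_mul_le hw hle (hw_nonneg _)
      fun j hj => htail X θ d m j hX hθ hd hm hmX hj).trans ?_
  gcongr
  exact hw (Nat.div_le_self _ _)

lemma norm_sum_mul_le_of_support_le {a S : ℕ → ℂ} {B Y : ℕ} {P U V : ℝ} (hP : 0 ≤ P)
    (hU : 0 ≤ U) (hV : 0 ≤ V) (ha : ∀ m, ‖a m‖ ≤ P) (ha_supp : ∀ m, a m ≠ 0 → m ≤ Y)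
    (hS : ∀ m ∈ Icc 1 Y, ‖S m‖ ≤ U + V * (m : ℝ)⁻¹) :
    ‖∑ m ∈ Icc 1 B, a m * S m‖ ≤ P * (Y * U + V * (1 + Real.log Y)) := by
  have hharmonic : ∑ m ∈ Icc 1 Y, (m : ℝ)⁻¹ ≤ 1 + Real.log Y := by
    have hle := harmonic_le_one_add_log Y
    rw [harmonic_eq_sum_Icc] at hle
    push_cast at hle
    exact hle
  have hsub : {m ∈ Icc 1 B | a m ≠ 0} ⊆ Icc 1 Y := fun m hm => by
    rw [mem_filter, mem_Icc] at hm
    exact mem_Icc.2 ⟨hm.1.1, ha_supp m hm.2⟩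
  rw [← sum_filter_of_ne fun m _ hm => left_ne_zero_of_mul hm]
  calc _ ≤ ∑ m ∈ Icc 1 B with a m ≠ 0, P * (U + V * (m : ℝ)⁻¹) :=
        norm_sum_le_of_le _ fun m hm => by
          rw [norm_mul]
          exact mul_le_mul (ha m) (hS m (hsub hm)) (norm_nonneg _) hP
    _ ≤ ∑ m ∈ Icc 1 Y, P * (U + V * (m : ℝ)⁻¹) :=
        sum_le_sum_of_subset_of_nonneg hsub fun m _ _ => by positivity
    _ = P * (Y * U + V * ∑ m ∈ Icc 1 Y, (m : ℝ)⁻¹) := by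
        rw [← mul_sum, sum_add_distrib, ← mul_sum, sum_const, Nat.card_Icc, nsmul_eq_mul,
          add_tsub_cancel_right]
    _ ≤ _ := by gcongr

lemma rpow_quarter_mul_sqrt_add_le {c X T R : ℝ} (hc : c < 17 / 16) (hX : 1 ≤ X) (hR : 1 ≤ R)
    (hT : X ^ ((16 * c - 5) / 32) ≤ T) (hTR : T ≤ R * X ^ (2 * c - 1 + 20 * savingExp c)) :
    X ^ (1 / 4 : ℝ) * √T + X / √T * X ^ savingExp c ≤
      2 * X ^ (2 - c - 522 * savingExp c) * √R := by
  have hε := savingExp_pos hc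
  have hcε := eq_sub_mul_savingExp c
  have hX₀ : 0 < X := zero_lt_one.trans_le hX
  set ε := savingExp c
  have hT_lower : X ^ ((16 * c - 5) / 64) ≤ √T := by
    refine le_of_eq_of_le ?_ (Real.sqrt_le_sqrt hT)
    rw [sqrt_rpow hX₀.le]
    ring_nf
  have hT_upper : √T ≤ √R * X ^ ((2 * c - 1 + 20 * ε) / 2) := by
    rw [← sqrt_rpow hX₀.le, ← Real.sqrt_mul (by linarith)]
    exact Real.sqrt_le_sqrt hTR
  have hrising : X ^ (1 / 4 : ℝ) * √T ≤ X ^ (2 - c - 522 * ε) * √R := calc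
    _ ≤ X ^ (1 / 4 : ℝ) * (√R * X ^ ((2 * c - 1 + 20 * ε) / 2)) := by gcongr
    _ = X ^ (1 / 4 + (2 * c - 1 + 20 * ε) / 2) * √R := by rw [Real.rpow_add hX₀]; ring
    _ ≤ _ := by
      gcongr
      linarith
  have hfalling : X / √T * X ^ ε ≤ X ^ (2 - c - 522 * ε) * √R := calc
    _ ≤ X / X ^ ((16 * c - 5) / 64) * X ^ ε := by gcongr
    _ = X ^ (1 - (16 * c - 5) / 64 + ε) := by
      rw [Real.rpow_add hX₀, Real.rpow_sub hX₀, Real.rpow_one]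
    _ ≤ X ^ (2 - c - 522 * ε) := Real.rpow_le_rpow_of_exponent_le hX (by linarith)
    _ ≤ _ := le_mul_of_one_le_right (by positivity) (Real.one_le_sqrt.2 hR)
  linarith

lemma exists_eventually_norm_sum_monotone_mul_scaledPhase_le {c μ : ℝ} (hc₁ : 1 < c)
    (hc₂ : c < 17 / 16) (hμ₀ : 0 < μ) (hμ₁ : μ ≤ 1) :
    ∃ C ≥ 1, ∀ᶠ X : ℝ in atTop, ∀ (θ : ℝ) (lam w : ℕ → ℝ) (m : ℕ),
      IsSieveWeight (X ^ ((17 - 16 * c) / 32)) lam → θ ≠ 0 → 0 < m → (m : ℝ) ≤ X ^ (1 / 4 : ℝ) →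
      Monotone w → 0 ≤ w 0 → w ⌊X⌋₊ ≤ X ^ savingExp c →
      ‖∑ k ∈ Icc 1 ⌊X⌋₊, (w k : ℂ) * scaledPhase c μ θ lam X (m * k)‖ ≤
        C * X ^ (501 * savingExp c) * (√(|θ| * X ^ c) + X / √(|θ| * X ^ c) * (m : ℝ)⁻¹) := by
  have hcε := eq_sub_mul_savingExp c
  obtain ⟨C, hC, hsum⟩ :=
    exists_norm_sum_monotone_mul_siftedPhase_le hc₁ (by linarith : c ≤ 2) hμ₀ hμ₁
  refine ⟨2 * C, by linarith, ?_⟩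
  filter_upwards [eventually_le_rpow μ⁻¹ (show (0 : ℝ) < 3 / 4 by norm_num),
    eventually_ge_atTop 1] with X hXμ hX θ lam w m hlam hθ hm hmX hw hw₀ hwX
  have hX₀ : 0 < X := zero_lt_one.trans_le hX
  have hquarter : X ^ (1 / 4 : ℝ) ≤ μ * X := calc
    X ^ (1 / 4 : ℝ) = μ * (μ⁻¹ * X ^ (1 / 4 : ℝ)) := by field_simp
    _ ≤ μ * X ^ (1 : ℝ) := by gcongr; exact mul_rpow_le_rpow hX hXμ (by norm_num)
    _ = μ * X := by rw [Real.rpow_one]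
  have hlevel : X ^ ((17 - 16 * c) / 32) = X ^ (500 * savingExp c) := by
    congr 1
    linarith
  have hfloor : (⌊X ^ ((17 - 16 * c) / 32)⌋₊ + 1 : ℝ) ≤ 2 * X ^ (500 * savingExp c) := by
    rw [hlevel]
    linarith [Nat.floor_le (show 0 ≤ X ^ (500 * savingExp c) by positivity),
      Real.one_le_rpow hX (show 0 ≤ 500 * savingExp c by linarith)]
  refine (hsum X θ _ lam w m hlam hX₀ hθ hm (hmX.trans hquarter) hw hw₀).trans ?_
  have : 0 ≤ w ⌊X⌋₊ := hw₀.trans (hw (Nat.zero_le _))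
  calc _ ≤ 2 * X ^ (500 * savingExp c) * (X ^ savingExp c *
          (C * (√(|θ| * X ^ c) + X / m / √(|θ| * X ^ c)))) := by gcongr
    _ = _ := by
      rw [show 501 * savingExp c = 500 * savingExp c + savingExp c by ring, Real.rpow_add hX₀]
      ring

lemma log_natCast_le_log {X : ℝ} (hX : 1 ≤ X) {n : ℕ} (hn : (n : ℝ) ≤ X) :
    Real.log n ≤ Real.log X := by
  rcases n.eq_zero_or_pos with rfl | hpos
  · simpa using Real.log_nonneg hX
  · exact Real.log_le_log (by exact_mod_cast hpos) hn

theorem eventually_norm_linear_scaledPhase_le {c μ : ℝ} (hc₁ : 1 < c) (hc₂ : c < 17 / 16)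
    (hμ₀ : 0 < μ) (hμ₁ : μ ≤ 1) :
    ∀ᶠ X : ℝ in atTop, ∀ (θ : ℝ) (lam : ℕ → ℝ) (a : ℕ → ℂ) (w : ℕ → ℝ),
      IsSieveWeight (X ^ ((17 - 16 * c) / 32)) lam → X ^ ((16 * c - 5) / 32) ≤ |θ| * X ^ c →
      (∀ m, ‖a m‖ ≤ X ^ savingExp c) → Monotone w → 0 ≤ w 0 → w ⌊X⌋₊ ≤ X ^ savingExp c →
      (∀ m : ℕ, a m ≠ 0 → (m : ℝ) ≤ X ^ (1 / 4 : ℝ)) →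
      ‖∑ m ∈ Icc 1 ⌊X⌋₊, ∑ k ∈ Icc 1 ⌊X⌋₊, a m * w k * scaledPhase c μ θ lam X (m * k)‖ ≤
        X ^ (2 - c - 19 * savingExp c) * √(1 + |θ| * fractWindow c X) := by
  have hε := savingExp_pos hc₂
  obtain ⟨C, hC, hinner_eventually⟩ :=
    exists_eventually_norm_sum_monotone_mul_scaledPhase_le hc₁ hc₂ hμ₀ hμ₁
  filter_upwards [hinner_eventually, eventually_le_rpow (2 * C) hε,
    eventually_mul_one_add_log_le_rpow 1 hε, eventually_ge_atTop 1]
    with X hinner hXC hlog hX θ lam a w hlam hT ha hw hw₀ hwX ha_supp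
  have hX₀ : 0 < X := zero_lt_one.trans_le hX
  set R := 1 + |θ| * fractWindow c X
  set T := |θ| * X ^ c
  set ε := savingExp c
  set Y := ⌊X ^ (1 / 4 : ℝ)⌋₊
  have hT₀ : 0 < T := (Real.rpow_pos_of_pos hX₀ _).trans_le hT
  have hθ : θ ≠ 0 := abs_pos.1 (pos_of_mul_pos_left hT₀ (by positivity))
  have hR : 1 ≤ R :=
    le_add_of_nonneg_right (mul_nonneg (abs_nonneg θ) (fractWindow_pos hX₀ c).le)
  have hY : (Y : ℝ) ≤ X ^ (1 / 4 : ℝ) := Nat.floor_le (by positivity)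
  have hlogY : 1 + Real.log Y ≤ X ^ ε := by
    have hle := log_natCast_le_log hX
      (hY.trans (Real.rpow_le_self_of_one_le hX (by norm_num : (1 / 4 : ℝ) ≤ 1)))
    linarith
  have hcut := norm_sum_mul_le_of_support_le (B := ⌊X⌋₊) (by positivity)
    (show 0 ≤ C * X ^ (501 * ε) * √T by positivity)
    (show 0 ≤ C * X ^ (501 * ε) * (X / √T) by positivity) ha
    (fun m hm => Nat.le_floor (ha_supp m hm)) fun m hm => (hinner θ lam w m hlam hθ
      (mem_Icc.1 hm).1 ((Nat.cast_le.2 (mem_Icc.1 hm).2).trans hY) hw hw₀ hwX).trans_eq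
      (by ring)
  simp only [mul_assoc (a _), ← mul_sum]
  refine hcut.trans ?_
  calc _ = C * (X ^ ε * X ^ (501 * ε)) * (Y * √T + X / √T * (1 + Real.log Y)) := by ring
    _ ≤ C * (X ^ ε * X ^ (501 * ε)) * (X ^ (1 / 4 : ℝ) * √T + X / √T * X ^ ε) := by gcongr
    _ ≤ C * (X ^ ε * X ^ (501 * ε)) * (2 * X ^ (2 - c - 522 * ε) * √R) := by
        gcongr
        exact rpow_quarter_mul_sqrt_add_le hc₂ hX hR hT (abs_mul_rpow_le_one_add_mul hX₀ c θ)
    _ = 2 * C * X ^ (ε + 501 * ε + (2 - c - 522 * ε)) * √R := by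
        rw [Real.rpow_add hX₀, Real.rpow_add hX₀]
        ring
    _ ≤ _ := by
        gcongr
        exact mul_rpow_le_rpow hX hXC (by linarith)

/-! ### Vaughan's identity -/

section Vaughan

open ArithmeticFunction
open scoped ArithmeticFunction.zeta

/-- The truncation of the arithmetic function `f` to the integers `n ≤ U`, the basic ingredient of
Vaughan's identity; its complement is `f - lowPart f U`. -/
noncomputable def lowPart (f : ArithmeticFunction ℝ) (U : ℝ) : ArithmeticFunction ℝ :=
  ⟨fun n => if (n : ℝ) ≤ U then f n else 0, by simp⟩

lemma lowPart_apply (f : ArithmeticFunction ℝ) (U : ℝ) (n : ℕ) :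
    lowPart f U n = if (n : ℝ) ≤ U then f n else 0 := rfl

lemma sub_lowPart_apply (f : ArithmeticFunction ℝ) (U : ℝ) (n : ℕ) :
    (f - lowPart f U) n = if (n : ℝ) ≤ U then 0 else f n := by
  rw [sub_eq_add_neg, ArithmeticFunction.add_apply, ArithmeticFunction.neg_apply, lowPart_apply]
  split_ifs <;> simp

lemma le_of_lowPart_ne_zero {f : ArithmeticFunction ℝ} {U : ℝ} {n : ℕ} (h : lowPart f U n ≠ 0) :
    (n : ℝ) ≤ U := by
  by_contra hn
  exact h (if_neg hn)

lemma lt_of_sub_lowPart_ne_zero {f : ArithmeticFunction ℝ} {U : ℝ} {n : ℕ}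
    (h : (f - lowPart f U) n ≠ 0) : U < n := by
  by_contra! hn
  exact h ((sub_lowPart_apply f U n).trans (if_pos hn))

lemma abs_lowPart_le (f : ArithmeticFunction ℝ) (U : ℝ) (n : ℕ) : |lowPart f U n| ≤ |f n| := by
  rw [lowPart_apply]
  split_ifs <;> simp

lemma abs_sub_lowPart_le (f : ArithmeticFunction ℝ) (U : ℝ) (n : ℕ) :
    |(f - lowPart f U) n| ≤ |f n| := by
  rw [sub_lowPart_apply]
  split_ifs <;> simp

lemma le_mul_of_lowPart_mul_lowPart_ne_zero {f g : ArithmeticFunction ℝ} {U V : ℝ} {n : ℕ}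
    (hU : 0 ≤ U) (h : (lowPart f U * lowPart g V) n ≠ 0) : (n : ℝ) ≤ U * V := by
  rw [mul_apply] at h
  obtain ⟨x, hx, hne⟩ := exists_ne_zero_of_sum_ne_zero h
  rw [← (Nat.mem_divisorsAntidiagonal.1 hx).1, Nat.cast_mul]
  exact mul_le_mul (le_of_lowPart_ne_zero (left_ne_zero_of_mul hne))
    (le_of_lowPart_ne_zero (right_ne_zero_of_mul hne)) (Nat.cast_nonneg _) hU

lemma abs_moebius_real_le_one (n : ℕ) : |(moebius : ArithmeticFunction ℝ) n| ≤ 1 := by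
  rw [intCoe_apply]
  exact_mod_cast abs_moebius_le_one

lemma abs_lowPart_moebius_mul_lowPart_vonMangoldt_le (U V : ℝ) (n : ℕ) :
    |(lowPart (moebius : ArithmeticFunction ℝ) U * lowPart Λ V) n| ≤ Real.log n := by
  rw [mul_apply]
  calc _ ≤ ∑ x ∈ n.divisorsAntidiagonal, Λ x.2 :=
        (abs_sum_le_sum_abs _ _).trans <| sum_le_sum fun x _ => by
          rw [abs_mul, ← one_mul (Λ x.2)]
          exact mul_le_mul ((abs_lowPart_le _ U _).trans (abs_moebius_real_le_one _))
            ((abs_lowPart_le _ V _).trans_eq (abs_of_nonneg vonMangoldt_nonneg)) (abs_nonneg _)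
            zero_le_one
    _ = ∑ d ∈ n.divisors, Λ d := Nat.sum_divisorsAntidiagonal' fun _ d => (Λ d : ℝ)
    _ = Real.log n := vonMangoldt_sum

lemma abs_sub_lowPart_vonMangoldt_mul_zeta_le (U : ℝ) (n : ℕ) :
    |((Λ - lowPart Λ U) * (ζ : ArithmeticFunction ℝ)) n| ≤ Real.log n := by
  rw [coe_mul_zeta_apply, ← vonMangoldt_sum]
  exact (abs_sum_le_sum_abs _ _).trans <| sum_le_sum fun d _ =>
    (abs_sub_lowPart_le _ U d).trans_eq (abs_of_nonneg vonMangoldt_nonneg)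

lemma lt_of_sub_lowPart_mul_zeta_ne_zero {f : ArithmeticFunction ℝ} {U : ℝ} {n : ℕ}
    (h : ((f - lowPart f U) * (ζ : ArithmeticFunction ℝ)) n ≠ 0) : U < n := by
  rw [coe_mul_zeta_apply] at h
  obtain ⟨d, hd, hne⟩ := exists_ne_zero_of_sum_ne_zero h
  exact (lt_of_sub_lowPart_ne_zero hne).trans_le (Nat.cast_le.2 (Nat.divisor_le hd))

theorem vaughan_identity (U : ℝ) :
    Λ = lowPart Λ U + lowPart (moebius : ArithmeticFunction ℝ) U * log
      - lowPart (moebius : ArithmeticFunction ℝ) U * lowPart Λ U * (ζ : ArithmeticFunction ℝ)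
      + ((moebius : ArithmeticFunction ℝ) - lowPart (moebius : ArithmeticFunction ℝ) U) *
        ((Λ - lowPart Λ U) * (ζ : ArithmeticFunction ℝ)) := by
  rw [← vonMangoldt_mul_zeta]
  linear_combination (lowPart Λ U - Λ) * (coe_moebius_mul_coe_zeta (R := ℝ))

lemma sum_Icc_mul_eq_sum_sum (f g : ArithmeticFunction ℝ) {F : ℕ → ℂ} {B : ℕ}
    (hF : ∀ n, B < n → F n = 0) :
    ∑ n ∈ Icc 1 B, ((f * g) n : ℂ) * F n =
      ∑ m ∈ Icc 1 B, ∑ k ∈ Icc 1 B, (f m : ℂ) * g k * F (m * k) := by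
  have hconv (n : ℕ) (hn : n ∈ Icc 1 B) : ((f * g) n : ℂ) * F n =
      ∑ x ∈ Icc 1 B ×ˢ Icc 1 B with x.1 * x.2 = n, (f x.1 : ℂ) * g x.2 * F (x.1 * x.2) := by
    rw [mul_apply, Nat.divisorsAntidiagonal_eq_prod_filter_of_le
      (Nat.one_le_iff_ne_zero.1 (mem_Icc.1 hn).1) (mem_Icc.1 hn).2, Complex.ofReal_sum, sum_mul]
    refine sum_congr rfl fun x hx => ?_
    rw [(mem_filter.1 hx).2, Complex.ofReal_mul]
  rw [sum_congr rfl hconv, ← sum_product']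
  simp only [sum_filter]
  rw [sum_comm]
  refine sum_congr rfl fun x hx => ?_
  rw [sum_ite_eq]
  split_ifs with hle
  · rfl
  · rw [mem_product, mem_Icc, mem_Icc] at hx
    rw [mem_Icc, not_and_or, not_le, not_le] at hle
    rw [hF _ (hle.resolve_left (Nat.succ_le_of_lt (Nat.mul_pos hx.1.1 hx.2.1)).not_gt), mul_zero]

theorem sum_vonMangoldt_mul_eq {F : ℕ → ℂ} {U : ℝ} {B : ℕ} (hF_low : ∀ n : ℕ, n ≤ U → F n = 0)
    (hF_high : ∀ n, B < n → F n = 0) :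
    ∑ n ∈ Icc 1 B, (Λ n : ℂ) * F n =
      ∑ m ∈ Icc 1 B, ∑ k ∈ Icc 1 B,
        (lowPart (moebius : ArithmeticFunction ℝ) U m : ℂ) * log k * F (m * k)
      - ∑ m ∈ Icc 1 B, ∑ k ∈ Icc 1 B,
        ((lowPart (moebius : ArithmeticFunction ℝ) U * lowPart Λ U) m : ℂ) *
          (ζ : ArithmeticFunction ℝ) k * F (m * k)
      + ∑ m ∈ Icc 1 B, ∑ k ∈ Icc 1 B,
        (((moebius : ArithmeticFunction ℝ) - lowPart (moebius : ArithmeticFunction ℝ) U) m : ℂ) *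
          ((Λ - lowPart Λ U) * (ζ : ArithmeticFunction ℝ)) k * F (m * k) := by
  have hlow (n : ℕ) : (lowPart Λ U n : ℂ) * F n = 0 := by
    rw [lowPart_apply]
    split_ifs with hn
    · rw [hF_low n hn, mul_zero]
    · rw [Complex.ofReal_zero, zero_mul]
  simp only [← sum_Icc_mul_eq_sum_sum _ _ hF_high]
  rw [← sum_sub_distrib, ← sum_add_distrib]
  refine sum_congr rfl fun n _ => ?_
  conv_lhs => rw [vaughan_identity U]
  simp only [sub_eq_add_neg, ArithmeticFunction.add_apply, ArithmeticFunction.neg_apply,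
    Complex.ofReal_add, Complex.ofReal_neg]
  linear_combination hlow n

lemma monotone_log : Monotone log := fun m n hmn => by
  rw [log_apply, log_apply]
  rcases m.eq_zero_or_pos with rfl | hm
  · simpa using Real.log_natCast_nonneg n
  · exact Real.log_le_log (by exact_mod_cast hm) (by exact_mod_cast hmn)

lemma monotone_zeta : Monotone (ζ : ArithmeticFunction ℝ) := fun m n hmn => by
  simp only [natCoe_apply, zeta_apply]
  split_ifs <;> first | omega | norm_num

lemma eventually_log_natCast_le_rpow {ε : ℝ} (hε : 0 < ε) :
    ∀ᶠ X : ℝ in atTop, ∀ n : ℕ, n ≤ X → Real.log n ≤ X ^ ε := by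
  filter_upwards [eventually_mul_one_add_log_le_rpow 1 hε, eventually_ge_atTop 1]
    with X hlog hX n hn
  linarith [log_natCast_le_log hX hn]

lemma eventually_scaledPhase_eq_zero {c μ : ℝ} (hμ₀ : 0 < μ) {v : ℝ} (hv : v < 1) :
    ∀ᶠ X : ℝ in atTop, ∀ (θ : ℝ) (lam : ℕ → ℝ) (n : ℕ), n ≤ X ^ v →
      scaledPhase c μ θ lam X n = 0 := by
  filter_upwards [eventually_le_rpow μ⁻¹ (sub_pos.2 hv), eventually_ge_atTop 1]
    with X hXμ hX θ lam n hn
  have hle : (n : ℝ) ≤ μ * X := calc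
    (n : ℝ) ≤ μ * (μ⁻¹ * X ^ v) := by rwa [mul_inv_cancel_left₀ hμ₀.ne']
    _ ≤ μ * X ^ (1 : ℝ) := by gcongr; exact mul_rpow_le_rpow hX hXμ (by linarith)
    _ = μ * X := by rw [Real.rpow_one]
  exact scaledPhase_eq_zero fun h => h.1.not_ge (Nat.le_floor hle)

lemma eventually_norm_sum_lowPart_moebius_mul_log_le {c μ : ℝ} (hc₁ : 1 < c)
    (hc₂ : c < 17 / 16) (hμ₀ : 0 < μ) (hμ₁ : μ ≤ 1) :
    ∀ᶠ X : ℝ in atTop, ∀ (θ : ℝ) (lam : ℕ → ℝ),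
      IsSieveWeight (X ^ ((17 - 16 * c) / 32)) lam → X ^ ((16 * c - 5) / 32) ≤ |θ| * X ^ c →
      ‖∑ m ∈ Icc 1 ⌊X⌋₊, ∑ k ∈ Icc 1 ⌊X⌋₊,
        (lowPart (moebius : ArithmeticFunction ℝ) (X ^ (1 / 8 : ℝ)) m : ℂ) * log k *
          scaledPhase c μ θ lam X (m * k)‖ ≤
        X ^ (2 - c - 19 * savingExp c) * √(1 + |θ| * fractWindow c X) := by
  have hε := savingExp_pos hc₂
  filter_upwards [eventually_norm_linear_scaledPhase_le hc₁ hc₂ hμ₀ hμ₁,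
    eventually_log_natCast_le_rpow hε, eventually_ge_atTop 1] with X hlinear hlog hX θ lam hlam hT
  refine hlinear θ lam _ log hlam hT (fun m => ?_) monotone_log (by simp)
    (hlog _ (Nat.floor_le (by linarith))) fun m hm => ?_
  · rw [Complex.norm_real]
    exact (abs_lowPart_le _ _ m).trans
      ((abs_moebius_real_le_one m).trans (Real.one_le_rpow hX hε.le))
  · exact (le_of_lowPart_ne_zero (Complex.ofReal_ne_zero.1 hm)).trans
      (Real.rpow_le_rpow_of_exponent_le hX (by norm_num))

lemma eventually_norm_sum_lowPart_moebius_mul_lowPart_vonMangoldt_mul_zeta_le {c μ : ℝ}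
    (hc₁ : 1 < c) (hc₂ : c < 17 / 16) (hμ₀ : 0 < μ) (hμ₁ : μ ≤ 1) :
    ∀ᶠ X : ℝ in atTop, ∀ (θ : ℝ) (lam : ℕ → ℝ),
      IsSieveWeight (X ^ ((17 - 16 * c) / 32)) lam → X ^ ((16 * c - 5) / 32) ≤ |θ| * X ^ c →
      ‖∑ m ∈ Icc 1 ⌊X⌋₊, ∑ k ∈ Icc 1 ⌊X⌋₊,
        ((lowPart (moebius : ArithmeticFunction ℝ) (X ^ (1 / 8 : ℝ)) *
          lowPart Λ (X ^ (1 / 8 : ℝ))) m : ℂ) * (ζ : ArithmeticFunction ℝ) k *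
          scaledPhase c μ θ lam X (m * k)‖ ≤
        X ^ (2 - c - 19 * savingExp c) * √(1 + |θ| * fractWindow c X) := by
  have hε := savingExp_pos hc₂
  filter_upwards [eventually_norm_linear_scaledPhase_le hc₁ hc₂ hμ₀ hμ₁,
    eventually_log_natCast_le_rpow hε, eventually_ge_atTop 1] with X hlinear hlog hX θ lam hlam hT
  have hX₀ : 0 < X := zero_lt_one.trans_le hX
  have hsupp {m : ℕ} (hm : (lowPart (moebius : ArithmeticFunction ℝ) (X ^ (1 / 8 : ℝ)) *
      lowPart Λ (X ^ (1 / 8 : ℝ))) m ≠ 0) : (m : ℝ) ≤ X ^ (1 / 4 : ℝ) := by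
    refine (le_mul_of_lowPart_mul_lowPart_ne_zero (by positivity) hm).trans_eq ?_
    rw [← Real.rpow_add hX₀]
    norm_num
  refine hlinear θ lam _ (ζ : ArithmeticFunction ℝ) hlam hT (fun m => ?_) monotone_zeta (by simp) ?_
    fun m hm => hsupp (Complex.ofReal_ne_zero.1 hm)
  · rw [Complex.norm_real]
    by_cases hm : (lowPart (moebius : ArithmeticFunction ℝ) (X ^ (1 / 8 : ℝ)) *
        lowPart Λ (X ^ (1 / 8 : ℝ))) m = 0
    · rw [hm, norm_zero]
      positivity
    · exact (abs_lowPart_moebius_mul_lowPart_vonMangoldt_le _ _ m).trans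
        (hlog m ((hsupp hm).trans (Real.rpow_le_self_of_one_le hX (by norm_num))))
  · rw [natCoe_apply, zeta_apply_ne (Nat.floor_pos.2 hX).ne', Nat.cast_one]
    exact Real.one_le_rpow hX hε.le

lemma eventually_norm_sum_highPart_moebius_mul_highPart_vonMangoldt_mul_zeta_le {c μ : ℝ}
    (hc₁ : 1 < c) (hc₂ : c < 17 / 16) (hμ₀ : 0 < μ) (hμ₁ : μ ≤ 1) :
    ∀ᶠ X : ℝ in atTop, ∀ (θ : ℝ) (lam : ℕ → ℝ),
      IsSieveWeight (X ^ ((17 - 16 * c) / 32)) lam → X ^ ((16 * c - 5) / 32) ≤ |θ| * X ^ c →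
      ‖∑ m ∈ Icc 1 ⌊X⌋₊, ∑ k ∈ Icc 1 ⌊X⌋₊,
        (((moebius : ArithmeticFunction ℝ) -
          lowPart (moebius : ArithmeticFunction ℝ) (X ^ (1 / 8 : ℝ))) m : ℂ) *
          ((Λ - lowPart Λ (X ^ (1 / 8 : ℝ))) * (ζ : ArithmeticFunction ℝ)) k *
          scaledPhase c μ θ lam X (m * k)‖ ≤
        2 * (X ^ (2 - c - 19 * savingExp c) * √(1 + |θ| * fractWindow c X)) := by
  have hε := savingExp_pos hc₂
  filter_upwards [eventually_norm_bilinear_scaledPhase_le hc₁ hc₂ hμ₀ hμ₁,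
    eventually_log_natCast_le_rpow hε, eventually_ge_atTop 1]
    with X hbilinear hlog hX θ lam hlam hT
  set g := (Λ - lowPart Λ (X ^ (1 / 8 : ℝ))) * (ζ : ArithmeticFunction ℝ)
  have htrunc (k : ℕ) (hk : k ∈ Icc 1 ⌊X⌋₊) : g k = lowPart g X k :=
    (if_pos ((Nat.le_floor_iff (by linarith)).1 (mem_Icc.1 hk).2)).symm
  rw [sum_congr rfl fun m _ => sum_congr rfl fun k hk => by rw [htrunc k hk]]
  refine hbilinear θ lam _ (fun k => (lowPart g X k : ℂ)) hlam hT (fun m => ?_) (fun k => ?_)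
    (fun m hm => (lt_of_sub_lowPart_ne_zero (Complex.ofReal_ne_zero.1 hm)).le) fun k hk => ?_
  · rw [Complex.norm_real]
    exact (abs_sub_lowPart_le _ _ m).trans
      ((abs_moebius_real_le_one m).trans (Real.one_le_rpow hX hε.le))
  · rw [Complex.norm_real]
    by_cases hk : (k : ℝ) ≤ X
    · exact (abs_lowPart_le g X k).trans
        ((abs_sub_lowPart_vonMangoldt_mul_zeta_le _ k).trans (hlog k hk))
    · rw [lowPart_apply, if_neg hk, norm_zero]
      positivity
  · have hg : g k ≠ 0 := fun h => hk (by rw [lowPart_apply, h, ite_self, Complex.ofReal_zero])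
    exact (lt_of_sub_lowPart_mul_zeta_ne_zero hg).le

theorem eventually_norm_sum_vonMangoldt_mul_scaledPhase_le {c μ : ℝ} (hc₁ : 1 < c)
    (hc₂ : c < 17 / 16) (hμ₀ : 0 < μ) (hμ₁ : μ ≤ 1) :
    ∀ᶠ X : ℝ in atTop, ∀ (θ : ℝ) (lam : ℕ → ℝ),
      IsSieveWeight (X ^ ((17 - 16 * c) / 32)) lam → X ^ ((16 * c - 5) / 32) ≤ |θ| * X ^ c →
      ‖∑ n ∈ Icc 1 ⌊X⌋₊, (Λ n : ℂ) * scaledPhase c μ θ lam X n‖ ≤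
        X ^ (2 - c - 18 * savingExp c) * √(1 + |θ| * fractWindow c X) := by
  filter_upwards [eventually_norm_sum_lowPart_moebius_mul_log_le hc₁ hc₂ hμ₀ hμ₁,
    eventually_norm_sum_lowPart_moebius_mul_lowPart_vonMangoldt_mul_zeta_le hc₁ hc₂ hμ₀ hμ₁,
    eventually_norm_sum_highPart_moebius_mul_highPart_vonMangoldt_mul_zeta_le hc₁ hc₂ hμ₀ hμ₁,
    eventually_scaledPhase_eq_zero hμ₀ (show (1 / 8 : ℝ) < 1 by norm_num),
    eventually_le_rpow 4 (savingExp_pos hc₂), eventually_ge_atTop 1]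
    with X hlog hzeta hbilinear hlow hX4 hX θ lam hlam hT
  rw [sum_vonMangoldt_mul_eq (hlow θ lam)
    fun n hn => scaledPhase_eq_zero fun h => hn.not_ge h.2]
  set E := X ^ (2 - c - 19 * savingExp c)
  set R := 1 + |θ| * fractWindow c X
  calc _ ≤ E * √R + E * √R + 2 * (E * √R) := norm_add_le_of_le
        (norm_sub_le_of_le (hlog θ lam hlam hT) (hzeta θ lam hlam hT)) (hbilinear θ lam hlam hT)
    _ = 4 * E * √R := by ring
    _ ≤ _ := by
        gcongr
        exact mul_rpow_le_rpow hX hX4 (by linarith)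

end Vaughan

/-! ### Fourier expansion of the phase with integer part -/

lemma hasDerivAt_e_mul (k x : ℝ) :
    HasDerivAt (fun t : ℝ => e (k * t)) (2 * π * Complex.I * k * e (k * x)) x := by
  simp only [e_eq_fourierChar]
  convert! (Real.hasDerivAt_fourierChar (k * x)).scomp x (hasDerivAt_const_mul k) using 1
  rw [Complex.real_smul]
  ring

lemma integral_e_mul {k : ℝ} (hk : k ≠ 0) (a b : ℝ) :
    ∫ t in a..b, e (k * t) = (e (k * b) - e (k * a)) / (2 * π * Complex.I * k) := by
  have hne : 2 * π * Complex.I * (k : ℂ) ≠ 0 :=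
    mul_ne_zero Complex.two_pi_I_ne_zero (Complex.ofReal_ne_zero.2 hk)
  simpa only [e, Complex.ofReal_mul, mul_assoc] using integral_exp_mul_complex hne

/-- The piecewise linear function which vanishes up to `1 - w` and then rises to `1` at `1`. -/
noncomputable def endRamp (w x : ℝ) : ℝ := max 0 ((x - 1 + w) / w)

/-- For `0 < w ≤ 1`, the phase `e(-αx)` corrected on the short interval `(1 - w, 1]` so that its
values at the end points of `[0, 1]` agree; its periodic extension is continuous and has absolutely
summable Fourier coefficients. -/
noncomputable def smoothPhase (α w x : ℝ) : ℂ := e (-α * x) + (1 - e (-α)) * endRamp w x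

/-- The Fourier coefficients of `smoothPhase α w` on `[0, 1]`. -/
noncomputable def phaseCoeff (α w : ℝ) (h : ℤ) : ℂ :=
  ∫ x in (0 : ℝ)..1, e (-h * x) * smoothPhase α w x

section endRamp

variable {α w x : ℝ}

lemma endRamp_nonneg : 0 ≤ endRamp w x := le_max_left _ _

lemma endRamp_le_one (hw : 0 < w) (hx : x ≤ 1) : endRamp w x ≤ 1 :=
  max_le zero_le_one ((div_le_one hw).2 (by linarith))

lemma endRamp_of_le (hw : 0 < w) (hx : x ≤ 1 - w) : endRamp w x = 0 :=
  max_eq_left (div_nonpos_of_nonpos_of_nonneg (by linarith) hw.le)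

lemma endRamp_of_ge (hw : 0 < w) (hx : 1 - w ≤ x) : endRamp w x = (x - 1 + w) / w :=
  max_eq_right (div_nonneg (by linarith) hw.le)

lemma continuous_endRamp (w : ℝ) : Continuous (endRamp w) := by
  unfold endRamp
  fun_prop

lemma continuous_e_mul (k : ℝ) : Continuous fun x => e (k * x) :=
  continuous_e.comp (continuous_const_mul k)

lemma continuous_e_mul_endRamp (k w : ℝ) : Continuous fun x => e (k * x) * endRamp w x :=
  (continuous_e_mul k).mul (Complex.continuous_ofReal.comp (continuous_endRamp w))

lemma continuous_smoothPhase (α w : ℝ) : Continuous (smoothPhase α w) :=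
  (continuous_e_mul (-α)).add
    (continuous_const.mul (Complex.continuous_ofReal.comp (continuous_endRamp w)))

lemma smoothPhase_zero_eq_one (hw₀ : 0 < w) (hw₁ : w ≤ 1) :
    smoothPhase α w 0 = smoothPhase α w 1 := by
  rw [smoothPhase, smoothPhase, endRamp_of_le hw₀ (by linarith), endRamp_of_ge hw₀ (by linarith),
    sub_self, zero_add, div_self hw₀.ne', mul_zero, e_zero, mul_one]
  push_cast
  ring

lemma norm_e_sub_one_le_two (α : ℝ) : ‖e α - 1‖ ≤ 2 :=
  (norm_sub_le _ _).trans_eq (by rw [norm_e, norm_one]; norm_num)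

lemma norm_one_sub_e_mul_endRamp_le (hw : 0 < w) (hx : x ≤ 1) :
    ‖(1 - e (-α)) * endRamp w x‖ ≤ 2 := by
  rw [norm_mul, norm_sub_rev, Complex.norm_real, Real.norm_of_nonneg endRamp_nonneg]
  exact (mul_le_of_le_one_right (norm_nonneg _) (endRamp_le_one hw hx)).trans
    (norm_e_sub_one_le_two _)

lemma norm_e_sub_smoothPhase_le (hw : 0 < w) (hx : x ≤ 1) :
    ‖e (-α * x) - smoothPhase α w x‖ ≤ if 1 - w < x then 2 else 0 := by
  rw [smoothPhase, sub_add_cancel_left, norm_neg]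
  split_ifs with hlt
  · exact norm_one_sub_e_mul_endRamp_le hw hx
  · rw [endRamp_of_le hw (not_lt.1 hlt), Complex.ofReal_zero, mul_zero, norm_zero]

lemma integral_e_mul_line {k : ℝ} (hk : k ≠ 0) (hw : w ≠ 0) :
    ∫ x in (1 - w)..1, e (-k * x) * ((x - 1 + w) / w) =
      e (-k) * (-1 / (2 * π * Complex.I * k) +
        (e (k * w) - 1) / ((2 * π * Complex.I * k) ^ 2 * w)) := by
  have hk' : (k : ℂ) ≠ 0 := Complex.ofReal_ne_zero.2 hk
  have hw' : (w : ℂ) ≠ 0 := Complex.ofReal_ne_zero.2 hw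
  have hI := Complex.two_pi_I_ne_zero
  set z := 2 * π * Complex.I with hz
  have hderiv (x : ℝ) : HasDerivAt
      (fun t : ℝ => e (-k * t) / -(z * k) * ((t - 1 + w) / w) - e (-k * t) / ((z * k) ^ 2 * w))
      (e (-k * x) * ((x - 1 + w) / w)) x := by
    have hexp := hasDerivAt_e_mul (-k) x
    have hline : HasDerivAt (fun t : ℝ => ((t : ℂ) - 1 + w) / w) (1 / w) x :=
      ((((hasDerivAt_id x).ofReal_comp).sub_const 1).add_const (w : ℂ)).div_const _
    convert! ((hexp.div_const (-(z * k))).mul hline).sub (hexp.div_const ((z * k) ^ 2 * w)) using 1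
    push_cast
    rw [← hz]
    field_simp
    ring
  have hcont : Continuous fun x : ℝ => e (-k * x) * ((x - 1 + w) / w) :=
    (continuous_e_mul _).mul (by fun_prop)
  have hsplit : e (-k * (1 - w)) = e (-k) * e (k * w) := by rw [← e_add]; ring_nf
  rw [intervalIntegral.integral_eq_sub_of_hasDerivAt (fun x _ => hderiv x)
    (hcont.intervalIntegrable _ _), mul_one, hsplit]
  push_cast
  field_simp
  ring

lemma integral_e_mul_endRamp {k : ℝ} (hk : k ≠ 0) (hw₀ : 0 < w) (hw₁ : w ≤ 1) :
    ∫ x in (0 : ℝ)..1, e (-k * x) * endRamp w x =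
      e (-k) * (-1 / (2 * π * Complex.I * k) +
        (e (k * w) - 1) / ((2 * π * Complex.I * k) ^ 2 * w)) := by
  have hcont := continuous_e_mul_endRamp (-k) w
  have hflat : ∫ x in (0 : ℝ)..(1 - w), e (-k * x) * endRamp w x = 0 := by
    refine (intervalIntegral.integral_congr fun x hx => ?_).trans intervalIntegral.integral_zero
    rw [Set.uIcc_of_le (by linarith)] at hx
    simp only [endRamp_of_le hw₀ hx.2, Complex.ofReal_zero, mul_zero]
  rw [← intervalIntegral.integral_add_adjacent_intervals (b := 1 - w)
    (hcont.intervalIntegrable _ _) (hcont.intervalIntegrable _ _), hflat, zero_add,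
    ← integral_e_mul_line hk hw₀.ne']
  refine intervalIntegral.integral_congr fun x hx => ?_
  rw [Set.uIcc_of_le (by linarith)] at hx
  simp only [endRamp_of_ge hw₀ hx.1]
  push_cast
  ring

end endRamp

section phaseCoeff

variable {α w : ℝ} {h : ℤ}

lemma norm_phaseCoeff_le_three (hw : 0 < w) (h : ℤ) : ‖phaseCoeff α w h‖ ≤ 3 := by
  have hbound (x : ℝ) (hx : x ∈ Set.uIoc 0 1) : ‖e (-h * x) * smoothPhase α w x‖ ≤ 3 := by
    rw [Set.uIoc_of_le zero_le_one] at hx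
    rw [norm_mul, norm_e, one_mul]
    exact (norm_add_le_of_le (norm_e _).le (norm_one_sub_e_mul_endRamp_le hw hx.2)).trans_eq
      (by norm_num)
  simpa [phaseCoeff] using intervalIntegral.norm_integral_le_of_norm_le_const hbound

lemma half_abs_le_abs_add_intCast (hα : |α| ≤ 1 / 2) (hh : h ≠ 0) : |(h : ℝ)| / 2 ≤ |α + h| := by
  have hone : (1 : ℝ) ≤ |(h : ℝ)| := by exact_mod_cast Int.one_le_abs hh
  have htri := abs_sub (α + h) α
  rw [add_sub_cancel_left] at htri
  linarith

lemma phaseCoeff_eq (hα : |α| ≤ 1 / 2) (hw₀ : 0 < w) (hw₁ : w ≤ 1) (hh : h ≠ 0) :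
    phaseCoeff α w h = (1 - e (-α)) *
      (-α / (2 * π * Complex.I * h * (α + h)) +
        (e (h * w) - 1) / ((2 * π * Complex.I * h) ^ 2 * w)) := by
  have hhR : (h : ℝ) ≠ 0 := Int.cast_ne_zero.2 hh
  have hne : α + h ≠ 0 :=
    abs_pos.1 ((half_pos (abs_pos.2 hhR)).trans_le (half_abs_le_abs_add_intCast hα hh))
  have hsplit : phaseCoeff α w h = (∫ x in (0 : ℝ)..1, e (-(α + h) * x)) +
      (1 - e (-α)) * ∫ x in (0 : ℝ)..1, e (-(h : ℝ) * x) * endRamp w x := by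
    rw [← intervalIntegral.integral_const_mul, ← intervalIntegral.integral_add
      ((continuous_e_mul _).intervalIntegrable _ _)
      (((continuous_e_mul_endRamp _ w).intervalIntegrable _ _).const_mul _)]
    refine intervalIntegral.integral_congr fun x _ => ?_
    have hadd : e (-(α + h) * x) = e (-h * x) * e (-α * x) := by rw [← e_add]; ring_nf
    simp only [smoothPhase, hadd]
    ring
  have he : e (-(h : ℝ)) = 1 := by exact_mod_cast e_intCast (-h)
  have he_add : e (-(α + h)) = e (-α) := by rw [neg_add, e_add, he, mul_one]
  have hneC : (α : ℂ) + h ≠ 0 := by exact_mod_cast hne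
  have hhC : (h : ℂ) ≠ 0 := Int.cast_ne_zero.2 hh
  have hwC : (w : ℂ) ≠ 0 := Complex.ofReal_ne_zero.2 hw₀.ne'
  rw [hsplit, integral_e_mul (neg_ne_zero.2 hne), integral_e_mul_endRamp hhR hw₀ hw₁, he, mul_one,
    mul_zero, e_zero, he_add]
  generalize e (h * w) = E
  rw [Complex.ofReal_neg, Complex.ofReal_add, Complex.ofReal_intCast]
  field_simp
  ring

lemma norm_two_pi_I_mul_intCast (h : ℤ) : ‖(2 * π * Complex.I * h : ℂ)‖ = 2 * π * |(h : ℝ)| := by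
  rw [norm_mul, Complex.norm_intCast, norm_mul, Complex.norm_I, mul_one, norm_mul,
    Complex.norm_real, Real.norm_of_nonneg Real.pi_pos.le, Complex.norm_ofNat]

lemma norm_linear_part_phaseCoeff_le (hα : |α| ≤ 1 / 2) (hh : h ≠ 0) :
    ‖(-α / (2 * π * Complex.I * h * (α + h)) : ℂ)‖ ≤ 1 / (6 * |(h : ℝ)| ^ 2) := by
  have : 0 < |(h : ℝ)| := abs_pos.2 (Int.cast_ne_zero.2 hh)
  have hhalf := half_abs_le_abs_add_intCast hα hh
  have hnorm : ‖(α + h : ℂ)‖ = |α + h| := by exact_mod_cast Complex.norm_real (α + h)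
  rw [norm_div, norm_neg, Complex.norm_real, Real.norm_eq_abs, norm_mul, hnorm,
    norm_two_pi_I_mul_intCast]
  calc |α| / (2 * π * |(h : ℝ)| * |α + h|) ≤ (1 / 2) / (2 * 3 * |(h : ℝ)| * (|(h : ℝ)| / 2)) := by
        gcongr
        exact Real.pi_gt_three.le
    _ = 1 / (6 * |(h : ℝ)| ^ 2) := by field_simp; norm_num

lemma norm_e_sub_one_le_mul_abs (x : ℝ) : ‖e x - 1‖ ≤ 2 * π * |x| := by
  rw [norm_e_sub_one, mul_assoc, ← abs_of_pos Real.pi_pos, ← abs_mul, abs_of_pos Real.pi_pos]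
  exact mul_le_mul_of_nonneg_left Real.abs_sin_le_abs zero_le_two

lemma norm_ramp_part_phaseCoeff_le (hw : 0 < w) (hh : h ≠ 0) :
    ‖(e (h * w) - 1) / ((2 * π * Complex.I * h : ℂ) ^ 2 * w)‖ ≤ 1 / (6 * |(h : ℝ)|) ∧
      ‖(e (h * w) - 1) / ((2 * π * Complex.I * h : ℂ) ^ 2 * w)‖ ≤
        1 / (18 * (w * |(h : ℝ)| ^ 2)) := by
  have : 0 < |(h : ℝ)| := abs_pos.2 (Int.cast_ne_zero.2 hh)
  have hπ := Real.pi_gt_three.le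
  rw [norm_div, norm_mul, norm_pow, norm_two_pi_I_mul_intCast, Complex.norm_real,
    Real.norm_of_nonneg hw.le]
  constructor
  · calc _ ≤ 2 * π * |h * w| / ((2 * π * |(h : ℝ)|) ^ 2 * w) := by
          gcongr
          exact norm_e_sub_one_le_mul_abs _
      _ = 1 / (2 * π * |(h : ℝ)|) := by
          rw [abs_mul, abs_of_pos hw]
          field_simp
      _ ≤ 1 / (2 * 3 * |(h : ℝ)|) := by gcongr
      _ = 1 / (6 * |(h : ℝ)|) := by norm_num
  · calc _ ≤ 2 / ((2 * 3 * |(h : ℝ)|) ^ 2 * w) := by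
          gcongr
          exact norm_e_sub_one_le_two _
      _ = 1 / (18 * (w * |(h : ℝ)| ^ 2)) := by field_simp; norm_num

lemma norm_phaseCoeff_le (hα : |α| ≤ 1 / 2) (hw₀ : 0 < w) (hw₁ : w ≤ 1) (hh : h ≠ 0) :
    ‖phaseCoeff α w h‖ ≤ 1 / |(h : ℝ)| ∧ ‖phaseCoeff α w h‖ ≤ 1 / (w * |(h : ℝ)| ^ 2) := by
  have hone : (1 : ℝ) ≤ |(h : ℝ)| := by exact_mod_cast Int.one_le_abs hh
  have hlinear := norm_linear_part_phaseCoeff_le hα hh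
  obtain ⟨hramp, hramp_sq⟩ := norm_ramp_part_phaseCoeff_le hw₀ hh
  rw [phaseCoeff_eq hα hw₀ hw₁ hh, norm_mul, norm_sub_rev]
  set H := |(h : ℝ)|
  constructor
  · calc _ ≤ 2 * (1 / (6 * H ^ 2) + 1 / (6 * H)) :=
          mul_le_mul (norm_e_sub_one_le_two _) (norm_add_le_of_le hlinear hramp) (norm_nonneg _)
            zero_le_two
      _ ≤ 2 * (1 / (6 * H) + 1 / (6 * H)) := by
          gcongr
          exact le_self_pow₀ hone two_ne_zero
      _ = 2 / 3 * (1 / H) := by field_simp; norm_num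
      _ ≤ 1 / H := mul_le_of_le_one_left (by positivity) (by norm_num)
  · calc _ ≤ 2 * (1 / (6 * H ^ 2) + 1 / (18 * (w * H ^ 2))) :=
          mul_le_mul (norm_e_sub_one_le_two _) (norm_add_le_of_le hlinear hramp_sq) (norm_nonneg _)
            zero_le_two
      _ ≤ 2 * (1 / (6 * (w * H ^ 2)) + 1 / (18 * (w * H ^ 2))) := by
          gcongr
          exact mul_le_of_le_one_left (by positivity) hw₁
      _ = 4 / 9 * (1 / (w * H ^ 2)) := by field_simp; norm_num
      _ ≤ 1 / (w * H ^ 2) := mul_le_of_le_one_left (by positivity) (by norm_num)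

lemma summable_phaseCoeff (hα : |α| ≤ 1 / 2) (hw₀ : 0 < w) (hw₁ : w ≤ 1) :
    Summable (phaseCoeff α w) := by
  have hsq : Summable fun h : ℤ => 1 / w * |(h : ℝ)| ^ (-2 : ℝ) :=
    (Real.summable_abs_int_rpow one_lt_two).mul_left _
  refine hsq.of_norm_bounded_eventually ?_
  filter_upwards [(Set.finite_singleton (0 : ℤ)).compl_mem_cofinite] with h hh
  refine (norm_phaseCoeff_le hα hw₀ hw₁ hh).2.trans_eq ?_
  rw [Real.rpow_neg (abs_nonneg _), Real.rpow_two, one_div_mul_eq_div, one_div, mul_inv, mul_comm,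
    div_eq_mul_inv]

lemma fourier_coe_eq_e (h : ℤ) (x : ℝ) : fourier h (x : AddCircle (1 : ℝ)) = e (h * x) := by
  rw [fourier_coe_apply, e]
  push_cast
  ring_nf

lemma hasSum_smoothPhase (hα : |α| ≤ 1 / 2) (hw₀ : 0 < w) (hw₁ : w ≤ 1) (t : ℝ) :
    HasSum (fun h : ℤ => phaseCoeff α w h * e (h * t)) (smoothPhase α w (Int.fract t)) := by
  have : Fact ((0 : ℝ) < 1) := ⟨one_pos⟩
  let f : C(AddCircle (1 : ℝ), ℂ) := ⟨AddCircle.liftIco 1 0 (smoothPhase α w),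
    AddCircle.liftIco_zero_continuous (smoothPhase_zero_eq_one hw₀ hw₁)
      (continuous_smoothPhase α w).continuousOn⟩
  have hcoeff : fourierCoeff f = phaseCoeff α w := funext fun h => by
    change fourierCoeff (AddCircle.liftIco 1 0 (smoothPhase α w)) h = _
    rw [fourierCoeff_liftIco_eq, fourierCoeffOn_eq_integral]
    simp only [zero_add, sub_zero, div_one, one_smul, smul_eq_mul, phaseCoeff]
    refine intervalIntegral.integral_congr fun x _ => congrArg (· * _) ?_
    rw [fourier_coe_apply, e]
    push_cast
    ring_nf
  have hf : f (t : AddCircle (1 : ℝ)) = smoothPhase α w (Int.fract t) := by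
    rw [← AddCircle.coe_fract]
    exact AddCircle.liftIco_zero_coe_apply (f := smoothPhase α w)
      ⟨Int.fract_nonneg t, Int.fract_lt_one t⟩
  have hsum := has_pointwise_sum_fourier_series_of_summable
    (hcoeff ▸ summable_phaseCoeff hα hw₀ hw₁ : Summable (fourierCoeff f)) (t : AddCircle (1 : ℝ))
  simpa only [hcoeff, hf, smul_eq_mul, fourier_coe_eq_e] using hsum

lemma hasSum_phaseCoeff_mul_e (hα : |α| ≤ 1 / 2) (hw₀ : 0 < w) (hw₁ : w ≤ 1) (t : ℝ) :
    HasSum (fun h : ℤ => phaseCoeff α w h * e ((α + h) * t))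
      (e (α * t) * smoothPhase α w (Int.fract t)) := by
  convert! (hasSum_smoothPhase hα hw₀ hw₁ t).mul_left (e (α * t)) using 2 with h
  rw [add_mul, e_add]
  ring

theorem norm_e_mul_floor_sub_tsum_le (hα : |α| ≤ 1 / 2) (hw₀ : 0 < w) (hw₁ : w ≤ 1) (t : ℝ) :
    ‖e (α * ⌊t⌋) - ∑' h : ℤ, phaseCoeff α w h * e ((α + h) * t)‖ ≤
      if 1 - w < Int.fract t then 2 else 0 := by
  have hfloor : e (α * ⌊t⌋) = e (α * t) * e (-α * Int.fract t) := by
    rw [← e_add]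
    congr 1
    linear_combination α * Int.floor_add_fract t
  rw [(hasSum_phaseCoeff_mul_e hα hw₀ hw₁ t).tsum_eq, hfloor, ← mul_sub, norm_mul, norm_e, one_mul]
  exact norm_e_sub_smoothPhase_le hw₀ (Int.fract_lt_one t).le

end phaseCoeff

/-! ### Fractional parts close to one -/

lemma e_re (t : ℝ) : (e t).re = Real.cos (2 * π * t) := by
  rw [← Complex.exp_ofReal_mul_I_re, e]
  push_cast
  ring_nf

lemma half_le_e_re {t : ℝ} (ht : |t| ≤ 1 / 8) : 1 / 2 ≤ (e t).re := by
  have hsmall : |2 * π * t| ≤ 1 := by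
    rw [abs_mul, abs_of_pos Real.two_pi_pos]
    nlinarith [Real.pi_lt_four, abs_nonneg t]
  rw [e_re]
  linarith [Real.one_sub_sq_div_two_le_cos (x := 2 * π * t), (sq_le_one_iff_abs_le_one _).2 hsmall]

lemma e_natCast_mul_eq (j : ℕ) (t : ℝ) : e (j * t) = e (-(j * (1 - Int.fract t))) := by
  have hphase : j * t = ((j * (⌊t⌋ + 1) : ℤ) : ℝ) + -(j * (1 - Int.fract t)) := by
    push_cast
    linear_combination -(j : ℝ) * Int.floor_add_fract t
  rw [hphase, e_add, e_intCast, one_mul]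

lemma half_le_norm_sum_range_e_mul {t w : ℝ} {K : ℕ} (hKw : K * w ≤ 1 / 8)
    (ht : 1 - w < Int.fract t) : (K : ℝ) / 2 ≤ ‖∑ j ∈ range K, e (j * t)‖ := by
  have hterm (j : ℕ) (hj : j ∈ range K) : 1 / 2 ≤ (e (j * t)).re := by
    have hjK : (j : ℝ) ≤ K := by exact_mod_cast (mem_range.1 hj).le
    have hdist : 0 ≤ 1 - Int.fract t := sub_nonneg.2 (Int.fract_lt_one t).le
    rw [e_natCast_mul_eq]
    refine half_le_e_re ?_
    rw [abs_neg, abs_of_nonneg (by positivity)]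
    exact (mul_le_mul hjK (by linarith) hdist (by positivity)).trans hKw
  calc (K : ℝ) / 2 = #(range K) • (1 / 2 : ℝ) := by
        rw [card_range, nsmul_eq_mul, mul_one_div]
    _ ≤ ∑ j ∈ range K, (e (j * t)).re := card_nsmul_le_sum _ _ _ hterm
    _ = (∑ j ∈ range K, e (j * t)).re := (Complex.re_sum _ _).symm
    _ ≤ _ := Complex.re_le_norm _

lemma norm_sq_sum_range_e_mul (t : ℝ) (K : ℕ) :
    ((‖∑ j ∈ range K, e (j * t)‖ ^ 2 : ℝ) : ℂ) =
      ∑ j ∈ range K, ∑ i ∈ range K, e (((j - i : ℤ) : ℝ) * t) := by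
  rw [Complex.ofReal_pow, ← Complex.mul_conj', map_sum, sum_mul_sum]
  refine sum_congr rfl fun j _ => sum_congr rfl fun i _ => ?_
  rw [conj_e, ← e_add]
  push_cast
  ring_nf

section FejerKernel

variable {ι : Type*} {s : Finset ι} {f : ι → ℝ} {K : ℕ} {B w : ℝ}

lemma sum_norm_sq_sum_range_e_mul_le
    (hB : ∀ k : ℤ, k ≠ 0 → |k| ≤ K → ‖∑ n ∈ s, e (k * f n)‖ ≤ B) (hB₀ : 0 ≤ B) :
    ∑ n ∈ s, ‖∑ j ∈ range K, e (j * f n)‖ ^ 2 ≤ K * #s + K ^ 2 * B := by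
  have hexpand : ((∑ n ∈ s, ‖∑ j ∈ range K, e (j * f n)‖ ^ 2 : ℝ) : ℂ) =
      ∑ j ∈ range K, ∑ i ∈ range K, ∑ n ∈ s, e (((j - i : ℤ) : ℝ) * f n) := by
    rw [Complex.ofReal_sum]
    simp only [norm_sq_sum_range_e_mul]
    rw [sum_comm]
    exact sum_congr rfl fun j _ => sum_comm
  have hnonneg : 0 ≤ ∑ n ∈ s, ‖∑ j ∈ range K, e (j * f n)‖ ^ 2 := by positivity
  rw [← Complex.norm_of_nonneg hnonneg, hexpand]
  have hentry (j : ℕ) (hj : j ∈ range K) (i : ℕ) (hi : i ∈ range K) :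
      ‖∑ n ∈ s, e (((j - i : ℤ) : ℝ) * f n)‖ ≤ (if j = i then (#s : ℝ) else 0) + B := by
    rw [mem_range] at hi hj
    split_ifs with hji
    · exact (norm_sum_e_le_card _ _).trans (le_add_of_nonneg_right hB₀)
    · rw [zero_add]
      exact hB _ (by omega) (by rw [abs_le]; omega)
  calc _ ≤ ∑ j ∈ range K, ∑ i ∈ range K, ((if j = i then (#s : ℝ) else 0) + B) :=
        norm_sum_le_of_le _ fun j hj => norm_sum_le_of_le _ (hentry j hj)
    _ = ∑ _j ∈ range K, (#s + K * B) := sum_congr rfl fun _ hj => by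
        rw [sum_add_distrib, sum_ite_eq, if_pos hj, sum_const, card_range, nsmul_eq_mul]
    _ = K * #s + K ^ 2 * B := by rw [sum_const, card_range, nsmul_eq_mul]; ring

/-- The Fejér kernel of length `K` is at least `K / 4` at each point that is counted. -/
lemma card_filter_fract_le (hK : 0 < K) (hKw : K * w ≤ 1 / 8)
    (hB : ∀ k : ℤ, k ≠ 0 → |k| ≤ K → ‖∑ n ∈ s, e (k * f n)‖ ≤ B) (hB₀ : 0 ≤ B) :
    (#{n ∈ s | 1 - w < Int.fract (f n)} : ℝ) ≤ 4 * #s / K + 4 * B := by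
  have : (0 : ℝ) < K := by exact_mod_cast hK
  have hlarge : #{n ∈ s | 1 - w < Int.fract (f n)} * ((K : ℝ) / 2) ^ 2 ≤ K * #s + K ^ 2 * B := calc
    _ ≤ ∑ n ∈ s with 1 - w < Int.fract (f n), ‖∑ j ∈ range K, e (j * f n)‖ ^ 2 := by
      rw [← nsmul_eq_mul]
      refine card_nsmul_le_sum _ _ _ fun n hn => ?_
      have := half_le_norm_sum_range_e_mul hKw (mem_filter.1 hn).2
      gcongr
    _ ≤ ∑ n ∈ s, ‖∑ j ∈ range K, e (j * f n)‖ ^ 2 :=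
      sum_le_sum_of_subset_of_nonneg (filter_subset _ _) fun n _ _ => by positivity
    _ ≤ _ := sum_norm_sq_sum_range_e_mul_le hB hB₀
  rw [show 4 * #s / K + 4 * B = (K * #s + K ^ 2 * B) / ((K : ℝ) / 2) ^ 2 by field_simp; ring,
    le_div_iff₀ (by positivity)]
  exact hlarge

end FejerKernel

lemma exists_norm_sum_e_mul_rpow_Ioc_le {c μ : ℝ} (hc₁ : 1 < c) (hc₂ : c ≤ 2) (hμ₀ : 0 < μ)
    (hμ₁ : μ ≤ 1) :
    ∃ C ≥ 1, ∀ κ X : ℝ, 1 ≤ |κ| → 1 ≤ μ * X →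
      ‖∑ n ∈ Ioc ⌊μ * X⌋₊ ⌊X⌋₊, e (κ * (n : ℝ) ^ c)‖ ≤ C * √(|κ| * X ^ c) := by
  obtain ⟨C, hC, hbound⟩ := exists_norm_sum_e_mul_rpow_modEq_le hc₁ hc₂ (1 / μ)
  refine ⟨2 * C, by linarith, fun κ X hκ hX => ?_⟩
  have hX₀ : 0 < X := pos_of_mul_pos_right (zero_lt_one.trans_le hX) hμ₀.le
  have hμX : μ * X ≤ X := mul_le_of_le_one_left hX₀.le hμ₁
  have hsum := hbound κ (μ * X) 1 0 ⌊μ * X⌋₊ ⌊X⌋₊ (abs_pos.1 (by linarith)) hX one_pos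
    (Nat.lt_floor_add_one _).le
    (by rw [← mul_assoc, one_div_mul_cancel hμ₀.ne', one_mul]; exact Nat.floor_le hX₀.le)
  rw [filter_true_of_mem fun m _ => Nat.modEq_one] at hsum
  set s := √(|κ| * (μ * X) ^ c)
  have hs : s ≤ √(|κ| * X ^ c) := Real.sqrt_le_sqrt <|
    mul_le_mul_of_nonneg_left (Real.rpow_le_rpow (by linarith) hμX (by linarith)) (abs_nonneg κ)
  have hM : √(μ * X) ≤ s := Real.sqrt_le_sqrt <| calc
    μ * X ≤ (μ * X) ^ c := Real.self_le_rpow_of_one_le hX hc₁.le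
    _ ≤ |κ| * (μ * X) ^ c := le_mul_of_one_le_left (by positivity) hκ
  have hdiv : μ * X / s ≤ s := calc
    μ * X / s ≤ μ * X / √(μ * X) := by gcongr
    _ = √(μ * X) := Real.div_sqrt
    _ ≤ s := hM
  calc _ ≤ C * (s + μ * X / s) := hsum
    _ ≤ C * (√(|κ| * X ^ c) + √(|κ| * X ^ c)) := by gcongr; exact hdiv.trans hs
    _ = 2 * C * √(|κ| * X ^ c) := by ring

lemma exists_card_fract_rpow_le {c μ : ℝ} (hc₁ : 1 < c) (hc₂ : c ≤ 2) (hμ₀ : 0 < μ)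
    (hμ₁ : μ ≤ 1) :
    ∃ C ≥ 1, ∀ (X w : ℝ) (K : ℕ), 1 ≤ μ * X → 0 < K → K * w ≤ 1 / 8 →
      (#{n ∈ Ioc ⌊μ * X⌋₊ ⌊X⌋₊ | 1 - w < Int.fract (((n : ℕ) : ℝ) ^ c)} : ℝ) ≤
        4 * X / K + C * √(K * X ^ c) := by
  obtain ⟨C, hC, hbound⟩ := exists_norm_sum_e_mul_rpow_Ioc_le hc₁ hc₂ hμ₀ hμ₁
  refine ⟨4 * C, by linarith, fun X w K hX hK hKw => ?_⟩
  have hX₀ : 0 < X := pos_of_mul_pos_right (zero_lt_one.trans_le hX) hμ₀.le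
  have hcard : (#(Ioc ⌊μ * X⌋₊ ⌊X⌋₊) : ℝ) ≤ X := by
    rw [Nat.card_Ioc]
    exact le_trans (by exact_mod_cast Nat.sub_le _ _) (Nat.floor_le hX₀.le)
  have hfreq (k : ℤ) (hk : k ≠ 0) (hkK : |k| ≤ K) :
      ‖∑ n ∈ Ioc ⌊μ * X⌋₊ ⌊X⌋₊, e (k * (n : ℝ) ^ c)‖ ≤ C * √(K * X ^ c) := by
    have hkK' : |(k : ℝ)| ≤ K := by exact_mod_cast hkK
    exact (hbound k X (by exact_mod_cast Int.one_le_abs hk) hX).trans (by gcongr)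
  calc _ ≤ 4 * #(Ioc ⌊μ * X⌋₊ ⌊X⌋₊) / K + 4 * (C * √(K * X ^ c)) :=
        card_filter_fract_le hK hKw hfreq (by positivity)
    _ ≤ 4 * X / K + 4 * (C * √(K * X ^ c)) := by gcongr
    _ = 4 * X / K + 4 * C * √(K * X ^ c) := by ring

lemma eventually_one_le_mul {μ : ℝ} (hμ : 0 < μ) : ∀ᶠ X : ℝ in atTop, 1 ≤ μ * X :=
  (tendsto_id.const_mul_atTop hμ).eventually_ge_atTop 1

lemma eventually_card_fractWindow_le {c μ : ℝ} (hc₁ : 1 < c) (hc₂ : c < 17 / 16) (hμ₀ : 0 < μ)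
    (hμ₁ : μ ≤ 1) :
    ∀ᶠ X : ℝ in atTop,
      (#{n ∈ Ioc ⌊μ * X⌋₊ ⌊X⌋₊ | 1 - fractWindow c X < Int.fract (((n : ℕ) : ℝ) ^ c)} : ℝ) ≤
        X ^ (2 - c - 19 * savingExp c) := by
  have hε := savingExp_pos hc₂
  have hcε := eq_sub_mul_savingExp c
  obtain ⟨C, hC, hcount⟩ := exists_card_fract_rpow_le hc₁ (by linarith) hμ₀ hμ₁
  filter_upwards [eventually_le_rpow (64 + C) hε,
    eventually_le_rpow 16 (show 0 < c - 1 + 20 * savingExp c by linarith), eventually_ge_atTop 1,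
    eventually_one_le_mul hμ₀] with X hCX hX₁₆ hX₁ hμX
  have hX : 0 < X := zero_lt_one.trans_le hX₁
  set ε := savingExp c with hε_def
  set H := X ^ (c - 1 + 20 * ε) with hH
  set K := ⌊H / 8⌋₊
  have hwindow : fractWindow c X = H⁻¹ := by
    rw [fractWindow, ← hε_def, hH, ← Real.rpow_neg hX.le]
    ring_nf
  have hK_le : (K : ℝ) ≤ H / 8 := Nat.floor_le (by linarith)
  have hK_ge : H / 16 ≤ K := by linarith [Nat.lt_floor_add_one (H / 8)]
  have hK : 0 < K := by
    have : (0 : ℝ) < K := by linarith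
    exact_mod_cast this
  have hKw : K * fractWindow c X ≤ 1 / 8 := by
    rw [hwindow, ← div_eq_mul_inv, div_le_iff₀ (by linarith)]
    linarith
  have hmain : 4 * X / K ≤ 64 * X ^ (2 - c - 20 * ε) := calc
    4 * X / K ≤ 4 * X / (H / 16) := by gcongr
    _ = 64 * (X ^ (1 : ℝ) / H) := by rw [Real.rpow_one]; field_simp; norm_num
    _ = 64 * X ^ (2 - c - 20 * ε) := by rw [hH, ← Real.rpow_sub hX]; ring_nf
  have hroot : √(K * X ^ c) ≤ X ^ (2 - c - 20 * ε) := calc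
    √(K * X ^ c) ≤ √(H * X ^ c) := by gcongr; linarith
    _ = X ^ ((c - 1 + 20 * ε + c) / 2) := by rw [← Real.rpow_add hX, sqrt_rpow hX.le]
    _ ≤ _ := Real.rpow_le_rpow_of_exponent_le hX₁ (by linarith)
  calc _ ≤ 4 * X / K + C * √(K * X ^ c) := hcount X _ K hμX hK hKw
    _ ≤ 64 * X ^ (2 - c - 20 * ε) + C * X ^ (2 - c - 20 * ε) := by gcongr
    _ = (64 + C) * X ^ (2 - c - 20 * ε) := by ring
    _ ≤ X ^ (2 - c - 19 * ε) := mul_rpow_le_rpow hX₁ hCX (by linarith)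

/-! ### Removing the integer part from the phase -/

section RemoveFloor

variable {α w : ℝ}

lemma norm_sum_mul_e_floor_le {ι : Type*} {s : Finset ι} {v : ι → ℂ} {V : ℝ} (hα : |α| ≤ 1 / 2)
    (hw₀ : 0 < w) (hw₁ : w ≤ 1) (hV : 0 ≤ V) (hv : ∀ n ∈ s, ‖v n‖ ≤ V) (t : ι → ℝ) :
    ‖∑ n ∈ s, v n * e (α * ⌊t n⌋)‖ ≤ V * (2 * #{n ∈ s | 1 - w < Int.fract (t n)}) +
      ‖∑' h : ℤ, phaseCoeff α w h * ∑ n ∈ s, v n * e ((α + h) * t n)‖ := by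
  have hswap : ∑' h : ℤ, phaseCoeff α w h * ∑ n ∈ s, v n * e ((α + h) * t n) =
      ∑ n ∈ s, v n * ∑' h : ℤ, phaseCoeff α w h * e ((α + h) * t n) := by
    simp only [← tsum_mul_left, mul_sum]
    rw [← Summable.tsum_finsetSum fun n _ =>
      (hasSum_phaseCoeff_mul_e hα hw₀ hw₁ (t n)).summable.mul_left (v n)]
    exact tsum_congr fun h => sum_congr rfl fun n _ => mul_left_comm _ _ _
  have herror : ‖∑ n ∈ s, v n * e (α * ⌊t n⌋) -
      ∑ n ∈ s, v n * ∑' h : ℤ, phaseCoeff α w h * e ((α + h) * t n)‖ ≤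
        V * (2 * #{n ∈ s | 1 - w < Int.fract (t n)}) := by
    simp only [← sum_sub_distrib, ← mul_sub]
    calc _ ≤ ∑ n ∈ s, V * (if 1 - w < Int.fract (t n) then 2 else 0) :=
          norm_sum_le_of_le _ fun n hn => by
            rw [norm_mul]
            exact mul_le_mul (hv n hn) (norm_e_mul_floor_sub_tsum_le hα hw₀ hw₁ _) (norm_nonneg _)
              hV
      _ = V * (2 * #{n ∈ s | 1 - w < Int.fract (t n)}) := by
          rw [← mul_sum, ← sum_filter, sum_const, nsmul_eq_mul, mul_comm 2]
  rw [hswap]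
  exact (norm_le_norm_sub_add _ _).trans (by gcongr)

lemma sqrt_one_add_two_mul_le (x : ℝ) : √(1 + 2 * x) ≤ 3 * max 1 (√x) := by
  refine Real.sqrt_le_iff.2 ⟨by positivity, ?_⟩
  have hone : 1 ≤ max 1 (√x) ^ 2 := one_le_pow₀ (le_max_left _ _)
  have hsq : x ≤ max 1 (√x) ^ 2 := by
    rw [← Real.sqrt_le_left (by positivity)]
    exact le_max_right _ _
  nlinarith

lemma min_mul_max_sqrt_le {x ε : ℝ} (hx : 0 < x) (hε₀ : 0 ≤ ε) (hε₁ : ε ≤ 1 / 2) :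
    min 1 x⁻¹ * max 1 (√x) ≤ x ^ (-ε) := by
  rcases le_total x 1 with hx₁ | hx₁
  · rw [min_eq_left (one_le_inv_iff₀.2 ⟨hx, hx₁⟩), max_eq_left (Real.sqrt_le_one.2 hx₁), one_mul]
    exact Real.one_le_rpow_of_pos_of_le_one_of_nonpos hx hx₁ (neg_nonpos.2 hε₀)
  · rw [min_eq_right (inv_le_one_of_one_le₀ hx₁), max_eq_right (Real.one_le_sqrt.2 hx₁),
      Real.sqrt_eq_rpow, ← Real.rpow_neg_one, ← Real.rpow_add hx]
    exact Real.rpow_le_rpow_of_exponent_le hx₁ (by linarith)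

/-- Interpolating the two bounds for the coefficients keeps them summable against the weight. -/
lemma norm_phaseCoeff_mul_sqrt_le {ε : ℝ} {h : ℤ} (hα : |α| ≤ 1 / 2) (hw₀ : 0 < w) (hw₁ : w ≤ 1)
    (hε₀ : 0 ≤ ε) (hε₁ : ε ≤ 1 / 2) (hh : h ≠ 0) :
    ‖phaseCoeff α w h‖ * √(1 + |α + h| * w) ≤ 3 * w ^ (-ε) * |(h : ℝ)| ^ (-(1 + ε)) := by
  obtain ⟨hcoeff, hcoeff_sq⟩ := norm_phaseCoeff_le hα hw₀ hw₁ hh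
  have hone : (1 : ℝ) ≤ |(h : ℝ)| := by exact_mod_cast Int.one_le_abs hh
  have habs : |α + h| ≤ 2 * |(h : ℝ)| := (abs_add_le _ _).trans (by linarith)
  set H := |(h : ℝ)|
  have hH : 0 < H := by linarith
  have hmin : ‖phaseCoeff α w h‖ ≤ H⁻¹ * min 1 (H * w)⁻¹ := by
    rw [mul_min_of_nonneg _ _ (by positivity)]
    refine le_min (hcoeff.trans_eq (by ring)) (hcoeff_sq.trans_eq ?_)
    field_simp
  have hsqrt : √(1 + |α + h| * w) ≤ 3 * max 1 (√(H * w)) := calc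
    _ ≤ √(1 + 2 * (H * w)) := by
      rw [← mul_assoc]
      gcongr
    _ ≤ _ := sqrt_one_add_two_mul_le _
  calc _ ≤ H⁻¹ * min 1 (H * w)⁻¹ * (3 * max 1 (√(H * w))) := by gcongr
    _ = 3 * H⁻¹ * (min 1 (H * w)⁻¹ * max 1 (√(H * w))) := by ring
    _ ≤ 3 * H⁻¹ * (H * w) ^ (-ε) := by
        gcongr
        exact min_mul_max_sqrt_le (by positivity) hε₀ hε₁
    _ = 3 * w ^ (-ε) * H ^ (-(1 + ε)) := by
        rw [Real.mul_rpow hH.le hw₀.le, neg_add, Real.rpow_add hH, Real.rpow_neg_one]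
        ring

lemma norm_tsum_phaseCoeff_mul_le {ε E : ℝ} {F : ℤ → ℂ} (hα : |α| ≤ 1 / 2) (hw₀ : 0 < w)
    (hw₁ : w ≤ 1) (hε₀ : 0 < ε) (hε₁ : ε ≤ 1 / 2) (hE : 0 ≤ E)
    (hF : ∀ h : ℤ, ‖F h‖ ≤ E * √(1 + |α + h| * w)) :
    ‖∑' h : ℤ, phaseCoeff α w h * F h‖ ≤
      6 * E + 3 * w ^ (-ε) * E * ∑' h : ℤ, |(h : ℝ)| ^ (-(1 + ε)) := by
  have hmajorant : HasSum (fun h : ℤ => (if h = 0 then 6 * E else 0) +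
      3 * w ^ (-ε) * E * |(h : ℝ)| ^ (-(1 + ε)))
      (6 * E + 3 * w ^ (-ε) * E * ∑' h : ℤ, |(h : ℝ)| ^ (-(1 + ε))) :=
    (hasSum_ite_eq 0 (6 * E)).add
      ((Real.summable_abs_int_rpow (by linarith)).hasSum.mul_left _)
  refine tsum_of_norm_bounded hmajorant fun h => ?_
  rw [norm_mul]
  split_ifs with hh
  · have hsqrt : √(1 + |α + h| * w) ≤ 2 := by
      rw [Real.sqrt_le_iff, hh, Int.cast_zero, add_zero]
      exact ⟨zero_le_two, by nlinarith [abs_nonneg α]⟩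
    calc ‖phaseCoeff α w h‖ * ‖F h‖ ≤ 3 * (E * 2) :=
          mul_le_mul (norm_phaseCoeff_le_three hw₀ h) ((hF h).trans (by gcongr)) (norm_nonneg _)
            zero_le_three
      _ = 6 * E := by ring
      _ ≤ _ := le_add_of_nonneg_right (by positivity)
  · calc ‖phaseCoeff α w h‖ * ‖F h‖ ≤ ‖phaseCoeff α w h‖ * (E * √(1 + |α + h| * w)) := by
          gcongr
          exact hF h
      _ = E * (‖phaseCoeff α w h‖ * √(1 + |α + h| * w)) := by ring
      _ ≤ E * (3 * w ^ (-ε) * |(h : ℝ)| ^ (-(1 + ε))) :=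
          mul_le_mul_of_nonneg_left (norm_phaseCoeff_mul_sqrt_le hα hw₀ hw₁ hε₀.le hε₁ hh) hE
      _ = _ := by ring

end RemoveFloor

/-- The von Mangoldt function weighted by the sieve convolution, which gives the coefficients of `L`
after the higher prime powers have been added. -/
noncomputable def siftedMangoldt (D : ℝ) (lam : ℕ → ℝ) (n : ℕ) : ℂ :=
  (ArithmeticFunction.vonMangoldt n : ℂ) * sieveConv D lam n

lemma norm_siftedMangoldt (D : ℝ) (lam : ℕ → ℝ) (n : ℕ) :
    ‖siftedMangoldt D lam n‖ = ArithmeticFunction.vonMangoldt n * |sieveConv D lam n| := by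
  rw [siftedMangoldt, norm_mul, Complex.norm_real, Complex.norm_real, Real.norm_eq_abs,
    Real.norm_eq_abs, abs_of_nonneg ArithmeticFunction.vonMangoldt_nonneg]

lemma sum_siftedMangoldt_mul_e_eq (c μ θ X : ℝ) (lam : ℕ → ℝ) :
    ∑ n ∈ Ioc ⌊μ * X⌋₊ ⌊X⌋₊,
        siftedMangoldt (X ^ ((17 - 16 * c) / 32)) lam n * e (θ * (n : ℝ) ^ c) =
      ∑ n ∈ Icc 1 ⌊X⌋₊, (ArithmeticFunction.vonMangoldt n : ℂ) * scaledPhase c μ θ lam X n := by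
  have hsub : Ioc ⌊μ * X⌋₊ ⌊X⌋₊ ⊆ Icc 1 ⌊X⌋₊ := fun n hn => by
    rw [mem_Ioc] at hn
    exact mem_Icc.2 (by omega)
  rw [← sum_subset hsub fun n _ hn => by
    rw [scaledPhase_eq_zero (mt mem_Ioc.2 hn), mul_zero]]
  refine sum_congr rfl fun n hn => ?_
  rw [scaledPhase, siftedPhase, if_pos (mem_Ioc.1 hn), siftedMangoldt, mul_assoc]

lemma eventually_norm_siftedMangoldt_le {ε : ℝ} (hε : 0 < ε) :
    ∀ᶠ X : ℝ in atTop, ∀ (D : ℝ) (lam : ℕ → ℝ), IsSieveWeight D lam →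
      ∀ n ≤ ⌊X⌋₊, ‖siftedMangoldt D lam n‖ ≤ X ^ (2 * ε) := by
  filter_upwards [eventually_abs_sieveConv_le hε, eventually_log_natCast_le_rpow hε,
    eventually_gt_atTop 0] with X hconv hlog hX D lam hlam n hn
  have hmangoldt : ArithmeticFunction.vonMangoldt n ≤ X ^ ε :=
    ArithmeticFunction.vonMangoldt_le_log.trans (hlog n ((Nat.le_floor_iff hX.le).1 hn))
  rw [norm_siftedMangoldt, two_mul, Real.rpow_add hX]
  exact mul_le_mul hmangoldt (hconv D lam hlam n hn) (abs_nonneg _) (by positivity)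

lemma eventually_rpow_le_abs_add_intCast_mul {c : ℝ} (hc : -5 < 16 * c) :
    ∀ᶠ X : ℝ in atTop, ∀ (α : ℝ) (h : ℤ), |α| ≤ 1 / 2 →
      X ^ ((16 * c - 5) / 32) ≤ |α| * X ^ c → X ^ ((16 * c - 5) / 32) ≤ |α + h| * X ^ c := by
  filter_upwards [eventually_le_rpow 2 (show 0 < c - (16 * c - 5) / 32 by linarith),
    eventually_ge_atTop 1] with X hX₂ hX₁ α h hα hαX
  rcases eq_or_ne h 0 with rfl | hh
  · simpa using hαX
  have : 0 < X := zero_lt_one.trans_le hX₁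
  have hone : (1 : ℝ) ≤ |(h : ℝ)| := by exact_mod_cast Int.one_le_abs hh
  have hhalf : 1 / 2 ≤ |α + h| := by linarith [half_abs_le_abs_add_intCast hα hh]
  calc X ^ ((16 * c - 5) / 32) = 1 / 2 * (2 * X ^ ((16 * c - 5) / 32)) := by ring
    _ ≤ 1 / 2 * X ^ c := by
        gcongr
        exact mul_rpow_le_rpow hX₁ hX₂ (by linarith)
    _ ≤ |α + h| * X ^ c := by gcongr

lemma eventually_norm_tsum_phaseCoeff_mul_le {c μ : ℝ} (hc₁ : 1 < c) (hc₂ : c < 17 / 16)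
    (hμ₀ : 0 < μ) (hμ₁ : μ ≤ 1) :
    ∀ᶠ X : ℝ in atTop, ∀ (α : ℝ) (lam : ℕ → ℝ), IsSieveWeight (X ^ ((17 - 16 * c) / 32)) lam →
      |α| ≤ 1 / 2 → X ^ ((16 * c - 5) / 32) ≤ |α| * X ^ c →
      ‖∑' h : ℤ, phaseCoeff α (fractWindow c X) h * ∑ n ∈ Ioc ⌊μ * X⌋₊ ⌊X⌋₊,
        siftedMangoldt (X ^ ((17 - 16 * c) / 32)) lam n * e ((α + h) * (n : ℝ) ^ c)‖ ≤
          X ^ (2 - c - 16 * savingExp c) := by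
  have hε := savingExp_pos hc₂
  have hcε := eq_sub_mul_savingExp c
  set Z := ∑' h : ℤ, |(h : ℝ)| ^ (-(1 + savingExp c))
  filter_upwards [eventually_norm_sum_vonMangoldt_mul_scaledPhase_le hc₁ hc₂ hμ₀ hμ₁,
    eventually_rpow_le_abs_add_intCast_mul (c := c) (by linarith),
    eventually_le_rpow (6 + 3 * Z) hε, eventually_ge_atTop 1]
    with X hsum hfreq hXZ hX₁ α lam hlam hα hαX
  have hX : 0 < X := zero_lt_one.trans_le hX₁
  have hw₁ : fractWindow c X ≤ 1 := Real.rpow_le_one_of_one_le_of_nonpos hX₁ (by linarith)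
  have hbound (h : ℤ) := sum_siftedMangoldt_mul_e_eq c μ (α + h) X lam ▸
    hsum (α + h) lam hlam (hfreq α h hα hαX)
  refine (norm_tsum_phaseCoeff_mul_le hα (fractWindow_pos hX c) hw₁ hε (by linarith)
    (by positivity) hbound).trans ?_
  have hwindow : fractWindow c X ^ (-savingExp c) ≤ X ^ savingExp c := by
    rw [fractWindow, ← Real.rpow_mul hX.le]
    exact Real.rpow_le_rpow_of_exponent_le hX₁ (by nlinarith)
  have : 0 ≤ Z := tsum_nonneg fun h => by positivity
  set E := X ^ (2 - c - 18 * savingExp c)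
  calc 6 * E + 3 * fractWindow c X ^ (-savingExp c) * E * Z
      ≤ 6 * (X ^ savingExp c * E) + 3 * X ^ savingExp c * E * Z := by
        gcongr
        exact le_mul_of_one_le_left (by positivity) (Real.one_le_rpow hX₁ hε.le)
    _ = (6 + 3 * Z) * X ^ (savingExp c + (2 - c - 18 * savingExp c)) := by
        rw [Real.rpow_add hX]
        ring
    _ ≤ X ^ (2 - c - 16 * savingExp c) := mul_rpow_le_rpow hX₁ hXZ (by linarith)

lemma eventually_norm_sum_siftedMangoldt_mul_e_floor_le {c μ : ℝ} (hc₁ : 1 < c) (hc₂ : c < 17 / 16)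
    (hμ₀ : 0 < μ) (hμ₁ : μ ≤ 1) :
    ∀ᶠ X : ℝ in atTop, ∀ (α : ℝ) (lam : ℕ → ℝ), IsSieveWeight (X ^ ((17 - 16 * c) / 32)) lam →
      |α| ≤ 1 / 2 → X ^ ((16 * c - 5) / 32) ≤ |α| * X ^ c →
      ‖∑ n ∈ Ioc ⌊μ * X⌋₊ ⌊X⌋₊,
        siftedMangoldt (X ^ ((17 - 16 * c) / 32)) lam n * e (α * ⌊(n : ℝ) ^ c⌋)‖ ≤
          X ^ (2 - c - 15 * savingExp c) := by
  have hε := savingExp_pos hc₂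
  filter_upwards [eventually_norm_tsum_phaseCoeff_mul_le hc₁ hc₂ hμ₀ hμ₁,
    eventually_card_fractWindow_le hc₁ hc₂ hμ₀ hμ₁, eventually_norm_siftedMangoldt_le hε,
    eventually_le_rpow 2 hε, eventually_ge_atTop 1]
    with X hseries hcount hnorm hX₂ hX₁ α lam hlam hα hαX
  have hX : 0 < X := zero_lt_one.trans_le hX₁
  have hw₁ : fractWindow c X ≤ 1 := Real.rpow_le_one_of_one_le_of_nonpos hX₁ (by linarith)
  calc _ ≤ X ^ (2 * savingExp c) * (2 * X ^ (2 - c - 19 * savingExp c)) +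
          X ^ (2 - c - 16 * savingExp c) := by
        refine (norm_sum_mul_e_floor_le hα (fractWindow_pos hX c) hw₁ (by positivity)
          (fun n hn => hnorm _ lam hlam n (mem_Ioc.1 hn).2) _).trans ?_
        gcongr
        exact hseries α lam hlam hα hαX
    _ ≤ X ^ (2 * savingExp c) * X ^ (2 - c - 18 * savingExp c) +
          X ^ (2 - c - 16 * savingExp c) := by
        gcongr
        exact mul_rpow_le_rpow hX₁ hX₂ (by linarith)
    _ = 2 * X ^ (2 - c - 16 * savingExp c) := by
        rw [← Real.rpow_add hX]
        ring_nf
    _ ≤ X ^ (2 - c - 15 * savingExp c) := mul_rpow_le_rpow hX₁ hX₂ (by linarith)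

/-! ### The supremum and the mean square of `L` -/

lemma L_eq_sum_siftedMangoldt {μ X : ℝ} (hμX : 0 ≤ μ * X) (c D : ℝ) (lam : ℕ → ℝ) (α : ℝ) :
    L c μ X D lam α = ∑ p ∈ Ioc ⌊μ * X⌋₊ ⌊X⌋₊ with p.Prime,
      siftedMangoldt D lam p * e (α * ⌊(p : ℝ) ^ c⌋) := by
  have hrange (d : ℕ) :
      {p ∈ range (⌊X⌋₊ + 1) | p.Prime ∧ μ * X < ((p : ℕ) : ℝ) ∧ d ∣ p + 2} =
        {p ∈ {p ∈ Ioc ⌊μ * X⌋₊ ⌊X⌋₊ | p.Prime} | d ∣ p + 2} := by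
    ext p
    simp only [mem_filter, mem_range, mem_Ioc, Nat.floor_lt hμX, Nat.lt_succ_iff]
    tauto
  simp only [L, hrange, mul_sum]
  simp only [sum_filter (fun p => _ ∣ p + 2)]
  rw [sum_comm]
  refine sum_congr rfl fun p hp => ?_
  rw [siftedMangoldt, ArithmeticFunction.vonMangoldt_apply_prime (mem_filter.1 hp).2, sieveConv,
    sum_filter, Complex.ofReal_sum, mul_sum, sum_mul]
  refine sum_congr rfl fun d _ => ?_
  split_ifs
  · ring
  · simp

lemma continuous_L (c μ X D : ℝ) (lam : ℕ → ℝ) : Continuous (L c μ X D lam) := by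
  unfold L
  refine continuous_finsetSum _ fun d _ => continuous_const.mul ?_
  refine continuous_finsetSum _ fun p _ => continuous_const.mul ?_
  exact continuous_e.comp (continuous_mul_const _)

lemma sum_vonMangoldt_not_prime_le {X : ℝ} (hX : 1 ≤ X) (m : ℕ) :
    ∑ n ∈ Ioc m ⌊X⌋₊ with ¬ n.Prime, ArithmeticFunction.vonMangoldt n ≤ 2 * √X * Real.log X := by
  refine le_trans ?_ (Chebyshev.psi_sub_theta_le hX)
  rw [Chebyshev.psi_sub_theta_eq_sum_not_prime]
  exact sum_le_sum_of_subset_of_nonneg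
    (filter_subset_filter _ (Ioc_subset_Ioc_left (Nat.zero_le _)))
    fun n _ _ => ArithmeticFunction.vonMangoldt_nonneg

lemma eventually_norm_sum_siftedMangoldt_not_prime_le {ε : ℝ} (hε : 0 < ε) :
    ∀ᶠ X : ℝ in atTop, ∀ (D : ℝ) (lam : ℕ → ℝ), IsSieveWeight D lam → ∀ (m : ℕ) (t : ℕ → ℝ),
      ‖∑ n ∈ Ioc m ⌊X⌋₊ with ¬ n.Prime, siftedMangoldt D lam n * e (t n)‖ ≤
        X ^ (1 / 2 + 2 * ε) := by
  filter_upwards [eventually_abs_sieveConv_le hε, eventually_mul_one_add_log_le_rpow 2 hε,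
    eventually_ge_atTop 1] with X hconv hlog hX₁ D lam hlam m t
  have hX : 0 < X := zero_lt_one.trans_le hX₁
  calc _ ≤ ∑ n ∈ Ioc m ⌊X⌋₊ with ¬ n.Prime, ArithmeticFunction.vonMangoldt n * X ^ ε :=
        norm_sum_le_of_le _ fun n hn => by
          rw [norm_mul, norm_e, mul_one, norm_siftedMangoldt]
          exact mul_le_mul_of_nonneg_left
            (hconv D lam hlam n (mem_Ioc.1 (mem_filter.1 hn).1).2)
            ArithmeticFunction.vonMangoldt_nonneg
    _ ≤ 2 * √X * Real.log X * X ^ ε := by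
        rw [← sum_mul]
        gcongr
        exact sum_vonMangoldt_not_prime_le hX₁ m
    _ = X ^ (1 / 2 : ℝ) * (2 * Real.log X) * X ^ ε := by
        rw [Real.sqrt_eq_rpow]
        ring
    _ ≤ X ^ (1 / 2 : ℝ) * X ^ ε * X ^ ε := by
        gcongr
        linarith
    _ = X ^ (1 / 2 + 2 * ε) := by
        rw [← Real.rpow_add hX, ← Real.rpow_add hX]
        ring_nf

lemma eventually_norm_L_le {c μ : ℝ} (hc₁ : 1 < c) (hc₂ : c < 17 / 16) (hμ₀ : 0 < μ)
    (hμ₁ : μ ≤ 1) :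
    ∀ᶠ X : ℝ in atTop, ∀ (α : ℝ) (lam : ℕ → ℝ), IsSieveWeight (X ^ ((17 - 16 * c) / 32)) lam →
      |α| ≤ 1 / 2 → X ^ ((16 * c - 5) / 32 - c) ≤ |α| →
      ‖L c μ X (X ^ ((17 - 16 * c) / 32)) lam α‖ ≤ X ^ (2 - c - 14 * savingExp c) := by
  have hε := savingExp_pos hc₂
  have hcε := eq_sub_mul_savingExp c
  filter_upwards [eventually_norm_sum_siftedMangoldt_mul_e_floor_le hc₁ hc₂ hμ₀ hμ₁,
    eventually_norm_sum_siftedMangoldt_not_prime_le hε, eventually_le_rpow 2 hε,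
    eventually_ge_atTop 1] with X hall hnotPrime hX₂ hX₁ α lam hlam hα hαX
  have hX : 0 < X := zero_lt_one.trans_le hX₁
  have hfreq : X ^ ((16 * c - 5) / 32) ≤ |α| * X ^ c := by
    rwa [Real.rpow_sub hX, div_le_iff₀ (by positivity)] at hαX
  have hsplit := eq_sub_of_add_eq <| sum_filter_add_sum_filter_not (Ioc ⌊μ * X⌋₊ ⌊X⌋₊) Nat.Prime
    fun n => siftedMangoldt (X ^ ((17 - 16 * c) / 32)) lam n * e (α * ⌊(n : ℝ) ^ c⌋)
  rw [L_eq_sum_siftedMangoldt (by positivity), hsplit]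
  calc _ ≤ X ^ (2 - c - 15 * savingExp c) + X ^ (1 / 2 + 2 * savingExp c) :=
        norm_sub_le_of_le (hall α lam hlam hα hfreq) (hnotPrime _ lam hlam _ _)
    _ ≤ X ^ (2 - c - 15 * savingExp c) + X ^ (2 - c - 15 * savingExp c) := by
        gcongr
        linarith
    _ = 2 * X ^ (2 - c - 15 * savingExp c) := by ring
    _ ≤ X ^ (2 - c - 14 * savingExp c) := mul_rpow_le_rpow hX₁ hX₂ (by linarith)

lemma integral_e_intCast_mul (k : ℤ) :
    ∫ α in (-(1 / 2) : ℝ)..(1 / 2), e (k * α) = if k = 0 then 1 else 0 := by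
  split_ifs with hk
  · norm_num [hk, e_zero]
  · have hperiod : e (k * (1 / 2)) = e (k * -(1 / 2)) := by
      rw [show (k : ℝ) * (1 / 2) = k * -(1 / 2) + k by ring, e_add, e_intCast, mul_one]
    rw [integral_e_mul (Int.cast_ne_zero.2 hk), hperiod, sub_self, zero_div]

section Parseval

variable {ι : Type*} {s : Finset ι} {f : ι → ℤ}

lemma norm_sum_mul_e_sq_eq (a : ι → ℂ) (α : ℝ) :
    ((‖∑ i ∈ s, a i * e (α * f i)‖ ^ 2 : ℝ) : ℂ) =
      ∑ i ∈ s, ∑ j ∈ s, a i * (starRingEnd ℂ) (a j) * e ((f i - f j : ℤ) * α) := by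
  rw [Complex.ofReal_pow, ← Complex.mul_conj', map_sum, sum_mul_sum]
  refine sum_congr rfl fun i _ => sum_congr rfl fun j _ => ?_
  rw [map_mul, conj_e, mul_mul_mul_comm, ← e_add]
  push_cast
  ring_nf

lemma integral_norm_sum_mul_e_sq (hf : Set.InjOn f s) (a : ι → ℂ) :
    ∫ α in (-(1 / 2) : ℝ)..(1 / 2), ‖∑ i ∈ s, a i * e (α * f i)‖ ^ 2 = ∑ i ∈ s, ‖a i‖ ^ 2 := by
  classical
  have hcont (z : ℂ) (k : ℤ) : Continuous fun α : ℝ => z * e (k * α) :=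
    continuous_const.mul (continuous_e_mul _)
  have hterm (i j : ι) (hi : i ∈ s) (hj : j ∈ s) : ∫ α in (-(1 / 2) : ℝ)..(1 / 2),
      a i * (starRingEnd ℂ) (a j) * e ((f i - f j : ℤ) * α) =
        if i = j then (‖a i‖ : ℂ) ^ 2 else 0 := by
    rw [intervalIntegral.integral_const_mul, integral_e_intCast_mul]
    simp only [sub_eq_zero, hf.eq_iff hi hj, mul_ite, mul_one, mul_zero]
    split_ifs with hij
    · rw [← hij, Complex.mul_conj']
    · rfl
  apply Complex.ofReal_injective
  rw [← intervalIntegral.integral_ofReal]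
  simp only [norm_sum_mul_e_sq_eq]
  rw [intervalIntegral.integral_finsetSum fun i _ =>
    (continuous_finsetSum _ fun j _ => hcont _ _).intervalIntegrable _ _, Complex.ofReal_sum]
  refine sum_congr rfl fun i hi => ?_
  rw [intervalIntegral.integral_finsetSum fun j _ => (hcont _ _).intervalIntegrable _ _,
    sum_congr rfl fun j hj => hterm i j hi hj, sum_ite_eq, if_pos hi, Complex.ofReal_pow]

end Parseval

lemma strictMono_floor_rpow {c : ℝ} (hc : 1 ≤ c) : StrictMono fun n : ℕ => ⌊(n : ℝ) ^ c⌋ := by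
  refine strictMono_nat_of_lt_succ fun n => ?_
  have hgap : (n : ℝ) ^ c + 1 ≤ ((n + 1 : ℕ) : ℝ) ^ c := by
    simpa using Real.add_rpow_le_rpow_add n.cast_nonneg zero_le_one hc
  rw [← Int.add_one_le_iff, ← Int.floor_add_one]
  exact Int.floor_le_floor hgap

lemma eventually_integral_norm_L_sq_le {c μ ε : ℝ} (hc : 1 ≤ c) (hμ : 0 ≤ μ) (hε : 0 < ε) :
    ∀ᶠ X : ℝ in atTop, ∀ (D : ℝ) (lam : ℕ → ℝ), IsSieveWeight D lam →
      ∫ α in (-(1 / 2) : ℝ)..(1 / 2), ‖L c μ X D lam α‖ ^ 2 ≤ X ^ (1 + 4 * ε) := by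
  filter_upwards [eventually_norm_siftedMangoldt_le hε, eventually_gt_atTop 0]
    with X hnorm hX D lam hlam
  simp only [L_eq_sum_siftedMangoldt (mul_nonneg hμ hX.le)]
  rw [integral_norm_sum_mul_e_sq (strictMono_floor_rpow hc).injective.injOn]
  set P := {p ∈ Ioc ⌊μ * X⌋₊ ⌊X⌋₊ | p.Prime}
  have hcard : (#P : ℝ) ≤ X := calc
    (#P : ℝ) ≤ (⌊X⌋₊ : ℕ) := by
      exact_mod_cast (card_filter_le _ _).trans ((Nat.card_Ioc _ _).trans_le (Nat.sub_le _ _))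
    _ ≤ X := Nat.floor_le hX.le
  calc ∑ p ∈ P, ‖siftedMangoldt D lam p‖ ^ 2 ≤ #P * (X ^ (2 * ε)) ^ 2 := by
        rw [← nsmul_eq_mul]
        refine sum_le_card_nsmul _ _ _ fun p hp => ?_
        gcongr
        exact hnorm D lam hlam p (mem_Ioc.1 (mem_filter.1 hp).1).2
    _ ≤ X * (X ^ (2 * ε)) ^ 2 := by gcongr
    _ = X ^ (1 + 4 * ε) := by
        rw [← Real.rpow_mul_natCast hX.le, Real.rpow_add hX, Real.rpow_one]
        ring_nf

lemma setIntegral_norm_mul_norm_sq_le {f g : ℝ → ℂ} {S : Set ℝ} {a b V : ℝ} (hf : Continuous f)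
    (hg : Continuous g) (hab : a ≤ b) (hS : MeasurableSet S) (hSab : S ⊆ Set.Icc a b)
    (hV : 0 ≤ V) (hfV : ∀ x ∈ S, ‖f x‖ ≤ V) :
    ∫ x in S, ‖f x‖ * ‖g x‖ ^ 2 ≤ V * ∫ x in a..b, ‖g x‖ ^ 2 := by
  have hleft : IntegrableOn (fun x => ‖f x‖ * ‖g x‖ ^ 2) (Set.Icc a b) :=
    Continuous.integrableOn_Icc (by fun_prop)
  have hright : IntegrableOn (fun x => V * ‖g x‖ ^ 2) (Set.Icc a b) :=
    Continuous.integrableOn_Icc (by fun_prop)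
  calc ∫ x in S, ‖f x‖ * ‖g x‖ ^ 2 ≤ ∫ x in S, V * ‖g x‖ ^ 2 :=
        setIntegral_mono_on (hleft.mono_set hSab) (hright.mono_set hSab) hS fun x hx =>
          mul_le_mul_of_nonneg_right (hfV x hx) (by positivity)
    _ ≤ ∫ x in Set.Icc a b, V * ‖g x‖ ^ 2 :=
        setIntegral_mono_set hright (Eventually.of_forall fun x => by positivity)
          hSab.eventuallyLE
    _ = V * ∫ x in a..b, ‖g x‖ ^ 2 := by
        rw [integral_Icc_eq_integral_Ioc, ← intervalIntegral.integral_of_le hab,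
          intervalIntegral.integral_const_mul]

end

theorem stmt_10 (c μ : ℝ) (hc1 : 1 < c) (hc2 : c < 17 / 16) (hμ1 : 0 < μ) (hμ2 : μ < 1) :
    ∃ ε₀ : ℝ, 0 < ε₀ ∧ ∃ X₀ : ℝ, 0 < X₀ ∧
      ∀ X : ℝ, X₀ ≤ X →
        ∀ lamM lamP : ℕ → ℝ,
          IsSieveWeight (X ^ ((17 - 16 * c) / 32)) lamM →
          IsSieveWeight (X ^ ((17 - 16 * c) / 32)) lamP →
            (∫ α in {α : ℝ | X ^ ((16 * c - 5) / 32 - c) ≤ |α| ∧ |α| ≤ 1 / 2},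
                ‖L c μ X (X ^ ((17 - 16 * c) / 32)) lamM α‖ *
                  ‖L c μ X (X ^ ((17 - 16 * c) / 32)) lamP α‖ ^ 2) ≤
              X ^ (3 - c - ε₀) := by
  have hε := savingExp_pos hc2
  obtain ⟨X₀, hX₀⟩ := Filter.eventually_atTop.1 ((eventually_norm_L_le hc1 hc2 hμ1 hμ2.le).and
    (eventually_integral_norm_L_sq_le hc1.le hμ1.le hε))
  refine ⟨10 * savingExp c, by positivity, max X₀ 1, by positivity, ?_⟩
  intro X hXge lamM lamP hM hP
  have hX : 0 < X := zero_lt_one.trans_le ((le_max_right _ _).trans hXge)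
  obtain ⟨hsup, hmeanSquare⟩ := hX₀ X ((le_max_left _ _).trans hXge)
  have hmeas : MeasurableSet {α : ℝ | X ^ ((16 * c - 5) / 32 - c) ≤ |α| ∧ |α| ≤ 1 / 2} :=
    (measurableSet_le measurable_const measurable_norm).inter
      (measurableSet_le measurable_norm measurable_const)
  calc _ ≤ X ^ (2 - c - 14 * savingExp c) * X ^ (1 + 4 * savingExp c) := by
        refine (setIntegral_norm_mul_norm_sq_le (continuous_L c μ X _ lamM)
          (continuous_L c μ X _ lamP) (by norm_num) hmeas (fun α hα => abs_le.1 hα.2)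
          (by positivity) fun α hα => hsup α lamM hM hα.2 hα.1).trans ?_
        gcongr
        exact hmeanSquare _ lamP hP
    _ = X ^ (3 - c - 10 * savingExp c) := by
        rw [← Real.rpow_add hX]
        ring_nf
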